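/- Let (X_t)_{t∈T} be a centered Gaussian process on a countable index set T with natural metric d(t,t') := √(E[(X_t − X_{t'})²]), and let μ be a probability measure on T. Then w(μ) ≥ c · ∫₀^∞ √(i(σ)) dσ ≥ c · ∫₀^{σ_m(μ)} √(R_μ(σ²)) dσ, where c := max_{τ∈(0,4/5)} (4 − 5τ)/(2√2 · (4 − τ) · ln(4/τ)) ≈ 0.0935918. -/

import Mathlib

open MeasureTheory ProbabilityTheory Set

noncomputable section

/-- The sub-Gaussian norm `‖X‖_{Ψ₂} = inf {K > 0 : E[exp(X²/K²)] ≤ 2}`. -/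
def sgNorm {Ω : Type*} [MeasurableSpace Ω] (P : Measure Ω) (X : Ω → ℝ) : ℝ :=
  sInf {K : ℝ | 0 < K ∧ ∫ ω, Real.exp (X ω ^ 2 / K ^ 2) ∂P ≤ 2}

/-- Relative entropy (in nats). -/
def klDivR {α : Type*} [MeasurableSpace α] (P Q : Measure α) : ℝ :=
  ∫ x, Real.log ((P.rnDeriv Q x).toReal) ∂P

/-- Mutual information of a joint law: `I(U;Z) = D(P_{UZ} ‖ P_U × P_Z)`. -/
def mutInfoR {α β : Type*} [MeasurableSpace α] [MeasurableSpace β] (ρ : Measure (α × β)) : ℝ :=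
  klDivR ρ (ρ.fst.prod ρ.snd)

/-- The rate-distortion function of `μ` on `(T, d)` at distortion level `D`. -/
def rateDistortion {T : Type*} [MeasurableSpace T] (d : T → T → ℝ) (μ : Measure T) (D : ℝ) : ℝ :=
  sInf {v : ℝ | ∃ ρ : Measure (T × T), IsProbabilityMeasure ρ ∧ ρ.snd = μ ∧
    (∫ p, d p.1 p.2 ^ 2 ∂ρ) ≤ D ∧ v = mutInfoR ρ}

/-- `σ_m(μ) = inf_t sqrt (E_{Z∼μ}[d²(Z,t)])`. -/
def sigmaM {T : Type*} [MeasurableSpace T] (d : T → T → ℝ) (μ : Measure T) : ℝ :=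
  sInf {v : ℝ | ∃ t : T, v = Real.sqrt (∫ z, d z t ^ 2 ∂μ)}

/-- The complexity `w(μ) = sup { E[X_Z] : Z has law μ }`. -/
def complexity {Ω T : Type*} [MeasurableSpace Ω] [MeasurableSpace T]
    (P : Measure Ω) (X : T → Ω → ℝ) (μ : Measure T) : ℝ :=
  sSup {r : ℝ | ∃ Z : Ω → T, Measurable Z ∧ P.map Z = μ ∧ r = ∫ ω, X (Z ω) ω ∂P}


/-- A process is a centered Gaussian process if every finite linear combination of its
coordinates has a centered Gaussian law. -/
def IsCenteredGaussianProcess {Ω T : Type*} [MeasurableSpace Ω]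
    (P : Measure Ω) (X : T → Ω → ℝ) : Prop :=
  ∀ c : T →₀ ℝ, ∃ v : NNReal,
    P.map (fun ω => c.sum fun t a => a * X t ω) = gaussianReal 0 v

/-- `i(σ) = inf { I(Z;Ẑ) : couplings of μ with itself with E[d²(Z,Ẑ)] ≤ σ² }`. -/
def iSelf {T : Type*} [MeasurableSpace T] (d : T → T → ℝ) (μ : Measure T) (σ : ℝ) : ℝ :=
  sInf {v : ℝ | ∃ ρ : Measure (T × T), IsProbabilityMeasure ρ ∧ ρ.fst = μ ∧ ρ.snd = μ ∧
    (∫ p, d p.1 p.2 ^ 2 ∂ρ) ≤ σ ^ 2 ∧ v = mutInfoR ρ}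

/-- The constant `c = max_{τ∈(0,4/5)} (4-5τ)/(2√2 (4-τ) ln(4/τ))`. -/
def cRD : ℝ :=
  sSup {x : ℝ | ∃ τ ∈ Ioo (0 : ℝ) (4 / 5),
    x = (4 - 5 * τ) / (2 * Real.sqrt 2 * (4 - τ) * Real.log (4 / τ))}

/-!
Let `φ` embed the index set in `L²(P)`. Given a self-coupling `(V, W)` of the law, send `W`,
conditionally on `V`, through the Gaussian channel `Y = s φ_W + noise`, and draw a *replica* `W'` of
`W` from the posterior given `Y`. Taking the observed Gaussian vector for the noise turns `W'` into
a selection rule with mean value `s M / 2`, where `M = E‖φ_W - φ_W'‖²`. If `M ≤ D²`, then `(W, W')`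
competes for `i(D)`, while by data processing its mutual information is at most
`I(V; W) + I(W; Y | V)`. Since `I(W; Y | V)` grows in `s²` at the rate `M / 4` (the I-MMSE
relation), some `s` has `M > D²` and `s M / 2` almost `D √(i(D) - I(V; W)) / √2`. With `(V, W)`
optimal for `i(2D)`, the selection stays within distance `2D` of `V` and gains
`D (√i(D) - √i(2D)) / √2`.

Such steps compose along the scales `D rᵏ`, each refining the selection at the coarser ones, at the
cost of a factor `1 - 4r / (1 - r)`. Averaging over `D` against `dD / D` turns the sum of the gains
into `∫ √i`, and `r = τ / 4` gives the constant.

A countable index set is reduced to a finite one by collapsing the complement of a large finite set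
to a point, and randomized selections are replaced by functions of `ω` because a nonzero Gaussian
coordinate is atomless.
-/

section MomentGeneratingFunction

variable {F : Type*} [NormedAddCommGroup F] [NormedSpace ℝ F] [CompleteSpace F]
  [SecondCountableTopology F] [MeasurableSpace F] [BorelSpace F]

theorem measure_eq_of_integral_exp_strongDual_eq {μ ν : Measure F} [IsProbabilityMeasure μ]
    [IsProbabilityMeasure ν] (hμ : ∀ L : StrongDual ℝ F, Integrable (fun x => Real.exp (L x)) μ)
    (h : ∀ L : StrongDual ℝ F, ∫ x, Real.exp (L x) ∂μ = ∫ x, Real.exp (L x) ∂ν) : μ = ν := by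
  refine Measure.ext_of_charFunDual (funext fun L => ?_)
  rw [charFunDual_eq_charFun_map_one, charFunDual_eq_charFun_map_one]
  have hmgf : mgf L μ = mgf L ν := funext fun t => h (t • L)
  have hset : integrableExpSet L μ = univ := eq_univ_of_forall fun t => hμ (t • L)
  have key := eqOn_complexMGF_of_mgf hmgf (x := ((1 : ℝ) : ℂ) * Complex.I) (by simp [hset])
  rwa [complexMGF_mul_I (by fun_prop), complexMGF_mul_I (by fun_prop)] at key

end MomentGeneratingFunction

/-- Measurable functions growing at most exponentially in the norm. They are integrable against
every Gaussian measure, and all densities below belong to this class together with their inverses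
and logarithms. -/
structure HasExpGrowth {F : Type*} [Norm F] [MeasurableSpace F] (f : F → ℝ) : Prop where
  measurable : Measurable f
  exists_bound : ∃ C c : ℝ, 0 ≤ C ∧ 0 ≤ c ∧ ∀ x, |f x| ≤ C * Real.exp (c * ‖x‖)

namespace HasExpGrowth

section Algebra

variable {F : Type*} [SeminormedAddCommGroup F] [MeasurableSpace F] {f g : F → ℝ}

lemma mono (hf : Measurable f) (hg : HasExpGrowth g) (h : ∀ x, |f x| ≤ |g x|) :
    HasExpGrowth f := by
  obtain ⟨-, C, c, hC, hc, hb⟩ := hg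
  exact ⟨hf, C, c, hC, hc, fun x => (h x).trans (hb x)⟩

protected lemma const (a : ℝ) : HasExpGrowth (fun _ : F => a) :=
  ⟨measurable_const, |a|, 0, abs_nonneg _, le_rfl, fun x => by simp⟩

protected lemma mul (hf : HasExpGrowth f) (hg : HasExpGrowth g) :
    HasExpGrowth (fun x => f x * g x) := by
  obtain ⟨hfm, C, c, hC, hc, hfb⟩ := hf
  obtain ⟨hgm, C', c', hC', hc', hgb⟩ := hg
  refine ⟨hfm.mul hgm, C * C', c + c', by positivity, by positivity, fun x => ?_⟩
  calc |f x * g x| = |f x| * |g x| := abs_mul _ _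
    _ ≤ (C * Real.exp (c * ‖x‖)) * (C' * Real.exp (c' * ‖x‖)) :=
        mul_le_mul (hfb x) (hgb x) (abs_nonneg _) (by positivity)
    _ = C * C' * Real.exp ((c + c') * ‖x‖) := by rw [add_mul, Real.exp_add]; ring

protected lemma add (hf : HasExpGrowth f) (hg : HasExpGrowth g) :
    HasExpGrowth (fun x => f x + g x) := by
  obtain ⟨hfm, C, c, hC, hc, hfb⟩ := hf
  obtain ⟨hgm, C', c', hC', hc', hgb⟩ := hg
  refine ⟨hfm.add hgm, C + C', c + c', by positivity, by positivity, fun x => ?_⟩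
  calc |f x + g x| ≤ |f x| + |g x| := abs_add_le _ _
    _ ≤ C * Real.exp (c * ‖x‖) + C' * Real.exp (c' * ‖x‖) := add_le_add (hfb x) (hgb x)
    _ ≤ C * Real.exp ((c + c') * ‖x‖) + C' * Real.exp ((c + c') * ‖x‖) := by
        gcongr <;> linarith
    _ = (C + C') * Real.exp ((c + c') * ‖x‖) := by ring

protected lemma sub (hf : HasExpGrowth f) (hg : HasExpGrowth g) :
    HasExpGrowth (fun x => f x - g x) := by
  simpa [sub_eq_add_neg] using hf.add ((HasExpGrowth.const (-1)).mul hg)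

protected lemma sum {ι : Type*} (s : Finset ι) {f : ι → F → ℝ}
    (hf : ∀ i ∈ s, HasExpGrowth (f i)) : HasExpGrowth (fun x => ∑ i ∈ s, f i x) := by
  classical
  induction s using Finset.induction_on with
  | empty => simpa using HasExpGrowth.const 0
  | insert a s ha ih =>
    simp only [Finset.sum_insert ha]
    exact (hf a (by simp)).add (ih fun i hi => hf i (by simp [hi]))

protected lemma log (hf : HasExpGrowth f) (hinv : HasExpGrowth (fun x => (f x)⁻¹))
    (hpos : ∀ x, 0 < f x) : HasExpGrowth (fun x => Real.log (f x)) := by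
  refine mono (Real.measurable_log.comp hf.measurable) (hf.add hinv) fun x => ?_
  have hfx := hpos x
  have hinvx := inv_pos.2 hfx
  have hupper := Real.log_le_self hfx.le
  have hlower := Real.log_le_self hinvx.le
  rw [Real.log_inv] at hlower
  rw [abs_of_pos (add_pos hfx hinvx), abs_le]
  constructor <;> linarith

lemma comp_add_right [MeasurableAdd F] (hf : HasExpGrowth f) (v : F) :
    HasExpGrowth (fun x => f (x + v)) := by
  obtain ⟨hfm, C, c, hC, hc, hfb⟩ := hf
  refine ⟨hfm.comp (measurable_add_const v), C * Real.exp (c * ‖v‖), c, by positivity, hc,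
    fun x => (hfb _).trans ?_⟩
  rw [mul_assoc, ← Real.exp_add, ← mul_add]
  gcongr
  linarith [norm_add_le x v]

lemma comp_sub_right [MeasurableAdd F] (hf : HasExpGrowth f) (v : F) :
    HasExpGrowth (fun x => f (x - v)) := by
  simpa only [sub_eq_add_neg] using hf.comp_add_right (-v)

end Algebra

section Normed

variable {F : Type*} [NormedAddCommGroup F] [NormedSpace ℝ F] [MeasurableSpace F] [BorelSpace F]

lemma exp_strongDual_sub_const (L : StrongDual ℝ F) (b : ℝ) :
    HasExpGrowth (fun x => Real.exp (L x - b)) := by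
  refine ⟨by fun_prop, Real.exp (-b), ‖L‖, by positivity, by positivity, fun x => ?_⟩
  rw [abs_of_pos (Real.exp_pos _), ← Real.exp_add]
  exact Real.exp_le_exp.2 (by linarith [(le_abs_self _).trans (L.le_opNorm x)])

lemma strongDual (L : StrongDual ℝ F) : HasExpGrowth L := by
  refine ⟨by fun_prop, 1, ‖L‖, zero_le_one, by positivity, fun x => ?_⟩
  have hexp := Real.add_one_le_exp (‖L‖ * ‖x‖)
  linarith [L.le_opNorm x, Real.norm_eq_abs (L x)]

lemma integrable [CompleteSpace F] [SecondCountableTopology F] {f : F → ℝ} (hf : HasExpGrowth f)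
    (μ : Measure F) [IsGaussian μ] : Integrable f μ := by
  obtain ⟨hfm, C, c, hC, -, hfb⟩ := hf
  obtain ⟨K, hK, hint⟩ := IsGaussian.exists_integrable_exp_sq μ
  refine (hint.const_mul (C * Real.exp (c ^ 2 / (4 * K)))).mono' hfm.aestronglyMeasurable
    (.of_forall fun x => (hfb x).trans ?_)
  rw [mul_assoc, ← Real.exp_add]
  gcongr
  have hsq : c ^ 2 / (4 * K) + K * ‖x‖ ^ 2 - c * ‖x‖ = K * (‖x‖ - c / (2 * K)) ^ 2 := by
    field_simp
    ring
  linarith [mul_nonneg hK.le (sq_nonneg (‖x‖ - c / (2 * K)))]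

end Normed

end HasExpGrowth

section Tilt

variable {T E : Type*} [NormedAddCommGroup E]

/-- The covariances `⟪φ w, φ u⟫` of the coordinate `w` with all coordinates `u`. -/
def covVec [InnerProductSpace ℝ E] (φ : T → E) (w : T) : T → ℝ := fun u => inner ℝ (φ w) (φ u)

/-- The Cameron–Martin density `exp (s x_w - s² ‖φ w‖² / 2)` of the translate by `s • covVec φ w`
of a Gaussian vector. -/
def tilt (φ : T → E) (s : ℝ) (w : T) (x : T → ℝ) : ℝ :=
  Real.exp (s * x w - s ^ 2 * ‖φ w‖ ^ 2 / 2)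

lemma tilt_pos (φ : T → E) (s : ℝ) (w : T) (x : T → ℝ) : 0 < tilt φ s w x := Real.exp_pos _

lemma tilt_inv (φ : T → E) (s : ℝ) (w : T) (x : T → ℝ) :
    (tilt φ s w x)⁻¹ = tilt φ (-s) w x * Real.exp (s ^ 2 * ‖φ w‖ ^ 2) := by
  rw [tilt, tilt, ← Real.exp_neg, ← Real.exp_add]
  congr 1
  ring

lemma measurable_tilt (φ : T → E) (s : ℝ) (w : T) : Measurable (tilt φ s w) := by
  unfold tilt
  fun_prop

lemma hasExpGrowth_tilt [Fintype T] (φ : T → E) (s : ℝ) (w : T) : HasExpGrowth (tilt φ s w) :=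
  HasExpGrowth.exp_strongDual_sub_const
    (s • ContinuousLinearMap.proj (R := ℝ) (φ := fun _ : T => ℝ) w) _

end Tilt

section GaussianVector

variable {T E : Type*} [Fintype T] [NormedAddCommGroup E] [InnerProductSpace ℝ E]

lemma strongDual_pi_apply_eq_dotProduct [DecidableEq T] (L : StrongDual ℝ (T → ℝ)) (x : T → ℝ) :
    L x = (fun w => L (Pi.single w 1)) ⬝ᵥ x := by
  conv_lhs => rw [pi_eq_sum_univ' x, map_sum]
  simp [dotProduct, mul_comm]

lemma measurable_dotProduct (c : T → ℝ) : Measurable (fun x : T → ℝ => c ⬝ᵥ x) := by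
  unfold dotProduct
  fun_prop

theorem measure_pi_eq_of_integral_exp_dotProduct_eq {μ ν : Measure (T → ℝ)}
    [IsProbabilityMeasure μ] [IsProbabilityMeasure ν]
    (hμ : ∀ c : T → ℝ, Integrable (fun x => Real.exp (c ⬝ᵥ x)) μ)
    (h : ∀ c : T → ℝ, ∫ x, Real.exp (c ⬝ᵥ x) ∂μ = ∫ x, Real.exp (c ⬝ᵥ x) ∂ν) : μ = ν := by
  classical
  refine measure_eq_of_integral_exp_strongDual_eq (fun L => ?_) fun L => ?_ <;>
    rw [funext (strongDual_pi_apply_eq_dotProduct L)]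
  exacts [hμ _, h _]

/-- `γ` is the law of a centered Gaussian vector with covariances `E[x_v x_w] = ⟪φ v, φ w⟫`. -/
def IsGaussianVector (γ : Measure (T → ℝ)) (φ : T → E) : Prop :=
  ∀ c : T → ℝ, γ.map (fun x => c ⬝ᵥ x) = gaussianReal 0 (‖∑ w, c w • φ w‖₊ ^ 2)

lemma hasExpGrowth_coord (w : T) : HasExpGrowth (fun x : T → ℝ => x w) :=
  HasExpGrowth.strongDual (ContinuousLinearMap.proj (R := ℝ) (φ := fun _ : T => ℝ) w)

lemma tilt_eq_exp_dotProduct [DecidableEq T] (φ : T → E) (s : ℝ) (w : T) (x : T → ℝ) :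
    tilt φ s w x =
      Real.exp (Pi.single w s ⬝ᵥ x) *
        Real.exp (-‖∑ u, (Pi.single w s : T → ℝ) u • φ u‖ ^ 2 / 2) := by
  have hsum : ∑ u, (Pi.single w s : T → ℝ) u • φ u = s • φ w := by simp [Pi.single_apply]
  rw [hsum, single_dotProduct, ← Real.exp_add, norm_smul, mul_pow, Real.norm_eq_abs, sq_abs, tilt]
  congr 1
  ring

namespace IsGaussianVector

variable {γ : Measure (T → ℝ)} {φ : T → E}

lemma isGaussian (h : IsGaussianVector γ φ) : IsGaussian γ := by
  classical
  refine isGaussian_of_map_eq_gaussianReal fun L => ⟨0, ?_⟩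
  rw [funext (strongDual_pi_apply_eq_dotProduct L)]
  exact ⟨_, h _⟩

lemma isProbabilityMeasure (h : IsGaussianVector γ φ) : IsProbabilityMeasure γ :=
  have := h.isGaussian
  inferInstance

lemma integrable (h : IsGaussianVector γ φ) {f : (T → ℝ) → ℝ} (hf : HasExpGrowth f) :
    Integrable f γ :=
  have := h.isGaussian
  hf.integrable γ

lemma integrable_exp_dotProduct (h : IsGaussianVector γ φ) (c : T → ℝ) :
    Integrable (fun x => Real.exp (c ⬝ᵥ x)) γ := by
  have hexp := integrable_exp_mul_gaussianReal (μ := 0) (v := ‖∑ w, c w • φ w‖₊ ^ 2) 1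
  rw [← h c, integrable_map_measure (by fun_prop) (measurable_dotProduct c).aemeasurable] at hexp
  simpa [Function.comp_def] using hexp

lemma integral_exp_dotProduct (h : IsGaussianVector γ φ) (c : T → ℝ) :
    ∫ x, Real.exp (c ⬝ᵥ x) ∂γ = Real.exp (‖∑ w, c w • φ w‖ ^ 2 / 2) := by
  have hmgf := congrFun (mgf_id_gaussianReal (μ := 0) (v := ‖∑ w, c w • φ w‖₊ ^ 2)) 1
  rw [← h c, mgf, integral_map (measurable_dotProduct c).aemeasurable (by fun_prop)] at hmgf
  simpa using hmgf

lemma integral_coord (h : IsGaussianVector γ φ) (w : T) : ∫ x, x w ∂γ = 0 := by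
  classical
  have hmean := integral_id_gaussianReal (μ := 0)
    (v := ‖∑ u, (Pi.single w 1 : T → ℝ) u • φ u‖₊ ^ 2)
  rw [← h, integral_map (measurable_dotProduct _).aemeasurable (by fun_prop)] at hmean
  simpa using hmean

lemma integral_tilt (h : IsGaussianVector γ φ) (s : ℝ) (w : T) : ∫ x, tilt φ s w x ∂γ = 1 := by
  classical
  simp_rw [tilt_eq_exp_dotProduct]
  rw [integral_mul_const, h.integral_exp_dotProduct, ← Real.exp_add, neg_div, add_neg_cancel,
    Real.exp_zero]

lemma integral_exp_dotProduct_mul_tilt (h : IsGaussianVector γ φ) (c : T → ℝ) (s : ℝ) (w : T) :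
    ∫ x, tilt φ s w x * Real.exp (c ⬝ᵥ x) ∂γ =
      ∫ x, Real.exp (c ⬝ᵥ (x + s • covVec φ w)) ∂γ := by
  classical
  have hcov : c ⬝ᵥ covVec φ w = inner ℝ (φ w) (∑ u, c u • φ u) := by
    simp [dotProduct, covVec, inner_sum, real_inner_smul_right]
  have hsum : ∑ u, (Pi.single w s + c : T → ℝ) u • φ u = s • φ w + ∑ u, c u • φ u := by
    simp [add_smul, Finset.sum_add_distrib, Pi.single_apply]
  calc ∫ x, tilt φ s w x * Real.exp (c ⬝ᵥ x) ∂γ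
      = ∫ x, Real.exp ((Pi.single w s + c) ⬝ᵥ x) * Real.exp (-(s ^ 2 * ‖φ w‖ ^ 2 / 2)) ∂γ := by
        simp_rw [tilt, add_dotProduct, single_dotProduct, ← Real.exp_add]
        exact integral_congr_ae (.of_forall fun x => congrArg Real.exp (by ring))
    _ = Real.exp (‖∑ u, c u • φ u‖ ^ 2 / 2) * Real.exp (s * c ⬝ᵥ covVec φ w) := by
        rw [integral_mul_const, h.integral_exp_dotProduct, ← Real.exp_add, ← Real.exp_add, hsum,
          norm_add_sq_real, real_inner_smul_left, norm_smul, mul_pow, Real.norm_eq_abs, sq_abs,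
          hcov]
        congr 1
        ring
    _ = ∫ x, Real.exp (c ⬝ᵥ (x + s • covVec φ w)) ∂γ := by
        simp_rw [dotProduct_add, dotProduct_smul, Real.exp_add, smul_eq_mul]
        rw [integral_mul_const, h.integral_exp_dotProduct]

theorem map_add_smul_covVec (h : IsGaussianVector γ φ) (s : ℝ) (w : T) :
    γ.map (fun x => x + s • covVec φ w) =
      γ.withDensity (fun x => ENNReal.ofReal (tilt φ s w x)) := by
  have := h.isProbabilityMeasure
  have hmeas : Measurable (fun x : T → ℝ => x + s • covVec φ w) := by fun_prop
  have hdens : Measurable (fun x => ENNReal.ofReal (tilt φ s w x)) :=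
    (measurable_tilt φ s w).ennreal_ofReal
  have hexp : ∀ c : T → ℝ, AEStronglyMeasurable (fun x : T → ℝ => Real.exp (c ⬝ᵥ x))
      (γ.map fun x => x + s • covVec φ w) := fun c =>
    (measurable_dotProduct c).exp.aestronglyMeasurable
  have := Measure.isProbabilityMeasure_map (μ := γ) hmeas.aemeasurable
  have : IsProbabilityMeasure (γ.withDensity fun x => ENNReal.ofReal (tilt φ s w x)) :=
    ⟨by
      rw [withDensity_apply _ .univ, Measure.restrict_univ,
        ← ofReal_integral_eq_lintegral_ofReal (h.integrable (hasExpGrowth_tilt φ s w))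
        (.of_forall fun x => (tilt_pos φ s w x).le), h.integral_tilt, ENNReal.ofReal_one]⟩
  refine measure_pi_eq_of_integral_exp_dotProduct_eq (fun c => ?_) fun c => ?_
  · rw [integrable_map_measure (hexp c) hmeas.aemeasurable]
    simpa only [Function.comp_def, dotProduct_add, Real.exp_add]
      using (h.integrable_exp_dotProduct c).mul_const _
  · rw [integral_map hmeas.aemeasurable (hexp c), ← h.integral_exp_dotProduct_mul_tilt,
      integral_withDensity_eq_integral_toReal_smul hdens (by simp)]
    simp only [ENNReal.toReal_ofReal (tilt_pos φ s w _).le, smul_eq_mul]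

lemma integral_comp_add_smul_covVec (h : IsGaussianVector γ φ) {f : (T → ℝ) → ℝ}
    (hf : Measurable f) (s : ℝ) (w : T) :
    ∫ x, f (x + s • covVec φ w) ∂γ = ∫ x, tilt φ s w x * f x ∂γ := by
  rw [← integral_map (φ := fun x => x + s • covVec φ w) (by fun_prop) hf.aestronglyMeasurable,
    h.map_add_smul_covVec,
    integral_withDensity_eq_integral_toReal_smul (measurable_tilt φ s w).ennreal_ofReal (by simp)]
  simp only [ENNReal.toReal_ofReal (tilt_pos φ s w _).le, smul_eq_mul]

lemma integral_tilt_mul_coord (h : IsGaussianVector γ φ) (s : ℝ) (w u : T) :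
    ∫ x, tilt φ s w x * x u ∂γ = s * inner ℝ (φ w) (φ u) := by
  have := h.isProbabilityMeasure
  rw [← h.integral_comp_add_smul_covVec (f := fun x => x u) (by fun_prop) s w]
  simp only [Pi.add_apply, Pi.smul_apply, covVec, smul_eq_mul]
  rw [integral_add (h.integrable (hasExpGrowth_coord u)) (integrable_const _), h.integral_coord u]
  simp

theorem map_prod_smul_add_smul (h : IsGaussianVector γ φ) {a b c : ℝ}
    (habc : a ^ 2 + b ^ 2 = c ^ 2) :
    (γ.prod γ).map (fun p => a • p.1 + b • p.2) = γ.map (fun x => c • x) := by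
  have := h.isProbabilityMeasure
  have hmeas : Measurable (fun p : (T → ℝ) × (T → ℝ) => a • p.1 + b • p.2) := by fun_prop
  have hmeas' : Measurable (fun x : T → ℝ => c • x) := by fun_prop
  have hexp : ∀ (e : T → ℝ) (ν : Measure (T → ℝ)),
      AEStronglyMeasurable (fun x : T → ℝ => Real.exp (e ⬝ᵥ x)) ν := fun e _ =>
    (measurable_dotProduct e).exp.aestronglyMeasurable
  have hnorm : ∀ (r : ℝ) (e : T → ℝ),
      ‖∑ w, (r • e) w • φ w‖ ^ 2 = r ^ 2 * ‖∑ w, e w • φ w‖ ^ 2 := fun r e => by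
    rw [← sq_abs r, ← Real.norm_eq_abs, ← mul_pow, ← norm_smul, Finset.smul_sum]
    simp only [Pi.smul_apply, smul_assoc]
  have := Measure.isProbabilityMeasure_map (μ := γ.prod γ) hmeas.aemeasurable
  have := Measure.isProbabilityMeasure_map (μ := γ) hmeas'.aemeasurable
  have hsplit : ∀ (e : T → ℝ) (p : (T → ℝ) × (T → ℝ)), Real.exp (e ⬝ᵥ (a • p.1 + b • p.2)) =
      Real.exp ((a • e) ⬝ᵥ p.1) * Real.exp ((b • e) ⬝ᵥ p.2) := fun e p => by
    rw [dotProduct_add, Real.exp_add, dotProduct_smul, dotProduct_smul, smul_dotProduct,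
      smul_dotProduct]
  refine measure_pi_eq_of_integral_exp_dotProduct_eq (fun e => ?_) fun e => ?_
  · rw [integrable_map_measure (hexp e _) hmeas.aemeasurable]
    simp only [Function.comp_def, hsplit]
    exact (h.integrable_exp_dotProduct _).mul_prod (h.integrable_exp_dotProduct _)
  · rw [integral_map hmeas.aemeasurable (hexp e _), integral_map hmeas'.aemeasurable (hexp e _)]
    simp_rw [hsplit, dotProduct_smul, ← smul_dotProduct]
    rw [integral_prod_mul (fun x : T → ℝ => Real.exp ((a • e) ⬝ᵥ x))
        (fun x => Real.exp ((b • e) ⬝ᵥ x)), h.integral_exp_dotProduct, h.integral_exp_dotProduct,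
      h.integral_exp_dotProduct, ← Real.exp_add, hnorm, hnorm, hnorm, ← habc]
    congr 1
    ring

end IsGaussianVector

end GaussianVector

section Gibbs

lemma mul_add_sub_exp_le_mul_log {a : ℝ} (ha : 0 < a) (b : ℝ) :
    a * b + a - Real.exp b ≤ a * Real.log a := by
  have hexp := Real.add_one_le_exp (b - Real.log a)
  rw [Real.exp_sub, Real.exp_log ha, le_div_iff₀ ha] at hexp
  linarith

lemma integral_mul_le_integral_mul_log {α : Type*} [MeasurableSpace α] {μ : Measure α}
    {f b : α → ℝ} (hpos : ∀ x, 0 < f x) (hf : Integrable f μ)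
    (hb : Integrable (fun x => Real.exp (b x)) μ) (hfb : Integrable (fun x => f x * b x) μ)
    (hlog : Integrable (fun x => f x * Real.log (f x)) μ)
    (hmass : ∫ x, Real.exp (b x) ∂μ = ∫ x, f x ∂μ) :
    ∫ x, f x * b x ∂μ ≤ ∫ x, f x * Real.log (f x) ∂μ := by
  calc ∫ x, f x * b x ∂μ = ∫ x, (f x * b x + f x - Real.exp (b x)) ∂μ := by
        rw [integral_sub (f := fun x => f x * b x + f x) (hfb.add hf) hb, integral_add hfb hf,
          hmass, add_sub_cancel_right]
    _ ≤ ∫ x, f x * Real.log (f x) ∂μ := integral_mono ((hfb.add hf).sub hb) hlog fun x =>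
        mul_add_sub_exp_le_mul_log (hpos x) (b x)

end Gibbs

section Channel

variable {T E : Type*} [Fintype T] [NormedAddCommGroup E]

/-- The density, with respect to the noise law, of the output of the Gaussian channel
`W ↦ noise + s • covVec φ W` with input `W ∼ q`. -/
def mixture (φ : T → E) (s : ℝ) (q : T → ℝ) (x : T → ℝ) : ℝ := ∑ w, q w * tilt φ s w x

/-- The ratio of the conditional output density given `W = w` to the output density. -/
def likelihoodRatio (φ : T → E) (s : ℝ) (q : T → ℝ) (w : T) (x : T → ℝ) : ℝ :=
  tilt φ s w x * (mixture φ s q x)⁻¹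

/-- The conditional law of the input `W` given that the channel outputs `x`. -/
def channelPosterior (φ : T → E) (s : ℝ) (q : T → ℝ) (x : T → ℝ) (w : T) : ℝ :=
  q w * likelihoodRatio φ s q w x

/-- A *replica* `W'` of the input `W` is drawn from the posterior given the output. This is the
density at `(w, u)` of the law of `(W, W')` with respect to `q × q`. -/
def replicaDensity (γ : Measure (T → ℝ)) (φ : T → E) (s : ℝ) (q : T → ℝ) (w u : T) : ℝ :=
  ∫ x, tilt φ s u x * likelihoodRatio φ s q w x ∂γ

/-- The mean squared distance `E ‖φ W - φ W'‖²` between the input and its replica; this is twice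
the minimum mean squared error of the channel. -/
def replicaDistortion (γ : Measure (T → ℝ)) (φ : T → E) (s : ℝ) (q : T → ℝ) : ℝ :=
  ∑ w, ∑ u, q w * q u * replicaDensity γ φ s q w u * ‖φ w - φ u‖ ^ 2

/-- The mutual information between the input and the output of the channel. -/
def channelInfo (γ : Measure (T → ℝ)) (φ : T → E) (s : ℝ) (q : T → ℝ) : ℝ :=
  ∑ w, q w * ∫ x, tilt φ s w x * Real.log (likelihoodRatio φ s q w x) ∂γ

/-- `mixture` as a function of the unnormalized observation `y = s • x`, with `v = s ^ 2`. -/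
def observedMixture (φ : T → E) (v : ℝ) (q : T → ℝ) (y : T → ℝ) : ℝ :=
  ∑ w, q w * Real.exp (y w - v * ‖φ w‖ ^ 2 / 2)

variable {q : T → ℝ}

lemma exists_pos_of_mem_stdSimplex (hq : q ∈ stdSimplex ℝ T) : ∃ w, 0 < q w := by
  by_contra! hcon
  linarith [Finset.sum_nonpos fun w (_ : w ∈ Finset.univ) => hcon w, hq.2]

lemma mul_tilt_le_mixture (hq : q ∈ stdSimplex ℝ T) (φ : T → E) (s : ℝ) (x : T → ℝ) (w : T) :
    q w * tilt φ s w x ≤ mixture φ s q x :=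
  Finset.single_le_sum (f := fun w => q w * tilt φ s w x)
    (fun i _ => mul_nonneg (hq.1 i) (tilt_pos φ s i x).le) (Finset.mem_univ w)

lemma mixture_pos (hq : q ∈ stdSimplex ℝ T) (φ : T → E) (s : ℝ) (x : T → ℝ) :
    0 < mixture φ s q x := by
  obtain ⟨w, hw⟩ := exists_pos_of_mem_stdSimplex hq
  exact (mul_pos hw (tilt_pos φ s w x)).trans_le (mul_tilt_le_mixture hq φ s x w)

lemma likelihoodRatio_pos (hq : q ∈ stdSimplex ℝ T) (φ : T → E) (s : ℝ) (w : T) (x : T → ℝ) :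
    0 < likelihoodRatio φ s q w x :=
  mul_pos (tilt_pos φ s w x) (inv_pos.2 (mixture_pos hq φ s x))

lemma mixture_mul_likelihoodRatio (hq : q ∈ stdSimplex ℝ T) (φ : T → E) (s : ℝ) (w : T)
    (x : T → ℝ) : mixture φ s q x * likelihoodRatio φ s q w x = tilt φ s w x := by
  rw [likelihoodRatio, mul_left_comm, mul_inv_cancel₀ (mixture_pos hq φ s x).ne', mul_one]

lemma log_likelihoodRatio (hq : q ∈ stdSimplex ℝ T) (φ : T → E) (s : ℝ) (w : T) (x : T → ℝ) :
    Real.log (likelihoodRatio φ s q w x) =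
      s * x w - s ^ 2 * ‖φ w‖ ^ 2 / 2 - Real.log (mixture φ s q x) := by
  rw [likelihoodRatio, Real.log_mul (tilt_pos φ s w x).ne' (inv_pos.2 (mixture_pos hq φ s x)).ne',
    Real.log_inv, tilt, Real.log_exp, ← sub_eq_add_neg]

lemma channelPosterior_mem_stdSimplex (hq : q ∈ stdSimplex ℝ T) (φ : T → E) (s : ℝ) (x : T → ℝ) :
    channelPosterior φ s q x ∈ stdSimplex ℝ T := by
  refine ⟨fun w => mul_nonneg (hq.1 w) (likelihoodRatio_pos hq φ s w x).le, ?_⟩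
  simp only [channelPosterior, likelihoodRatio, ← mul_assoc]
  rw [← Finset.sum_mul]
  exact mul_inv_cancel₀ (mixture_pos hq φ s x).ne'

lemma hasExpGrowth_mixture (φ : T → E) (s : ℝ) (q : T → ℝ) : HasExpGrowth (mixture φ s q) :=
  .sum _ fun w _ => (HasExpGrowth.const (q w)).mul (hasExpGrowth_tilt φ s w)

lemma hasExpGrowth_mixture_inv (hq : q ∈ stdSimplex ℝ T) (φ : T → E) (s : ℝ) :
    HasExpGrowth (fun x => (mixture φ s q x)⁻¹) := by
  obtain ⟨w, hw⟩ := exists_pos_of_mem_stdSimplex hq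
  have hbound : HasExpGrowth fun x : T → ℝ => (q w * tilt φ s w x)⁻¹ := by
    simp only [mul_inv, tilt_inv]
    exact (HasExpGrowth.const _).mul ((hasExpGrowth_tilt φ (-s) w).mul (.const _))
  refine hbound.mono (hasExpGrowth_mixture φ s q).measurable.inv fun x => ?_
  have htilt := mul_pos hw (tilt_pos φ s w x)
  rw [abs_of_pos (inv_pos.2 (mixture_pos hq φ s x)), abs_of_pos (inv_pos.2 htilt)]
  exact inv_anti₀ htilt (mul_tilt_le_mixture hq φ s x w)

lemma hasExpGrowth_log_mixture (hq : q ∈ stdSimplex ℝ T) (φ : T → E) (s : ℝ) :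
    HasExpGrowth (fun x => Real.log (mixture φ s q x)) :=
  (hasExpGrowth_mixture φ s q).log (hasExpGrowth_mixture_inv hq φ s) (mixture_pos hq φ s)

lemma hasExpGrowth_mixture_mul_log (hq : q ∈ stdSimplex ℝ T) (φ : T → E) (s : ℝ) :
    HasExpGrowth (fun x => mixture φ s q x * Real.log (mixture φ s q x)) :=
  (hasExpGrowth_mixture φ s q).mul (hasExpGrowth_log_mixture hq φ s)

lemma hasExpGrowth_likelihoodRatio (hq : q ∈ stdSimplex ℝ T) (φ : T → E) (s : ℝ) (w : T) :
    HasExpGrowth (likelihoodRatio φ s q w) :=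
  (hasExpGrowth_tilt φ s w).mul (hasExpGrowth_mixture_inv hq φ s)

lemma hasExpGrowth_log_likelihoodRatio (hq : q ∈ stdSimplex ℝ T) (φ : T → E) (s : ℝ) (w : T) :
    HasExpGrowth (fun x => Real.log (likelihoodRatio φ s q w x)) := by
  simp only [log_likelihoodRatio hq]
  exact (((HasExpGrowth.const s).mul (hasExpGrowth_coord w)).sub (.const _)).sub
    (hasExpGrowth_log_mixture hq φ s)

lemma replicaDensity_symm (γ : Measure (T → ℝ)) (φ : T → E) (s : ℝ) (q : T → ℝ) (w u : T) :
    replicaDensity γ φ s q w u = replicaDensity γ φ s q u w :=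
  integral_congr_ae (.of_forall fun x => by simp only [likelihoodRatio]; ring)

lemma replicaDensity_nonneg (γ : Measure (T → ℝ)) (hq : q ∈ stdSimplex ℝ T) (φ : T → E) (s : ℝ)
    (w u : T) : 0 ≤ replicaDensity γ φ s q w u :=
  integral_nonneg fun x => (mul_pos (tilt_pos φ s u x) (likelihoodRatio_pos hq φ s w x)).le

lemma channelInfo_zero (γ : Measure (T → ℝ)) (hq : q ∈ stdSimplex ℝ T) (φ : T → E) :
    channelInfo γ φ 0 q = 0 := by
  have hmix : ∀ x, mixture φ 0 q x = 1 := fun x => by simp [mixture, tilt, hq.2]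
  simp [channelInfo, likelihoodRatio, hmix, tilt]

lemma mixture_eq_observedMixture (φ : T → E) (s : ℝ) (q x : T → ℝ) :
    mixture φ s q x = observedMixture φ (s ^ 2) q (s • x) := rfl

lemma measurable_observedMixture (φ : T → E) (v : ℝ) (q : T → ℝ) :
    Measurable (observedMixture φ v q) := by
  unfold observedMixture
  fun_prop

lemma observedMixture_smul_add_smul (hq : q ∈ stdSimplex ℝ T) (φ : T → E) (s δ : ℝ)
    (x y : T → ℝ) :
    observedMixture φ (s ^ 2 + δ ^ 2) q (s • x + δ • y) =
      mixture φ s q x * mixture φ δ (channelPosterior φ s q x) y := by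
  rw [mixture.eq_1 φ δ, Finset.mul_sum]
  refine Finset.sum_congr rfl fun w _ => ?_
  rw [channelPosterior, ← mul_assoc, mul_left_comm, mixture_mul_likelihoodRatio hq, mul_assoc,
    tilt, tilt, ← Real.exp_add]
  congr 2
  simp only [Pi.add_apply, Pi.smul_apply, smul_eq_mul]
  ring

end Channel

section ChannelInformation

variable {T E : Type*} [Fintype T] [NormedAddCommGroup E] [InnerProductSpace ℝ E]
  {γ : Measure (T → ℝ)} {φ : T → E} {q : T → ℝ}

lemma norm_sum_smul_sq (φ : T → E) (c : T → ℝ) :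
    ‖∑ w, c w • φ w‖ ^ 2 = ∑ w, ∑ u, c w * c u * inner ℝ (φ w) (φ u) := by
  rw [← real_inner_self_eq_norm_sq, sum_inner]
  simp only [inner_sum, real_inner_smul_left, real_inner_smul_right]
  exact Finset.sum_congr rfl fun w _ => Finset.sum_congr rfl fun u _ => by ring

namespace IsGaussianVector

lemma integral_mixture (h : IsGaussianVector γ φ) (hq : q ∈ stdSimplex ℝ T) (s : ℝ) :
    ∫ x, mixture φ s q x ∂γ = 1 := by
  unfold mixture
  rw [integral_finsetSum _ fun w _ => (h.integrable (hasExpGrowth_tilt φ s w)).const_mul _]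
  simp [integral_const_mul, h.integral_tilt, hq.2]

lemma integral_mixture_mul_dotProduct (h : IsGaussianVector γ φ) (q : T → ℝ) (s : ℝ) :
    ∫ x, mixture φ s q x * q ⬝ᵥ x ∂γ = s * ‖∑ w, q w • φ w‖ ^ 2 := by
  have hexpand : ∀ x, mixture φ s q x * q ⬝ᵥ x =
      ∑ w, ∑ u, q w * q u * (tilt φ s w x * x u) := fun x => by
    rw [mixture, dotProduct, Finset.sum_mul_sum]
    exact Finset.sum_congr rfl fun w _ => Finset.sum_congr rfl fun u _ => by ring
  have hint : ∀ w u, Integrable (fun x => q w * q u * (tilt φ s w x * x u)) γ := fun w u =>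
    (h.integrable ((hasExpGrowth_tilt φ s w).mul (hasExpGrowth_coord u))).const_mul _
  simp_rw [hexpand]
  rw [integral_finsetSum _ fun w _ => integrable_finsetSum _ fun u _ => hint w u,
    norm_sum_smul_sq, Finset.mul_sum]
  refine Finset.sum_congr rfl fun w _ => ?_
  rw [integral_finsetSum _ fun u _ => hint w u, Finset.mul_sum]
  refine Finset.sum_congr rfl fun u _ => ?_
  rw [integral_const_mul, h.integral_tilt_mul_coord]
  ring

/-- Gibbs' variational inequality, tested against the tilt by the mean of the input. -/
lemma norm_sq_le_integral_mixture_mul_log (h : IsGaussianVector γ φ) (hq : q ∈ stdSimplex ℝ T)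
    (s : ℝ) : s ^ 2 / 2 * ‖∑ w, q w • φ w‖ ^ 2 ≤
      ∫ x, mixture φ s q x * Real.log (mixture φ s q x) ∂γ := by
  set K := s ^ 2 / 2 * ‖∑ w, q w • φ w‖ ^ 2 with hK
  have hmix := h.integrable (hasExpGrowth_mixture φ s q)
  have hlin : HasExpGrowth fun x => mixture φ s q x * q ⬝ᵥ x :=
    (hasExpGrowth_mixture φ s q).mul (.sum _ fun u _ =>
      (HasExpGrowth.const (q u)).mul (hasExpGrowth_coord u))
  have hexp : ∀ x, Real.exp (s * q ⬝ᵥ x - K) =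
      Real.exp ((s • q) ⬝ᵥ x) * Real.exp (-K) := fun x => by
    rw [smul_dotProduct, ← Real.exp_add, smul_eq_mul, sub_eq_add_neg]
  have hsplit : ∀ x, mixture φ s q x * (s * q ⬝ᵥ x - K) =
      s * (mixture φ s q x * q ⬝ᵥ x) - K * mixture φ s q x := fun x => by ring
  have hmass : ∫ x, Real.exp (s * q ⬝ᵥ x - K) ∂γ = ∫ x, mixture φ s q x ∂γ := by
    simp_rw [hexp]
    rw [integral_mul_const, h.integral_exp_dotProduct, ← Real.exp_add, h.integral_mixture hq]
    simp only [Pi.smul_apply, smul_assoc, ← Finset.smul_sum, norm_smul, mul_pow, Real.norm_eq_abs,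
      sq_abs, hK]
    exact Real.exp_eq_one_iff _ |>.2 (by ring)
  calc K = ∫ x, mixture φ s q x * (s * q ⬝ᵥ x - K) ∂γ := by
        simp_rw [hsplit]
        rw [integral_sub ((h.integrable hlin).const_mul s) (hmix.const_mul K), integral_const_mul,
          integral_const_mul, h.integral_mixture_mul_dotProduct, h.integral_mixture hq, hK]
        ring
    _ ≤ _ := by
        refine integral_mul_le_integral_mul_log (mixture_pos hq φ s) hmix ?_ ?_
          (h.integrable (hasExpGrowth_mixture_mul_log hq φ s)) hmass
        · simp_rw [hexp]
          exact (h.integrable_exp_dotProduct _).mul_const _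
        · simp_rw [hsplit]
          exact ((h.integrable hlin).const_mul s).sub (hmix.const_mul K)

lemma sum_mul_replicaDensity (h : IsGaussianVector γ φ) (hq : q ∈ stdSimplex ℝ T) (s : ℝ) (w : T) :
    ∑ u, q u * replicaDensity γ φ s q w u = 1 := by
  unfold replicaDensity
  simp_rw [← integral_const_mul]
  rw [← integral_finsetSum _ fun u _ => (h.integrable ((hasExpGrowth_tilt φ s u).mul
    (hasExpGrowth_likelihoodRatio hq φ s w))).const_mul _, ← h.integral_tilt s w]
  simp_rw [← mul_assoc, ← Finset.sum_mul]
  exact integral_congr_ae (.of_forall fun x => mixture_mul_likelihoodRatio hq φ s w x)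

lemma integrable_tilt_mul_log_mixture (h : IsGaussianVector γ φ) (hq : q ∈ stdSimplex ℝ T) (s : ℝ)
    (w : T) : Integrable (fun x => tilt φ s w x * Real.log (mixture φ s q x)) γ :=
  h.integrable ((hasExpGrowth_tilt φ s w).mul (hasExpGrowth_log_mixture hq φ s))

lemma integral_tilt_mul_log_likelihoodRatio (h : IsGaussianVector γ φ) (hq : q ∈ stdSimplex ℝ T)
    (s : ℝ) (w : T) : ∫ x, tilt φ s w x * Real.log (likelihoodRatio φ s q w x) ∂γ =
      s ^ 2 / 2 * ‖φ w‖ ^ 2 - ∫ x, tilt φ s w x * Real.log (mixture φ s q x) ∂γ := by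
  have hcoord : Integrable (fun x => s * (tilt φ s w x * x w)) γ :=
    (h.integrable ((hasExpGrowth_tilt φ s w).mul (hasExpGrowth_coord w))).const_mul s
  have htilt : Integrable (fun x => s ^ 2 * ‖φ w‖ ^ 2 / 2 * tilt φ s w x) γ :=
    (h.integrable (hasExpGrowth_tilt φ s w)).const_mul _
  have hdiff : Integrable
      (fun x => s * (tilt φ s w x * x w) - s ^ 2 * ‖φ w‖ ^ 2 / 2 * tilt φ s w x) γ :=
    hcoord.sub htilt
  have hsplit : ∀ x, tilt φ s w x * Real.log (likelihoodRatio φ s q w x) =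
      s * (tilt φ s w x * x w) - s ^ 2 * ‖φ w‖ ^ 2 / 2 * tilt φ s w x -
        tilt φ s w x * Real.log (mixture φ s q x) := fun x => by
    rw [log_likelihoodRatio hq]
    ring
  simp_rw [hsplit]
  rw [integral_sub hdiff (h.integrable_tilt_mul_log_mixture hq s w), integral_sub hcoord htilt,
    integral_const_mul, integral_const_mul, h.integral_tilt_mul_coord, h.integral_tilt,
    real_inner_self_eq_norm_sq]
  ring

lemma channelInfo_eq_sub_integral_mixture_mul_log (h : IsGaussianVector γ φ)
    (hq : q ∈ stdSimplex ℝ T) (s : ℝ) :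
    channelInfo γ φ s q = s ^ 2 / 2 * ∑ w, q w * ‖φ w‖ ^ 2 -
      ∫ x, mixture φ s q x * Real.log (mixture φ s q x) ∂γ := by
  have hmix : ∀ x, mixture φ s q x * Real.log (mixture φ s q x) =
      ∑ w, q w * (tilt φ s w x * Real.log (mixture φ s q x)) := fun x => by
    rw [mixture.eq_1 φ s q x, Finset.sum_mul]
    simp only [mul_assoc]
  simp_rw [hmix]
  rw [integral_finsetSum _ fun w _ => (h.integrable_tilt_mul_log_mixture hq s w).const_mul _,
    Finset.mul_sum, ← Finset.sum_sub_distrib]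
  refine Finset.sum_congr rfl fun w _ => ?_
  rw [h.integral_tilt_mul_log_likelihoodRatio hq, integral_const_mul]
  ring

section Rotation

variable {F : (T → ℝ) → ℝ} {a b c : ℝ}

lemma integrable_prod_smul_add_smul (h : IsGaussianVector γ φ) (hF : Measurable F)
    (habc : a ^ 2 + b ^ 2 = c ^ 2) (hint : Integrable (fun x => F (c • x)) γ) :
    Integrable (fun p : (T → ℝ) × (T → ℝ) => F (a • p.1 + b • p.2)) (γ.prod γ) := by
  refine (integrable_map_measure (f := fun p : (T → ℝ) × (T → ℝ) => a • p.1 + b • p.2)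
    hF.aestronglyMeasurable (by fun_prop)).1 ?_
  rw [h.map_prod_smul_add_smul habc]
  exact (integrable_map_measure hF.aestronglyMeasurable (by fun_prop)).2 hint

lemma integral_integral_smul_add_smul (h : IsGaussianVector γ φ) (hF : Measurable F)
    (habc : a ^ 2 + b ^ 2 = c ^ 2) (hint : Integrable (fun x => F (c • x)) γ) :
    ∫ x, ∫ y, F (a • x + b • y) ∂γ ∂γ = ∫ x, F (c • x) ∂γ := by
  have := h.isProbabilityMeasure
  rw [integral_integral (f := fun x y => F (a • x + b • y))
      (h.integrable_prod_smul_add_smul hF habc hint),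
    ← integral_map (φ := fun p : (T → ℝ) × (T → ℝ) => a • p.1 + b • p.2) (by fun_prop)
      hF.aestronglyMeasurable, h.map_prod_smul_add_smul habc,
    integral_map (by fun_prop) hF.aestronglyMeasurable]

end Rotation

section PosteriorMean

lemma mixture_mul_norm_sum_channelPosterior_smul_sq (hq : q ∈ stdSimplex ℝ T) (φ : T → E) (s : ℝ)
    (x : T → ℝ) : mixture φ s q x * ‖∑ w, channelPosterior φ s q x w • φ w‖ ^ 2 =
      ∑ w, ∑ u, q w * q u * inner ℝ (φ w) (φ u) *
        (tilt φ s u x * likelihoodRatio φ s q w x) := by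
  rw [norm_sum_smul_sq, Finset.mul_sum]
  refine Finset.sum_congr rfl fun w _ => ?_
  rw [Finset.mul_sum]
  refine Finset.sum_congr rfl fun u _ => ?_
  rw [← mixture_mul_likelihoodRatio hq φ s u, channelPosterior, channelPosterior]
  ring

lemma integrable_mixture_mul_norm_sq (h : IsGaussianVector γ φ) (hq : q ∈ stdSimplex ℝ T)
    (s : ℝ) : Integrable
      (fun x => mixture φ s q x * ‖∑ w, channelPosterior φ s q x w • φ w‖ ^ 2) γ := by
  simp_rw [mixture_mul_norm_sum_channelPosterior_smul_sq hq φ s]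
  exact integrable_finsetSum _ fun w _ => integrable_finsetSum _ fun u _ =>
    (h.integrable ((hasExpGrowth_tilt φ s u).mul
      (hasExpGrowth_likelihoodRatio hq φ s w))).const_mul _

lemma integral_mixture_mul_norm_sq (h : IsGaussianVector γ φ) (hq : q ∈ stdSimplex ℝ T) (s : ℝ) :
    ∫ x, mixture φ s q x * ‖∑ w, channelPosterior φ s q x w • φ w‖ ^ 2 ∂γ =
      ∑ w, ∑ u, q w * q u * inner ℝ (φ w) (φ u) * replicaDensity γ φ s q w u := by
  have hint : ∀ w u, Integrable (fun x => q w * q u * inner ℝ (φ w) (φ u) *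
      (tilt φ s u x * likelihoodRatio φ s q w x)) γ := fun w u =>
    (h.integrable ((hasExpGrowth_tilt φ s u).mul
      (hasExpGrowth_likelihoodRatio hq φ s w))).const_mul _
  simp_rw [mixture_mul_norm_sum_channelPosterior_smul_sq hq φ s]
  rw [integral_finsetSum _ fun w _ => integrable_finsetSum _ fun u _ => hint w u]
  refine Finset.sum_congr rfl fun w _ => ?_
  rw [integral_finsetSum _ fun u _ => hint w u]
  exact Finset.sum_congr rfl fun u _ => integral_const_mul _ _

lemma replicaDistortion_eq_sub_integral (h : IsGaussianVector γ φ) (hq : q ∈ stdSimplex ℝ T)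
    (s : ℝ) : replicaDistortion γ φ s q = 2 * ∑ w, q w * ‖φ w‖ ^ 2 -
      2 * ∫ x, mixture φ s q x * ‖∑ w, channelPosterior φ s q x w • φ w‖ ^ 2 ∂γ := by
  have hexpand : ∀ w u, q w * q u * replicaDensity γ φ s q w u * ‖φ w - φ u‖ ^ 2 =
      q u * replicaDensity γ φ s q w u * (q w * ‖φ w‖ ^ 2) +
      q w * replicaDensity γ φ s q u w * (q u * ‖φ u‖ ^ 2) -
      2 * (q w * q u * inner ℝ (φ w) (φ u) * replicaDensity γ φ s q w u) := fun w u => by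
    rw [norm_sub_sq_real, replicaDensity_symm γ φ s q u w]
    ring
  have hmarginal : ∑ w, ∑ u, q u * replicaDensity γ φ s q w u * (q w * ‖φ w‖ ^ 2) =
      ∑ w, q w * ‖φ w‖ ^ 2 := by
    simp_rw [← Finset.sum_mul, h.sum_mul_replicaDensity hq, one_mul]
  have hmarginal' : ∑ w, ∑ u, q w * replicaDensity γ φ s q u w * (q u * ‖φ u‖ ^ 2) =
      ∑ w, q w * ‖φ w‖ ^ 2 := by
    rw [Finset.sum_comm, hmarginal]
  rw [replicaDistortion]
  simp_rw [hexpand, Finset.sum_sub_distrib, Finset.sum_add_distrib, ← Finset.mul_sum]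
  rw [hmarginal, hmarginal', h.integral_mixture_mul_norm_sq hq]
  ring

end PosteriorMean

lemma mixture_mul_log_add_le_integral (h : IsGaussianVector γ φ) (hq : q ∈ stdSimplex ℝ T)
    (s δ : ℝ) (x : T → ℝ) :
    mixture φ s q x * Real.log (mixture φ s q x) +
        δ ^ 2 / 2 * (mixture φ s q x * ‖∑ w, channelPosterior φ s q x w • φ w‖ ^ 2) ≤
      ∫ y, observedMixture φ (s ^ 2 + δ ^ 2) q (s • x + δ • y) *
        Real.log (observedMixture φ (s ^ 2 + δ ^ 2) q (s • x + δ • y)) ∂γ := by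
  have hp := channelPosterior_mem_stdSimplex hq φ s x
  have hx := mixture_pos hq φ s x
  have hsplit : ∀ y, observedMixture φ (s ^ 2 + δ ^ 2) q (s • x + δ • y) *
      Real.log (observedMixture φ (s ^ 2 + δ ^ 2) q (s • x + δ • y)) =
      mixture φ s q x * Real.log (mixture φ s q x) * mixture φ δ (channelPosterior φ s q x) y +
      mixture φ s q x * (mixture φ δ (channelPosterior φ s q x) y *
        Real.log (mixture φ δ (channelPosterior φ s q x) y)) := fun y => by
    rw [observedMixture_smul_add_smul hq, Real.log_mul hx.ne' (mixture_pos hp φ δ y).ne']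
    ring
  simp_rw [hsplit]
  rw [integral_add ((h.integrable (hasExpGrowth_mixture φ δ _)).const_mul _)
      ((h.integrable (hasExpGrowth_mixture_mul_log hp φ δ)).const_mul _),
    integral_const_mul, integral_const_mul, h.integral_mixture hp]
  linarith [mul_le_mul_of_nonneg_left (h.norm_sq_le_integral_mixture_mul_log hp δ) hx.le]

/-- The integrated form of the I-MMSE relation `d I / d (s ^ 2) = MMSE / 2`: observing the input
once more at signal level `δ` is a channel fed with the posterior. -/
theorem channelInfo_le_add_replicaDistortion (h : IsGaussianVector γ φ) (hq : q ∈ stdSimplex ℝ T)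
    {s δ s' : ℝ} (hs : s ^ 2 + δ ^ 2 = s' ^ 2) :
    channelInfo γ φ s' q ≤ channelInfo γ φ s q + δ ^ 2 / 4 * replicaDistortion γ φ s q := by
  set entropy : (T → ℝ) → ℝ := fun y =>
    observedMixture φ (s ^ 2 + δ ^ 2) q y * Real.log (observedMixture φ (s ^ 2 + δ ^ 2) q y)
    with hentropy
  have hmeas : Measurable entropy :=
    (measurable_observedMixture _ _ _).mul (measurable_observedMixture _ _ _).log
  have hmix : ∀ x, entropy (s' • x) = mixture φ s' q x * Real.log (mixture φ s' q x) := fun x => by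
    rw [hentropy, hs, mixture_eq_observedMixture]
  have hint : Integrable (fun x => entropy (s' • x)) γ := by
    simp_rw [hmix]
    exact h.integrable (hasExpGrowth_mixture_mul_log hq φ s')
  have hlog := h.integrable (hasExpGrowth_mixture_mul_log hq φ s)
  have hmean := (h.integrable_mixture_mul_norm_sq hq s).const_mul (δ ^ 2 / 2)
  have := h.isProbabilityMeasure
  have hmono := integral_mono (hlog.add hmean)
    (h.integrable_prod_smul_add_smul hmeas hs hint).integral_prod_left
    (h.mixture_mul_log_add_le_integral hq s δ)
  rw [integral_add' hlog hmean, integral_const_mul,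
    h.integral_integral_smul_add_smul hmeas hs hint] at hmono
  simp_rw [hmix] at hmono
  rw [h.channelInfo_eq_sub_integral_mixture_mul_log hq,
    h.channelInfo_eq_sub_integral_mixture_mul_log hq, h.replicaDistortion_eq_sub_integral hq, ← hs]
  linarith

lemma replicaDensity_mul_log_le (h : IsGaussianVector γ φ) (hq : q ∈ stdSimplex ℝ T) (s : ℝ)
    (w u : T) : replicaDensity γ φ s q w u * Real.log (replicaDensity γ φ s q w u) ≤
      ∫ x, tilt φ s u x *
        (likelihoodRatio φ s q w x * Real.log (likelihoodRatio φ s q w x)) ∂γ := by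
  have := h.isProbabilityMeasure
  have hratio := hasExpGrowth_likelihoodRatio hq φ s w
  have hlog := hratio.mul (hasExpGrowth_log_likelihoodRatio hq φ s w)
  rw [replicaDensity, ← h.integral_comp_add_smul_covVec hratio.measurable,
    ← h.integral_comp_add_smul_covVec hlog.measurable]
  exact Real.convexOn_mul_log.map_integral_le Real.continuous_mul_log.continuousOn isClosed_Ici
    (.of_forall fun x => (likelihoodRatio_pos hq φ s w _).le)
    (h.integrable (hratio.comp_add_right _)) (h.integrable (hlog.comp_add_right _))

/-- The data processing inequality for the chain input → output → replica. -/
theorem sum_replicaDensity_mul_log_le_channelInfo (h : IsGaussianVector γ φ)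
    (hq : q ∈ stdSimplex ℝ T) (s : ℝ) :
    ∑ w, ∑ u, q w * q u * (replicaDensity γ φ s q w u * Real.log (replicaDensity γ φ s q w u)) ≤
      channelInfo γ φ s q := by
  refine Finset.sum_le_sum fun w _ => ?_
  have hint : ∀ u, Integrable (fun x => q u * (tilt φ s u x *
      (likelihoodRatio φ s q w x * Real.log (likelihoodRatio φ s q w x)))) γ := fun u =>
    (h.integrable ((hasExpGrowth_tilt φ s u).mul ((hasExpGrowth_likelihoodRatio hq φ s w).mul
      (hasExpGrowth_log_likelihoodRatio hq φ s w)))).const_mul _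
  simp_rw [mul_assoc (q w), ← Finset.mul_sum]
  refine mul_le_mul_of_nonneg_left ?_ (hq.1 w)
  calc ∑ u, q u * (replicaDensity γ φ s q w u * Real.log (replicaDensity γ φ s q w u))
      ≤ ∑ u, ∫ x, q u * (tilt φ s u x *
          (likelihoodRatio φ s q w x * Real.log (likelihoodRatio φ s q w x))) ∂γ := by
        simp_rw [integral_const_mul]
        exact Finset.sum_le_sum fun u _ =>
          mul_le_mul_of_nonneg_left (h.replicaDensity_mul_log_le hq s w u) (hq.1 u)
    _ = ∫ x, tilt φ s w x * Real.log (likelihoodRatio φ s q w x) ∂γ := by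
        rw [← integral_finsetSum _ fun u _ => hint u]
        refine integral_congr_ae (.of_forall fun x => ?_)
        simp only [← mul_assoc, ← Finset.sum_mul]
        rw [← mixture, mixture_mul_likelihoodRatio hq]

end IsGaussianVector

end ChannelInformation

section InnerProduct

variable {E : Type*} [NormedAddCommGroup E] [InnerProductSpace ℝ E]

lemma real_inner_le_add_norm_sq (x y : E) {a : ℝ} (ha : 0 < a) :
    inner ℝ x y ≤ a / 2 * ‖y‖ ^ 2 + 1 / (2 * a) * ‖x‖ ^ 2 := by
  have hsq : 1 / (2 * a) * (a * ‖y‖ - ‖x‖) ^ 2 =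
      a / 2 * ‖y‖ ^ 2 + 1 / (2 * a) * ‖x‖ ^ 2 - ‖x‖ * ‖y‖ := by
    field_simp
    ring
  have hnonneg : 0 ≤ 1 / (2 * a) * (a * ‖y‖ - ‖x‖) ^ 2 := by positivity
  linarith [real_inner_le_norm x y]

lemma sum_mul_inner_sub_left_of_symm {T : Type*} [Fintype T] (φ : T → E) {c : T → T → ℝ}
    (hc : ∀ w u, c w u = c u w) :
    ∑ w, ∑ u, c w u * inner ℝ (φ w - φ u) (φ w) = (∑ w, ∑ u, c w u * ‖φ w - φ u‖ ^ 2) / 2 := by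
  have hswap : ∑ w, ∑ u, c w u * inner ℝ (φ w - φ u) (φ w) =
      ∑ w, ∑ u, c w u * inner ℝ (φ u - φ w) (φ u) := by
    rw [Finset.sum_comm]
    simp only [hc]
  have hadd : ∑ w, ∑ u, c w u * inner ℝ (φ w - φ u) (φ w) +
      ∑ w, ∑ u, c w u * inner ℝ (φ u - φ w) (φ u) = ∑ w, ∑ u, c w u * ‖φ w - φ u‖ ^ 2 := by
    simp_rw [← Finset.sum_add_distrib]
    refine Finset.sum_congr rfl fun w _ => Finset.sum_congr rfl fun u _ => ?_
    rw [← mul_add, ← neg_sub (φ w) (φ u), inner_neg_left, ← sub_eq_add_neg, ← inner_sub_right,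
      real_inner_self_eq_norm_sq]
  linarith

end InnerProduct

section Selection

variable {T : Type*} [Fintype T]

/-- A randomized selection rule: having observed the Gaussian vector `x`, choose the index `z` with
probability `p x z`. -/
structure IsSelectionRule (p : (T → ℝ) → T → ℝ) : Prop where
  measurable : ∀ z, Measurable (fun x => p x z)
  mem_stdSimplex : ∀ x, p x ∈ stdSimplex ℝ T

/-- The law of the selected index. -/
def selectionLaw (γ : Measure (T → ℝ)) (p : (T → ℝ) → T → ℝ) (z : T) : ℝ := ∫ x, p x z ∂γ

/-- The expected value `E[x_Z]` of the coordinate at the selected index `Z`. -/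
def selectionValue (γ : Measure (T → ℝ)) (p : (T → ℝ) → T → ℝ) : ℝ := ∑ z, ∫ x, p x z * x z ∂γ

namespace IsSelectionRule

variable {p : (T → ℝ) → T → ℝ}

lemma nonneg (hp : IsSelectionRule p) (x : T → ℝ) (z : T) : 0 ≤ p x z := (hp.mem_stdSimplex x).1 z

lemma hasExpGrowth (hp : IsSelectionRule p) (z : T) : HasExpGrowth (fun x => p x z) :=
  .mono (hp.measurable z) (.const 1) fun x => by
    rw [abs_of_nonneg (hp.nonneg x z), abs_one]
    exact (mem_Icc_of_mem_stdSimplex (hp.mem_stdSimplex x) z).2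

end IsSelectionRule

variable {E : Type*} [NormedAddCommGroup E] [InnerProductSpace ℝ E]
  {γ : Measure (T → ℝ)} {φ : T → E}

lemma selectionLaw_mem_stdSimplex (h : IsGaussianVector γ φ) {p : (T → ℝ) → T → ℝ}
    (hp : IsSelectionRule p) : selectionLaw γ p ∈ stdSimplex ℝ T := by
  have := h.isProbabilityMeasure
  refine ⟨fun z => integral_nonneg fun x => hp.nonneg x z, ?_⟩
  unfold selectionLaw
  rw [← integral_finsetSum _ fun z _ => h.integrable (hp.hasExpGrowth z)]
  simp [(hp.mem_stdSimplex _).2]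

/-- Given the channel output `y`, draw the input `w` from the posterior and apply the rule `p w` to
the noise `y - s • covVec φ w` which `w` would have needed to produce `y`. -/
def jointSelection (φ : T → E) (s : ℝ) (q : T → ℝ) (p : T → (T → ℝ) → T → ℝ) (w z : T)
    (y : T → ℝ) : ℝ :=
  channelPosterior φ s q y w * p w (y - s • covVec φ w) z

/-- Send an independent input `u ∼ q` through the channel whose noise is the observed vector, and
select according to `jointSelection`. The replica `w` of `u` is then independent of the noise fed
to `p w`, so that the selected index has the law it would have under the mixture of the `p w`. -/
def channelRule (φ : T → E) (s : ℝ) (q : T → ℝ) (p : T → (T → ℝ) → T → ℝ) (x : T → ℝ)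
    (z : T) : ℝ :=
  ∑ u, q u * ∑ w, jointSelection φ s q p w z (x + s • covVec φ u)

/-- The joint law of the replica `w`, the input `u` and the selected index `z` in
`channelRule`. -/
def replicaSelectionLaw (γ : Measure (T → ℝ)) (φ : T → E) (s : ℝ) (q : T → ℝ)
    (p : T → (T → ℝ) → T → ℝ) (w u z : T) : ℝ :=
  q u * ∫ x, tilt φ s u x * jointSelection φ s q p w z x ∂γ

variable {p : T → (T → ℝ) → T → ℝ} {q : T → ℝ}

lemma jointSelection_nonneg (hp : ∀ w, IsSelectionRule (p w)) (hq : q ∈ stdSimplex ℝ T) (φ : T → E)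
    (s : ℝ) (w z : T) (y : T → ℝ) : 0 ≤ jointSelection φ s q p w z y :=
  mul_nonneg ((channelPosterior_mem_stdSimplex hq φ s y).1 w) ((hp w).nonneg _ z)

lemma sum_jointSelection (hp : ∀ w, IsSelectionRule (p w)) (φ : T → E) (s : ℝ) (q : T → ℝ) (w : T)
    (y : T → ℝ) : ∑ z, jointSelection φ s q p w z y = channelPosterior φ s q y w := by
  simp only [jointSelection]
  rw [← Finset.mul_sum, ((hp w).mem_stdSimplex _).2, mul_one]

lemma hasExpGrowth_jointSelection (hp : ∀ w, IsSelectionRule (p w)) (hq : q ∈ stdSimplex ℝ T)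
    (φ : T → E) (s : ℝ) (w z : T) : HasExpGrowth (jointSelection φ s q p w z) :=
  ((HasExpGrowth.const (q w)).mul (hasExpGrowth_likelihoodRatio hq φ s w)).mul
    (((hp w).hasExpGrowth z).comp_sub_right _)

lemma isSelectionRule_channelRule (hp : ∀ w, IsSelectionRule (p w)) (hq : q ∈ stdSimplex ℝ T)
    (φ : T → E) (s : ℝ) : IsSelectionRule (channelRule φ s q p) where
  measurable z := by
    have hmeas := fun w => (hasExpGrowth_jointSelection hp hq φ s w z).measurable
    unfold channelRule
    fun_prop
  mem_stdSimplex x := by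
    refine ⟨fun z => Finset.sum_nonneg fun u _ => mul_nonneg (hq.1 u)
      (Finset.sum_nonneg fun w _ => jointSelection_nonneg hp hq φ s w z _), ?_⟩
    simp only [channelRule]
    rw [Finset.sum_comm, ← hq.2]
    refine Finset.sum_congr rfl fun u _ => ?_
    rw [← Finset.mul_sum, Finset.sum_comm]
    simp only [sum_jointSelection hp, (channelPosterior_mem_stdSimplex hq φ s _).2, mul_one]

namespace IsGaussianVector

lemma integral_channelRule_mul (h : IsGaussianVector γ φ) (hp : ∀ w, IsSelectionRule (p w))
    (hq : q ∈ stdSimplex ℝ T) (s : ℝ) (z : T) {f : (T → ℝ) → ℝ} (hf : HasExpGrowth f) :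
    ∫ x, channelRule φ s q p x z * f x ∂γ =
      ∑ w, ∑ u, q u * ∫ x, tilt φ s u x *
        (jointSelection φ s q p w z x * f (x - s • covVec φ u)) ∂γ := by
  set g : T → T → (T → ℝ) → ℝ := fun w u y =>
    jointSelection φ s q p w z y * f (y - s • covVec φ u) with hg
  have hgrowth : ∀ w u, HasExpGrowth (g w u) := fun w u =>
    (hasExpGrowth_jointSelection hp hq φ s w z).mul (hf.comp_sub_right _)
  have hint : ∀ w u, Integrable (fun x => q u * g w u (x + s • covVec φ u)) γ := fun w u =>
    (h.integrable ((hgrowth w u).comp_add_right _)).const_mul _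
  have hexpand : ∀ x, channelRule φ s q p x z * f x =
      ∑ w, ∑ u, q u * g w u (x + s • covVec φ u) := fun x => by
    rw [Finset.sum_comm]
    simp only [channelRule, hg, add_sub_cancel_right, Finset.sum_mul, ← Finset.mul_sum, mul_assoc]
  simp_rw [hexpand]
  rw [integral_finsetSum _ fun w _ => integrable_finsetSum _ fun u _ => hint w u]
  refine Finset.sum_congr rfl fun w _ => ?_
  rw [integral_finsetSum _ fun u _ => hint w u]
  refine Finset.sum_congr rfl fun u _ => ?_
  rw [integral_const_mul, h.integral_comp_add_smul_covVec (hgrowth w u).measurable]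

/-- Bayes' rule: the pairs (replica, its noise) and (input, noise) have the same law. -/
lemma sum_integral_tilt_mul_jointSelection_mul (h : IsGaussianVector γ φ)
    (hp : ∀ w, IsSelectionRule (p w)) (hq : q ∈ stdSimplex ℝ T) (s : ℝ) (w z : T)
    {f : (T → ℝ) → ℝ} (hf : HasExpGrowth f) :
    ∑ u, q u * ∫ x, tilt φ s u x * (jointSelection φ s q p w z x * f (x - s • covVec φ w)) ∂γ =
      q w * ∫ x, p w x z * f x ∂γ := by
  have hgrowth := (hasExpGrowth_jointSelection hp hq φ s w z).mul
    (hf.comp_sub_right (s • covVec φ w))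
  have hbayes : ∀ x, ∑ u, q u * (tilt φ s u x *
      (jointSelection φ s q p w z x * f (x - s • covVec φ w))) =
      q w * (tilt φ s w x * (p w (x - s • covVec φ w) z * f (x - s • covVec φ w))) := fun x => by
    simp_rw [← mul_assoc (q _)]
    rw [← Finset.sum_mul, ← mixture, jointSelection, channelPosterior,
      ← mixture_mul_likelihoodRatio hq φ s w]
    ring
  have hshift := h.integral_comp_add_smul_covVec
    (f := fun x => p w (x - s • covVec φ w) z * f (x - s • covVec φ w))
    ((((hp w).hasExpGrowth z).comp_sub_right _).mul (hf.comp_sub_right _)).measurable s w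
  simp only [add_sub_cancel_right] at hshift
  simp_rw [← integral_const_mul (q _)]
  rw [← integral_finsetSum _ fun u _ =>
    (h.integrable ((hasExpGrowth_tilt φ s u).mul hgrowth)).const_mul _]
  simp_rw [hbayes]
  rw [integral_const_mul, integral_const_mul, hshift]

lemma sum_replicaSelectionLaw_input (h : IsGaussianVector γ φ) (hp : ∀ w, IsSelectionRule (p w))
    (hq : q ∈ stdSimplex ℝ T) (s : ℝ) (w z : T) :
    ∑ u, replicaSelectionLaw γ φ s q p w u z = q w * selectionLaw γ (p w) z := by
  simpa only [mul_one, replicaSelectionLaw, selectionLaw] using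
    h.sum_integral_tilt_mul_jointSelection_mul hp hq s w z (.const 1)

lemma sum_replicaSelectionLaw_selected (h : IsGaussianVector γ φ)
    (hp : ∀ w, IsSelectionRule (p w)) (hq : q ∈ stdSimplex ℝ T) (s : ℝ) (w u : T) :
    ∑ z, replicaSelectionLaw γ φ s q p w u z = q w * q u * replicaDensity γ φ s q w u := by
  simp only [replicaSelectionLaw]
  rw [← Finset.mul_sum, ← integral_finsetSum _ fun z _ => h.integrable
    ((hasExpGrowth_tilt φ s u).mul (hasExpGrowth_jointSelection hp hq φ s w z))]
  simp_rw [← Finset.mul_sum, sum_jointSelection hp, channelPosterior, mul_left_comm _ (q w)]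
  rw [integral_const_mul, replicaDensity]
  ring

lemma selectionLaw_channelRule (h : IsGaussianVector γ φ) (hp : ∀ w, IsSelectionRule (p w))
    (hq : q ∈ stdSimplex ℝ T) (s : ℝ) (z : T) :
    selectionLaw γ (channelRule φ s q p) z = ∑ w, q w * selectionLaw γ (p w) z := by
  have hone := h.integral_channelRule_mul hp hq s z (.const 1)
  simp only [mul_one] at hone
  rw [selectionLaw, hone]
  exact Finset.sum_congr rfl fun w _ => h.sum_replicaSelectionLaw_input hp hq s w z

lemma integral_channelRule_mul_coord (h : IsGaussianVector γ φ) (hp : ∀ w, IsSelectionRule (p w))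
    (hq : q ∈ stdSimplex ℝ T) (s : ℝ) (z : T) :
    ∫ x, channelRule φ s q p x z * x z ∂γ = ∑ w, (q w * ∫ x, p w x z * x z ∂γ +
      s * ∑ u, replicaSelectionLaw γ φ s q p w u z * inner ℝ (φ w - φ u) (φ z)) := by
  rw [h.integral_channelRule_mul hp hq s z (hasExpGrowth_coord z)]
  refine Finset.sum_congr rfl fun w _ => ?_
  have hgrowth := hasExpGrowth_jointSelection hp hq φ s w z
  have hcoord : ∀ u, Integrable (fun x => tilt φ s u x *
      (jointSelection φ s q p w z x * (x - s • covVec φ w) z)) γ := fun u =>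
    h.integrable ((hasExpGrowth_tilt φ s u).mul
      (hgrowth.mul ((hasExpGrowth_coord z).comp_sub_right _)))
  have hjoint : ∀ u, Integrable (fun x => s * inner ℝ (φ w - φ u) (φ z) *
      (tilt φ s u x * jointSelection φ s q p w z x)) γ := fun u =>
    (h.integrable ((hasExpGrowth_tilt φ s u).mul hgrowth)).const_mul _
  have hsplit : ∀ u x, tilt φ s u x * (jointSelection φ s q p w z x * (x - s • covVec φ u) z) =
      tilt φ s u x * (jointSelection φ s q p w z x * (x - s • covVec φ w) z) +
      s * inner ℝ (φ w - φ u) (φ z) * (tilt φ s u x * jointSelection φ s q p w z x) :=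
    fun u x => by
    simp only [Pi.sub_apply, Pi.smul_apply, covVec, smul_eq_mul, inner_sub_left]
    ring
  simp_rw [hsplit, integral_add (hcoord _) (hjoint _), mul_add, Finset.sum_add_distrib]
  rw [h.sum_integral_tilt_mul_jointSelection_mul hp hq s w z (hasExpGrowth_coord z),
    Finset.mul_sum]
  congr 1
  refine Finset.sum_congr rfl fun u _ => ?_
  rw [integral_const_mul, replicaSelectionLaw]
  ring

lemma selectionValue_channelRule (h : IsGaussianVector γ φ) (hp : ∀ w, IsSelectionRule (p w))
    (hq : q ∈ stdSimplex ℝ T) (s : ℝ) :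
    selectionValue γ (channelRule φ s q p) = ∑ w, q w * selectionValue γ (p w) +
      s * ∑ w, ∑ u, ∑ z, replicaSelectionLaw γ φ s q p w u z * inner ℝ (φ w - φ u) (φ z) := by
  simp_rw [selectionValue, h.integral_channelRule_mul_coord hp hq]
  rw [Finset.sum_comm]
  simp_rw [Finset.sum_add_distrib, ← Finset.mul_sum]
  congr 2
  exact Finset.sum_congr rfl fun w _ => Finset.sum_comm

lemma replicaDistortion_sub_le_sum_inner (h : IsGaussianVector γ φ)
    (hp : ∀ w, IsSelectionRule (p w)) (hq : q ∈ stdSimplex ℝ T) (s : ℝ) {a : ℝ} (ha : 0 < a) :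
    replicaDistortion γ φ s q / 2 -
        (a / 2 * ∑ w, q w * ∑ z, selectionLaw γ (p w) z * ‖φ w - φ z‖ ^ 2 +
          1 / (2 * a) * replicaDistortion γ φ s q) ≤
      ∑ w, ∑ u, ∑ z, replicaSelectionLaw γ φ s q p w u z * inner ℝ (φ w - φ u) (φ z) := by
  set θ := replicaSelectionLaw γ φ s q p with hθ
  have hself : ∑ w, ∑ u, ∑ z, θ w u z * inner ℝ (φ w - φ u) (φ w) =
      replicaDistortion γ φ s q / 2 := by
    simp_rw [← Finset.sum_mul, hθ, h.sum_replicaSelectionLaw_selected hp hq]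
    exact sum_mul_inner_sub_left_of_symm φ fun w u => by
      rw [replicaDensity_symm, mul_comm (q w)]
  have hselected : ∑ w, ∑ u, ∑ z, θ w u z * ‖φ w - φ z‖ ^ 2 =
      ∑ w, q w * ∑ z, selectionLaw γ (p w) z * ‖φ w - φ z‖ ^ 2 := by
    refine Finset.sum_congr rfl fun w _ => ?_
    rw [Finset.sum_comm]
    simp_rw [← Finset.sum_mul, hθ, h.sum_replicaSelectionLaw_input hp hq, Finset.mul_sum,
      mul_assoc]
  have hreplica : ∑ w, ∑ u, ∑ z, θ w u z * ‖φ w - φ u‖ ^ 2 = replicaDistortion γ φ s q := by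
    simp_rw [← Finset.sum_mul, hθ, h.sum_replicaSelectionLaw_selected hp hq]
    rfl
  rw [← hself, ← hselected, ← hreplica]
  simp_rw [Finset.mul_sum, ← Finset.sum_add_distrib, ← Finset.sum_sub_distrib]
  refine Finset.sum_le_sum fun w _ => Finset.sum_le_sum fun u _ => Finset.sum_le_sum fun z _ => ?_
  have hθ_nonneg : 0 ≤ θ w u z := mul_nonneg (hq.1 u) (integral_nonneg fun x =>
    mul_nonneg (tilt_pos φ s u x).le (jointSelection_nonneg hp hq φ s w z x))
  have hyoung := mul_le_mul_of_nonneg_left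
    (real_inner_le_add_norm_sq (φ w - φ u) (φ w - φ z) ha) hθ_nonneg
  rw [inner_sub_right] at hyoung
  linarith

theorem add_le_selectionValue_channelRule (h : IsGaussianVector γ φ)
    (hp : ∀ w, IsSelectionRule (p w)) (hq : q ∈ stdSimplex ℝ T) {s a : ℝ} (hs : 0 ≤ s)
    (ha : 0 < a) :
    ∑ w, q w * selectionValue γ (p w) + s * (replicaDistortion γ φ s q / 2 -
        (a / 2 * ∑ w, q w * ∑ z, selectionLaw γ (p w) z * ‖φ w - φ z‖ ^ 2 +
          1 / (2 * a) * replicaDistortion γ φ s q)) ≤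
      selectionValue γ (channelRule φ s q p) := by
  rw [h.selectionValue_channelRule hp hq]
  gcongr
  exact h.replicaDistortion_sub_le_sum_inner hp hq s ha

end IsGaussianVector

end Selection

section SelfCoupling

lemma mul_log_div_add_sub_le {a b r : ℝ} (ha : 0 ≤ a) (hb : 0 ≤ b) (hab : b = 0 → a = 0)
    (hr : 0 < r) : a * Real.log r + (a - b * r) ≤ a * Real.log (a / b) := by
  rcases ha.eq_or_lt with rfl | ha
  · simpa using mul_nonneg hb hr.le
  have hb : 0 < b := hb.lt_of_ne fun h => ha.ne' (hab h.symm)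
  have hgibbs := mul_add_sub_exp_le_mul_log ha (Real.log (b * r))
  rw [Real.exp_log (by positivity), Real.log_mul hb.ne' hr.ne'] at hgibbs
  rw [Real.log_div ha.ne' hb.ne']
  linarith

lemma sum_mul_log_sum_div_sum_le {ι : Type*} (s : Finset ι) {a b : ι → ℝ} (ha : ∀ i ∈ s, 0 ≤ a i)
    (hb : ∀ i ∈ s, 0 ≤ b i) (hab : ∀ i ∈ s, b i = 0 → a i = 0) :
    (∑ i ∈ s, a i) * Real.log ((∑ i ∈ s, a i) / ∑ i ∈ s, b i) ≤
      ∑ i ∈ s, a i * Real.log (a i / b i) := by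
  rcases (Finset.sum_nonneg ha).eq_or_lt with ha0 | hA
  · have hz : ∀ i ∈ s, a i = 0 := (Finset.sum_eq_zero_iff_of_nonneg ha).1 ha0.symm
    rw [← ha0, zero_mul, Finset.sum_eq_zero fun i hi => by rw [hz i hi, zero_mul]]
  have hB : 0 < ∑ i ∈ s, b i := (Finset.sum_nonneg hb).lt_of_ne fun hb0 => hA.ne' <|
    Finset.sum_eq_zero fun i hi =>
      hab i hi ((Finset.sum_eq_zero_iff_of_nonneg hb).1 hb0.symm i hi)
  have hsum := Finset.sum_le_sum fun i hi =>
    mul_log_div_add_sub_le (ha i hi) (hb i hi) (hab i hi) (div_pos hA hB)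
  rw [Finset.sum_add_distrib, Finset.sum_sub_distrib, ← Finset.sum_mul, ← Finset.sum_mul,
    mul_div_cancel₀ _ hB.ne'] at hsum
  linarith

variable {T : Type*} {m : T → ℝ} {c : T → T → ℝ}

/-- The conditional law of the second coordinate of `c` given that the first one is `v`, when `c`
has first marginal `m`. -/
def condKernel (m : T → ℝ) (c : T → T → ℝ) (v w : T) : ℝ := c v w / m v

lemma mul_condKernel {v : T} (hv : m v ≠ 0) (c : T → T → ℝ) (w : T) :
    m v * condKernel m c v w = c v w := mul_div_cancel₀ _ hv

variable [Fintype T]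

/-- The joint mass function `c` couples the mass function `m` with itself. -/
structure IsSelfCoupling (m : T → ℝ) (c : T → T → ℝ) : Prop where
  nonneg : ∀ v w, 0 ≤ c v w
  sum_right : ∀ v, ∑ w, c v w = m v
  sum_left : ∀ w, ∑ v, c v w = m w

/-- The mutual information of a finite self-coupling `c` of `m`. -/
def couplingInfo (m : T → ℝ) (c : T → T → ℝ) : ℝ :=
  ∑ v, ∑ w, c v w * Real.log (c v w / (m v * m w))

lemma isSelfCoupling_mul (hm : m ∈ stdSimplex ℝ T) : IsSelfCoupling m fun v w => m v * m w where
  nonneg v w := mul_nonneg (hm.1 v) (hm.1 w)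
  sum_right v := by rw [← Finset.mul_sum, hm.2, mul_one]
  sum_left w := by rw [← Finset.sum_mul, hm.2, one_mul]

lemma couplingInfo_mul (m : T → ℝ) : couplingInfo m (fun v w => m v * m w) = 0 := by
  refine Finset.sum_eq_zero fun v _ => Finset.sum_eq_zero fun w _ => ?_
  rcases eq_or_ne (m v * m w) 0 with h | h <;> simp [h]

lemma isSelfCoupling_diagonal [DecidableEq T] (hm : ∀ v, 0 ≤ m v) :
    IsSelfCoupling m fun v w => if v = w then m v else 0 where
  nonneg v w := by split_ifs; exacts [hm v, le_rfl]
  sum_right v := by simp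
  sum_left w := by simp

lemma IsSelfCoupling.eq_zero_of_mul_eq_zero (hc : IsSelfCoupling m c) {v w : T}
    (h : m v * m w = 0) : c v w = 0 := by
  refine le_antisymm ?_ (hc.nonneg v w)
  rcases mul_eq_zero.1 h with h | h
  · rw [← h, ← hc.sum_right v]
    exact Finset.single_le_sum (fun w _ => hc.nonneg v w) (Finset.mem_univ w)
  · rw [← h, ← hc.sum_left w]
    exact Finset.single_le_sum (f := fun v => c v w) (fun v _ => hc.nonneg v w) (Finset.mem_univ v)

lemma IsSelfCoupling.couplingInfo_nonneg (hc : IsSelfCoupling m c) (hm : m ∈ stdSimplex ℝ T) :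
    0 ≤ couplingInfo m c := by
  have hlogsum := sum_mul_log_sum_div_sum_le (Finset.univ : Finset (T × T))
    (a := fun p => c p.1 p.2) (b := fun p => m p.1 * m p.2) (fun p _ => hc.nonneg _ _)
    (fun p _ => mul_nonneg (hm.1 _) (hm.1 _)) (fun p _ => hc.eq_zero_of_mul_eq_zero)
  simp only [Fintype.sum_prod_type, hc.sum_right, hm.2, ← Finset.mul_sum, mul_one, div_one,
    Real.log_one, mul_zero] at hlogsum
  exact hlogsum

variable {E : Type*} [NormedAddCommGroup E] {φ : T → E}

/-- The mean squared distance `E ‖φ_V - φ_W‖²` under a finite self-coupling `c`. -/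
def couplingCost (φ : T → E) (c : T → T → ℝ) : ℝ := ∑ v, ∑ w, c v w * ‖φ v - φ w‖ ^ 2

lemma couplingCost_diagonal [DecidableEq T] (φ : T → E) (m : T → ℝ) :
    couplingCost φ (fun v w => if v = w then m v else 0) = 0 := by
  refine Finset.sum_eq_zero fun v _ => Finset.sum_eq_zero fun w _ => ?_
  rcases eq_or_ne v w with rfl | h
  · simp
  · simp [h]

/-- The function `i(σ)` of the mass function `m` on the finite set of points `φ`. -/
def finiteISelf (φ : T → E) (m : T → ℝ) (σ : ℝ) : ℝ :=
  sInf {v | ∃ c, IsSelfCoupling m c ∧ couplingCost φ c ≤ σ ^ 2 ∧ v = couplingInfo m c}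

lemma finiteISelf_le_couplingInfo (hm : m ∈ stdSimplex ℝ T) {σ : ℝ} (hc : IsSelfCoupling m c)
    (hσ : couplingCost φ c ≤ σ ^ 2) : finiteISelf φ m σ ≤ couplingInfo m c :=
  csInf_le ⟨0, by rintro _ ⟨c, hc, -, rfl⟩; exact hc.couplingInfo_nonneg hm⟩ ⟨c, hc, hσ, rfl⟩

lemma le_finiteISelf (hm : m ∈ stdSimplex ℝ T) {σ a : ℝ}
    (h : ∀ c, IsSelfCoupling m c → couplingCost φ c ≤ σ ^ 2 → a ≤ couplingInfo m c) :
    a ≤ finiteISelf φ m σ := by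
  classical
  refine le_csInf ⟨_, _, isSelfCoupling_diagonal hm.1, ?_, rfl⟩ ?_
  · rw [couplingCost_diagonal]
    positivity
  · rintro _ ⟨c, hc, hσ, rfl⟩
    exact h c hc hσ

lemma finiteISelf_nonneg (hm : m ∈ stdSimplex ℝ T) (φ : T → E) (σ : ℝ) : 0 ≤ finiteISelf φ m σ :=
  le_finiteISelf hm fun _ hc _ => hc.couplingInfo_nonneg hm

lemma antitoneOn_finiteISelf (hm : m ∈ stdSimplex ℝ T) (φ : T → E) :
    AntitoneOn (finiteISelf φ m) (Ici 0) := fun _ hσ _ _ h =>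
  le_finiteISelf hm fun _ hc hcost =>
    finiteISelf_le_couplingInfo hm hc (hcost.trans (pow_le_pow_left₀ hσ h 2))

lemma exists_finiteISelf_eq_zero (hm : m ∈ stdSimplex ℝ T) (φ : T → E) :
    ∃ R, 0 < R ∧ ∀ σ, R ≤ σ → finiteISelf φ m σ = 0 := by
  set C := couplingCost φ fun v w => m v * m w
  refine ⟨|C| + 1, by positivity, fun σ hσ => le_antisymm ?_ (finiteISelf_nonneg hm φ σ)⟩
  rw [← couplingInfo_mul m]
  refine finiteISelf_le_couplingInfo hm (isSelfCoupling_mul hm) ?_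
  nlinarith [le_abs_self C, abs_nonneg C]

lemma IsSelfCoupling.condKernel_mem_stdSimplex (hc : IsSelfCoupling m c) {v : T} (hv : 0 < m v) :
    condKernel m c v ∈ stdSimplex ℝ T :=
  ⟨fun w => div_nonneg (hc.nonneg v w) hv.le, by
    simp only [condKernel]
    rw [← Finset.sum_div, hc.sum_right, div_self hv.ne']⟩

end SelfCoupling

section ReplicaCoupling

variable {T E : Type*} [Fintype T] [NormedAddCommGroup E] {γ : Measure (T → ℝ)} {φ : T → E}
  {m : T → ℝ} {c : T → T → ℝ}

/-- The joint mass function of `(V, W, W')`, where `(V, W)` has law `c` and, given `V`, the index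
`W'` is a replica of `W` drawn from its posterior in the Gaussian channel at scale `s`. -/
def replicaTriple (γ : Measure (T → ℝ)) (φ : T → E) (s : ℝ) (m : T → ℝ) (c : T → T → ℝ)
    (v w u : T) : ℝ :=
  c v w * (condKernel m c v u * replicaDensity γ φ s (condKernel m c v) w u)

lemma replicaTriple_nonneg (γ : Measure (T → ℝ)) (hc : IsSelfCoupling m c) (hm : ∀ v, 0 < m v)
    (φ : T → E) (s : ℝ) (v w u : T) : 0 ≤ replicaTriple γ φ s m c v w u :=
  have hq := hc.condKernel_mem_stdSimplex (hm v)
  mul_nonneg (hc.nonneg v w) (mul_nonneg (hq.1 u) (replicaDensity_nonneg γ hq φ s w u))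

lemma replicaTriple_symm (γ : Measure (T → ℝ)) (φ : T → E) (s : ℝ) (m : T → ℝ) (c : T → T → ℝ)
    (v w u : T) : replicaTriple γ φ s m c v w u = replicaTriple γ φ s m c v u w := by
  simp only [replicaTriple, condKernel]
  rw [replicaDensity_symm]
  ring

lemma couplingCost_sum_replicaTriple (γ : Measure (T → ℝ)) (φ : T → E) (s : ℝ)
    (hm : ∀ v, m v ≠ 0) (c : T → T → ℝ) :
    couplingCost φ (fun w u => ∑ v, replicaTriple γ φ s m c v w u) =
      ∑ v, m v * replicaDistortion γ φ s (condKernel m c v) := by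
  simp only [couplingCost, replicaDistortion, Finset.sum_mul, Finset.mul_sum]
  rw [Finset.sum_congr rfl fun w _ => Finset.sum_comm, Finset.sum_comm]
  refine Finset.sum_congr rfl fun v _ => Finset.sum_congr rfl fun w _ =>
    Finset.sum_congr rfl fun u _ => ?_
  rw [replicaTriple, ← mul_condKernel (hm v) c w]
  ring

lemma sum_replicaTriple_mul_log_le (γ : Measure (T → ℝ)) (hc : IsSelfCoupling m c)
    (hm : ∀ v, 0 < m v) (φ : T → E) (s : ℝ) (w u : T) :
    (∑ v, replicaTriple γ φ s m c v w u) *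
        Real.log ((∑ v, replicaTriple γ φ s m c v w u) / (m w * m u)) ≤
      ∑ v, (replicaTriple γ φ s m c v w u * Real.log (c v w / (m v * m w)) +
        replicaTriple γ φ s m c v w u *
          Real.log (replicaDensity γ φ s (condKernel m c v) w u)) := by
  have hlogsum := sum_mul_log_sum_div_sum_le Finset.univ
    (a := fun v => replicaTriple γ φ s m c v w u) (b := fun v => m w * c v u)
    (fun v _ => replicaTriple_nonneg γ hc hm φ s v w u)
    (fun v _ => mul_nonneg (hm w).le (hc.nonneg v u)) (fun v _ hv => by
      have hcv : c v u = 0 := (mul_eq_zero.1 hv).resolve_left (hm w).ne'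
      simp [replicaTriple, condKernel, hcv])
  rw [← Finset.mul_sum, hc.sum_left] at hlogsum
  refine hlogsum.trans (Finset.sum_le_sum fun v _ => le_of_eq ?_)
  rcases eq_or_ne (replicaTriple γ φ s m c v w u) 0 with h0 | h0
  · simp [h0]
  obtain ⟨hvw, hvu, hr⟩ : c v w ≠ 0 ∧ condKernel m c v u ≠ 0 ∧
      replicaDensity γ φ s (condKernel m c v) w u ≠ 0 := by simpa [replicaTriple] using h0
  have hratio : replicaTriple γ φ s m c v w u / (m w * c v u) =
      c v w / (m v * m w) * replicaDensity γ φ s (condKernel m c v) w u := by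
    have hmv := (hm v).ne'
    have hmw := (hm w).ne'
    rw [← mul_condKernel hmv c u, replicaTriple]
    field_simp
  rw [hratio, Real.log_mul (div_ne_zero hvw (mul_pos (hm v) (hm w)).ne') hr, mul_add]

variable [InnerProductSpace ℝ E]

namespace IsGaussianVector

lemma sum_replicaTriple (h : IsGaussianVector γ φ) (hc : IsSelfCoupling m c) (s : ℝ)
    (v w : T) (hv : 0 < m v) : ∑ u, replicaTriple γ φ s m c v w u = c v w := by
  simp only [replicaTriple]
  rw [← Finset.mul_sum, h.sum_mul_replicaDensity (hc.condKernel_mem_stdSimplex hv), mul_one]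

lemma isSelfCoupling_sum_replicaTriple (h : IsGaussianVector γ φ) (hc : IsSelfCoupling m c)
    (hm : ∀ v, 0 < m v) (s : ℝ) :
    IsSelfCoupling m (fun w u => ∑ v, replicaTriple γ φ s m c v w u) where
  nonneg w u := Finset.sum_nonneg fun v _ => replicaTriple_nonneg γ hc hm φ s v w u
  sum_right w := by
    rw [Finset.sum_comm]
    simp only [h.sum_replicaTriple hc s _ _ (hm _), hc.sum_left]
  sum_left u := by
    rw [Finset.sum_comm]
    simp only [replicaTriple_symm γ φ s m c _ _ u, h.sum_replicaTriple hc s _ _ (hm _),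
      hc.sum_left]

lemma sum_replicaTriple_mul_log_le_channelInfo (h : IsGaussianVector γ φ)
    (hc : IsSelfCoupling m c) (s : ℝ) {v : T} (hv : 0 < m v) :
    ∑ w, ∑ u, replicaTriple γ φ s m c v w u *
        Real.log (replicaDensity γ φ s (condKernel m c v) w u) ≤
      m v * channelInfo γ φ s (condKernel m c v) := by
  refine le_trans (le_of_eq ?_) (mul_le_mul_of_nonneg_left
    (h.sum_replicaDensity_mul_log_le_channelInfo (hc.condKernel_mem_stdSimplex hv) s) hv.le)
  simp only [Finset.mul_sum]
  refine Finset.sum_congr rfl fun w _ => Finset.sum_congr rfl fun u _ => ?_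
  rw [replicaTriple, ← mul_condKernel hv.ne' c w]
  ring

/-- If the replica distortion is at most `D²`, the replica pair is a competitor for `i(D)`, and its
mutual information splits by the chain rule into that of `c` and that of the channel. -/
theorem finiteISelf_le_couplingInfo_add (h : IsGaussianVector γ φ) (hm : m ∈ stdSimplex ℝ T)
    (hm0 : ∀ v, 0 < m v) (hc : IsSelfCoupling m c) {s D : ℝ}
    (hD : ∑ v, m v * replicaDistortion γ φ s (condKernel m c v) ≤ D ^ 2) :
    finiteISelf φ m D ≤
      couplingInfo m c + ∑ v, m v * channelInfo γ φ s (condKernel m c v) := by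
  refine (finiteISelf_le_couplingInfo hm (h.isSelfCoupling_sum_replicaTriple hc hm0 s)
    ((couplingCost_sum_replicaTriple γ φ s (fun v => (hm0 v).ne') c).trans_le hD)).trans ?_
  refine (Finset.sum_le_sum fun w _ => Finset.sum_le_sum fun u _ =>
    sum_replicaTriple_mul_log_le γ hc hm0 φ s w u).trans ?_
  simp only [Finset.sum_add_distrib]
  rw [Finset.sum_congr rfl fun w _ => Finset.sum_comm, Finset.sum_comm]
  refine add_le_add (le_of_eq ?_) ?_
  · refine Finset.sum_congr rfl fun v _ => Finset.sum_congr rfl fun w _ => ?_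
    rw [← Finset.sum_mul, h.sum_replicaTriple hc s v w (hm0 v)]
  · rw [Finset.sum_congr rfl fun w _ => Finset.sum_comm, Finset.sum_comm]
    exact Finset.sum_le_sum fun v _ => h.sum_replicaTriple_mul_log_le_channelInfo hc s (hm0 v)

end IsGaussianVector

end ReplicaCoupling

section ScaleSelection

lemma sq_sub_sq_mul_le {a b M B : ℝ} (hab : a ≤ b) (hM : 0 ≤ M) (hB : b * M / 2 ≤ B) :
    (b ^ 2 - a ^ 2) / 4 * M ≤ B * (b - a) := by
  calc (b ^ 2 - a ^ 2) / 4 * M = (b - a) * ((a + b) * M / 4) := by ring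
    _ ≤ (b - a) * B := by
      refine mul_le_mul_of_nonneg_left ?_ (sub_nonneg.2 hab)
      nlinarith
    _ = B * (b - a) := mul_comm _ _

variable {M F : ℝ → ℝ} {D J B : ℝ}

lemma le_add_mul_sqrt_of_increment_le (hF : F 0 ≤ 0) (hM : ∀ s, 0 ≤ M s)
    (hinc : ∀ s δ s' : ℝ, s ^ 2 + δ ^ 2 = s' ^ 2 → F s' ≤ F s + δ ^ 2 / 4 * M s)
    {η : ℝ} (hη : 0 ≤ η) (n : ℕ)
    (hB : ∀ k : ℕ, k ≤ n → √(k * η) * M √(k * η) / 2 ≤ B) :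
    F √((n + 1 : ℕ) * η) ≤ η / 4 * M 0 + B * √(n * η) := by
  have hsq (k : ℕ) : √(k * η) ^ 2 = k * η := Real.sq_sqrt (by positivity)
  have hstep (k : ℕ) : F √((k + 1 : ℕ) * η) ≤ F √(k * η) + η / 4 * M √(k * η) := by
    have := hinc √(k * η) √η √((k + 1 : ℕ) * η) (by
      rw [hsq, hsq, Real.sq_sqrt hη]
      push_cast
      ring)
    rwa [Real.sq_sqrt hη] at this
  induction n with
  | zero =>
    have := hstep 0
    simp only [Nat.cast_zero, zero_mul, Real.sqrt_zero, mul_zero, add_zero] at this ⊢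
    linarith
  | succ n ih =>
    have hle : √(n * η) ≤ √((n + 1 : ℕ) * η) := by
      gcongr
      simp
    have hgain := sq_sub_sq_mul_le hle (hM _) (hB (n + 1) le_rfl)
    rw [hsq, hsq, ← sub_mul, Nat.cast_succ, add_sub_cancel_left, one_mul] at hgain
    have hprev := ih fun k hk => hB k (hk.trans n.le_succ)
    have hnext := hstep (n + 1)
    push_cast at hprev hnext ⊢
    linarith

/-- Otherwise `F' ≤ M / 4 ≤ B / (2 s)` in the variable `s²` as long as `M > D²`, hence for `s` up to
at most `2 B / D²`, so that `F` never exceeds `2 B² / D² < J`. -/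
theorem exists_lt_and_lt_mul_of_increment_le (hD : 0 < D) (hB : 0 ≤ B) (hF : F 0 ≤ 0)
    (hM : ∀ s, 0 ≤ M s)
    (hinc : ∀ s δ s' : ℝ, s ^ 2 + δ ^ 2 = s' ^ 2 → F s' ≤ F s + δ ^ 2 / 4 * M s)
    (hJ : ∀ s, 0 ≤ s → M s ≤ D ^ 2 → J ≤ F s) (hlt : 2 * B ^ 2 < J * D ^ 2) :
    ∃ s, 0 ≤ s ∧ D ^ 2 < M s ∧ B < s * M s / 2 := by
  by_contra! hcon
  have hJ' : 2 * B ^ 2 / D ^ 2 < J := (div_lt_iff₀ (by positivity)).2 hlt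
  have hJ0 : 0 < J := lt_of_le_of_lt (by positivity) hJ'
  have hscale (s : ℝ) (hs : 0 ≤ s) (hMs : D ^ 2 < M s) : s ≤ 2 * B / D ^ 2 := by
    rw [le_div_iff₀ (by positivity)]
    linarith [hcon s hs hMs, mul_le_mul_of_nonneg_left hMs.le hs]
  obtain ⟨η, hη, hηJ⟩ := exists_pos_mul_lt (sub_pos.2 hJ') (M 0 / 4)
  have hex : ∃ n : ℕ, M √(n * η) ≤ D ^ 2 := by
    obtain ⟨n, hn⟩ := exists_nat_gt ((2 * B / D ^ 2) ^ 2 / η)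
    refine ⟨n, le_of_not_gt fun h => (hscale _ (Real.sqrt_nonneg _) h).not_gt ?_⟩
    exact Real.lt_sqrt_of_sq_lt ((div_lt_iff₀ hη).1 hn)
  classical
  rcases hN : Nat.find hex with _ | n
  · have h0 := hJ 0 le_rfl (by
      simpa only [hN, Nat.cast_zero, zero_mul, Real.sqrt_zero] using Nat.find_spec hex)
    linarith
  have hmin (k : ℕ) (hk : k ≤ n) : D ^ 2 < M √(k * η) :=
    not_le.1 (Nat.find_min hex (hN ▸ Nat.lt_succ_of_le hk))
  have hupper := le_add_mul_sqrt_of_increment_le hF hM hinc hη.le n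
    fun k hk => hcon _ (Real.sqrt_nonneg _) (hmin k hk)
  have hlower := hJ _ (Real.sqrt_nonneg _) (hN ▸ Nat.find_spec hex)
  have hend : B * √(n * η) ≤ 2 * B ^ 2 / D ^ 2 := by
    refine (mul_le_mul_of_nonneg_left ?_ hB).trans_eq (by ring : B * (2 * B / D ^ 2) = _)
    exact hscale _ (Real.sqrt_nonneg _) (hmin n le_rfl)
  linarith

end ScaleSelection

section Displacement

variable {T : Type*} [Fintype T] {m : T → ℝ} {c : T → T → ℝ}

lemma IsSelfCoupling.sum_mul_sum_condKernel_mul (hc : IsSelfCoupling m c) (hm : ∀ v, m v ≠ 0)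
    (f : T → ℝ) : ∑ v, m v * ∑ w, condKernel m c v w * f w = ∑ w, m w * f w := by
  simp only [Finset.mul_sum, ← mul_assoc, mul_condKernel (hm _)]
  rw [Finset.sum_comm]
  simp only [← Finset.sum_mul, hc.sum_left]

lemma norm_sub_sq_le_add {E : Type*} [SeminormedAddCommGroup E] (x y z : E) {σ ρ : ℝ} (hσ : 0 < σ)
    (hρ : 0 < ρ) :
    ‖x - z‖ ^ 2 ≤ (1 + ρ / σ) * ‖x - y‖ ^ 2 + (1 + σ / ρ) * ‖y - z‖ ^ 2 := by
  have htriangle : ‖x - z‖ ^ 2 ≤ (‖x - y‖ + ‖y - z‖) ^ 2 := by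
    gcongr
    exact norm_sub_le_norm_sub_add_norm_sub x y z
  have hnonneg : 0 ≤ 1 / (ρ * σ) * (ρ * ‖x - y‖ - σ * ‖y - z‖) ^ 2 := by positivity
  have hsq : 1 / (ρ * σ) * (ρ * ‖x - y‖ - σ * ‖y - z‖) ^ 2 =
      ρ / σ * ‖x - y‖ ^ 2 + σ / ρ * ‖y - z‖ ^ 2 - 2 * ‖x - y‖ * ‖y - z‖ := by
    field_simp
    ring
  linarith

variable {E : Type*} [NormedAddCommGroup E] {φ : T → E}

lemma sum_mul_norm_sub_sq_le {l : T → ℝ} (hl : l ∈ stdSimplex ℝ T) (v w : T) {σ ρ : ℝ}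
    (hσ : 0 < σ) (hρ : 0 < ρ) :
    ∑ z, l z * ‖φ v - φ z‖ ^ 2 ≤
      (1 + ρ / σ) * ‖φ v - φ w‖ ^ 2 + (1 + σ / ρ) * ∑ z, l z * ‖φ w - φ z‖ ^ 2 := by
  calc ∑ z, l z * ‖φ v - φ z‖ ^ 2
      ≤ ∑ z, l z * ((1 + ρ / σ) * ‖φ v - φ w‖ ^ 2 + (1 + σ / ρ) * ‖φ w - φ z‖ ^ 2) :=
        Finset.sum_le_sum fun z _ =>
          mul_le_mul_of_nonneg_left (norm_sub_sq_le_add _ _ _ hσ hρ) (hl.1 z)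
    _ = _ := by
        simp only [mul_add, Finset.sum_add_distrib]
        rw [← Finset.sum_mul, hl.2, one_mul, Finset.mul_sum]
        simp only [mul_left_comm]

/-- Minkowski's inequality in `L²` for the composition of two kernels. -/
lemma IsSelfCoupling.sum_comp_mul_norm_sub_sq_le (hc : IsSelfCoupling m c) (hm : ∀ v, m v ≠ 0)
    {L : T → T → ℝ} (hL : ∀ w, L w ∈ stdSimplex ℝ T) {σ ρ : ℝ} (hσ : 0 < σ) (hρ : 0 < ρ)
    (hcost : couplingCost φ c ≤ σ ^ 2) (hdisp : ∑ w, m w * ∑ z, L w z * ‖φ w - φ z‖ ^ 2 ≤ ρ ^ 2) :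
    ∑ v, m v * ∑ z, (∑ w, condKernel m c v w * L w z) * ‖φ v - φ z‖ ^ 2 ≤ (σ + ρ) ^ 2 := by
  calc ∑ v, m v * ∑ z, (∑ w, condKernel m c v w * L w z) * ‖φ v - φ z‖ ^ 2
      = ∑ v, ∑ w, c v w * ∑ z, L w z * ‖φ v - φ z‖ ^ 2 := by
        refine Finset.sum_congr rfl fun v _ => ?_
        simp only [Finset.sum_mul, Finset.mul_sum, ← mul_assoc, mul_condKernel (hm v)]
        exact Finset.sum_comm
    _ ≤ ∑ v, ∑ w, c v w *
          ((1 + ρ / σ) * ‖φ v - φ w‖ ^ 2 + (1 + σ / ρ) * ∑ z, L w z * ‖φ w - φ z‖ ^ 2) :=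
        Finset.sum_le_sum fun v _ => Finset.sum_le_sum fun w _ =>
          mul_le_mul_of_nonneg_left (sum_mul_norm_sub_sq_le (hL w) v w hσ hρ) (hc.nonneg v w)
    _ = (1 + ρ / σ) * couplingCost φ c +
          (1 + σ / ρ) * ∑ w, m w * ∑ z, L w z * ‖φ w - φ z‖ ^ 2 := by
        simp only [mul_add, Finset.sum_add_distrib, mul_left_comm (c _ _) (1 + _), ← Finset.mul_sum]
        congr 2
        rw [Finset.sum_comm]
        simp only [← Finset.sum_mul, hc.sum_left]
    _ ≤ (1 + ρ / σ) * σ ^ 2 + (1 + σ / ρ) * ρ ^ 2 := by gcongr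
    _ = (σ + ρ) ^ 2 := by
        field_simp
        ring

end Displacement

section Transport

variable {T E : Type*} [Fintype T] [NormedAddCommGroup E] {γ : Measure (T → ℝ)} {φ : T → E}
  {m : T → ℝ} {c : T → T → ℝ} {p : T → (T → ℝ) → T → ℝ} {ρ : ℝ}

/-- A family of selection rules that moves an index `W ∼ m` to an index with the same law `m`, at
mean squared distance at most `ρ²` from `W`. -/
structure IsTransport (γ : Measure (T → ℝ)) (φ : T → E) (m : T → ℝ) (ρ : ℝ)
    (p : T → (T → ℝ) → T → ℝ) : Prop where
  isSelectionRule : ∀ w, IsSelectionRule (p w)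
  sum_selectionLaw : ∀ z, ∑ w, m w * selectionLaw γ (p w) z = m z
  sum_displacement_le : ∑ w, m w * ∑ z, selectionLaw γ (p w) z * ‖φ w - φ z‖ ^ 2 ≤ ρ ^ 2

lemma IsTransport.mono (hp : IsTransport γ φ m ρ p) (hρ : 0 ≤ ρ) {ρ' : ℝ} (h : ρ ≤ ρ') :
    IsTransport γ φ m ρ' p :=
  { hp with sum_displacement_le := hp.sum_displacement_le.trans (pow_le_pow_left₀ hρ h 2) }

/-- The mean value `E[X_Z]` of the index `Z` to which the family `p` moves `W ∼ m`. -/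
def transportValue (γ : Measure (T → ℝ)) (m : T → ℝ) (p : T → (T → ℝ) → T → ℝ) : ℝ :=
  ∑ w, m w * selectionValue γ (p w)

/-- Every value below `V` is attained by transports of displacement at most `ρ`. -/
def IsAchievable (γ : Measure (T → ℝ)) (φ : T → E) (m : T → ℝ) (V ρ : ℝ) : Prop :=
  ∀ V' < V, ∃ p, IsTransport γ φ m ρ p ∧ V' ≤ transportValue γ m p

lemma replicaDistortion_nonneg (γ : Measure (T → ℝ)) (φ : T → E) (s : ℝ) {q : T → ℝ}
    (hq : q ∈ stdSimplex ℝ T) : 0 ≤ replicaDistortion γ φ s q :=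
  Finset.sum_nonneg fun w _ => Finset.sum_nonneg fun u _ => mul_nonneg
    (mul_nonneg (mul_nonneg (hq.1 w) (hq.1 u)) (replicaDensity_nonneg γ hq φ s w u)) (by positivity)

lemma two_mul_sq_lt_of_lt {D x y B : ℝ} (hx : 0 ≤ x) (hy : 0 ≤ y) (hxy : y ≤ x) (hB : 0 ≤ B)
    (hlt : B < D * (√x - √y) / √2) : 2 * B ^ 2 < (x - y) * D ^ 2 := by
  have hsq : (D * (√x - √y) / √2) ^ 2 = D ^ 2 * (√x - √y) ^ 2 / 2 := by
    rw [div_pow, mul_pow, Real.sq_sqrt zero_le_two]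
  have hsub : (√x - √y) ^ 2 ≤ x - y := by
    nlinarith [Real.sq_sqrt hx, Real.sq_sqrt hy, Real.sqrt_nonneg y, Real.sqrt_le_sqrt hxy]
  have hpow := pow_lt_pow_left₀ hlt hB two_ne_zero
  linarith [mul_le_mul_of_nonneg_left hsub (sq_nonneg D)]

/-- Young's inequality is applied with the weight `D / ρ`. -/
lemma mul_one_sub_le_mul_sub {B D M s : ℝ} (hρ : 0 < ρ) (hD : 2 * ρ ≤ D) (hs : 0 ≤ s)
    (hM : D ^ 2 ≤ M) (hB : B ≤ s * M / 2) :
    B * (1 - 2 * ρ / D) ≤ s * (M / 2 - (D / ρ / 2 * ρ ^ 2 + 1 / (2 * (D / ρ)) * M)) := by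
  have hD0 : 0 < D := by linarith
  calc B * (1 - 2 * ρ / D) ≤ s * M / 2 * (1 - 2 * ρ / D) :=
        mul_le_mul_of_nonneg_right hB (sub_nonneg.2 ((div_le_one hD0).2 hD))
    _ = s * (M / 2 - (ρ / (2 * D) * M + ρ / (2 * D) * M)) := by
        field_simp
        ring
    _ ≤ s * (M / 2 - (ρ / (2 * D) * D ^ 2 + ρ / (2 * D) * M)) := by gcongr
    _ = s * (M / 2 - (D / ρ / 2 * ρ ^ 2 + 1 / (2 * (D / ρ)) * M)) := by
        field_simp

variable [InnerProductSpace ℝ E]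

namespace IsGaussianVector

lemma isTransport_channelRule (h : IsGaussianVector γ φ) (hm : ∀ v, 0 < m v)
    (hp : IsTransport γ φ m ρ p) (hρ : 0 < ρ) (hc : IsSelfCoupling m c) {σ : ℝ} (hσ : 0 < σ)
    (hcost : couplingCost φ c ≤ σ ^ 2) (s : ℝ) :
    IsTransport γ φ m (σ + ρ) fun v => channelRule φ s (condKernel m c v) p where
  isSelectionRule v := isSelectionRule_channelRule hp.isSelectionRule
    (hc.condKernel_mem_stdSimplex (hm v)) φ s
  sum_selectionLaw z := by
    simp only [h.selectionLaw_channelRule hp.isSelectionRule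
      (hc.condKernel_mem_stdSimplex (hm _))]
    rw [hc.sum_mul_sum_condKernel_mul (fun v => (hm v).ne'), hp.sum_selectionLaw]
  sum_displacement_le := by
    simp only [h.selectionLaw_channelRule hp.isSelectionRule
      (hc.condKernel_mem_stdSimplex (hm _))]
    exact hc.sum_comp_mul_norm_sub_sq_le (fun v => (hm v).ne')
      (fun w => selectionLaw_mem_stdSimplex h (hp.isSelectionRule w)) hσ hρ hcost
      hp.sum_displacement_le

lemma add_le_transportValue_channelRule (h : IsGaussianVector γ φ) (hm : ∀ v, 0 < m v)
    (hp : IsTransport γ φ m ρ p) (hc : IsSelfCoupling m c) {s a : ℝ} (hs : 0 ≤ s) (ha : 0 < a) :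
    transportValue γ m p + s * ((∑ v, m v * replicaDistortion γ φ s (condKernel m c v)) / 2 -
        (a / 2 * ρ ^ 2 + 1 / (2 * a) * ∑ v, m v * replicaDistortion γ φ s (condKernel m c v))) ≤
      transportValue γ m fun v => channelRule φ s (condKernel m c v) p := by
  have hm' (v : T) : m v ≠ 0 := (hm v).ne'
  refine le_trans ?_ (Finset.sum_le_sum fun v _ => mul_le_mul_of_nonneg_left
    (h.add_le_selectionValue_channelRule hp.isSelectionRule
      (hc.condKernel_mem_stdSimplex (hm v)) hs ha) (hm v).le)
  simp only [mul_add, mul_sub, Finset.sum_add_distrib, Finset.sum_sub_distrib]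
  simp only [mul_left_comm (m _) s, mul_left_comm (m _) (a / 2), mul_left_comm (m _) (1 / (2 * a)),
    ← mul_div_assoc, ← Finset.mul_sum, ← Finset.sum_div, hc.sum_mul_sum_condKernel_mul hm']
  rw [transportValue]
  gcongr
  exact hp.sum_displacement_le

lemma exists_coupling_lt_replicaDistortion (h : IsGaussianVector γ φ) (hm : m ∈ stdSimplex ℝ T)
    (hm0 : ∀ v, 0 < m v) {D σ B : ℝ} (hD : 0 < D) (hB : 0 ≤ B)
    (hlt : 2 * B ^ 2 < (finiteISelf φ m D - finiteISelf φ m σ) * D ^ 2) :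
    ∃ c, IsSelfCoupling m c ∧ couplingCost φ c ≤ σ ^ 2 ∧ ∃ s, 0 ≤ s ∧
      D ^ 2 < ∑ v, m v * replicaDistortion γ φ s (condKernel m c v) ∧
      B < s * (∑ v, m v * replicaDistortion γ φ s (condKernel m c v)) / 2 := by
  rw [← div_lt_iff₀ (by positivity)] at hlt
  obtain ⟨c, hc, hcost, hinfo⟩ : ∃ c, IsSelfCoupling m c ∧ couplingCost φ c ≤ σ ^ 2 ∧
      couplingInfo m c < finiteISelf φ m D - 2 * B ^ 2 / D ^ 2 := by
    by_contra! hcon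
    linarith [le_finiteISelf hm hcon]
  refine ⟨c, hc, hcost, exists_lt_and_lt_mul_of_increment_le hD hB
    (M := fun s => ∑ v, m v * replicaDistortion γ φ s (condKernel m c v))
    (F := fun s => ∑ v, m v * channelInfo γ φ s (condKernel m c v))
    (J := finiteISelf φ m D - couplingInfo m c) ?_ ?_ ?_ ?_ ?_⟩
  · simp [fun v => channelInfo_zero γ (hc.condKernel_mem_stdSimplex (hm0 v)) φ]
  · exact fun s => Finset.sum_nonneg fun v _ => mul_nonneg (hm.1 v)
      (replicaDistortion_nonneg γ φ s (hc.condKernel_mem_stdSimplex (hm0 v)))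
  · intro s δ s' hs
    rw [Finset.mul_sum, ← Finset.sum_add_distrib]
    refine Finset.sum_le_sum fun v _ => ?_
    have := mul_le_mul_of_nonneg_left (h.channelInfo_le_add_replicaDistortion
      (hc.condKernel_mem_stdSimplex (hm0 v)) hs) (hm.1 v)
    linarith
  · intro s _ hs
    linarith [h.finiteISelf_le_couplingInfo_add hm hm0 hc hs]
  · rw [← div_lt_iff₀ (by positivity)]
    linarith

lemma exists_isTransport_add_le (h : IsGaussianVector γ φ) (hm : m ∈ stdSimplex ℝ T)
    (hm0 : ∀ v, 0 < m v) (hp : IsTransport γ φ m ρ p) (hρ : 0 < ρ) {D σ B : ℝ} (hρD : 2 * ρ ≤ D)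
    (hσ : 0 < σ) (hlt : 0 < B → 2 * B ^ 2 < (finiteISelf φ m D - finiteISelf φ m σ) * D ^ 2) :
    ∃ p', IsTransport γ φ m (σ + ρ) p' ∧
      transportValue γ m p + B * (1 - 2 * ρ / D) ≤ transportValue γ m p' := by
  have hD : 0 < D := by linarith
  rcases le_or_gt B 0 with hB | hB
  · refine ⟨p, hp.mono hρ.le (by linarith), add_le_of_nonpos_right ?_⟩
    exact mul_nonpos_of_nonpos_of_nonneg hB (sub_nonneg.2 ((div_le_one hD).2 hρD))
  · obtain ⟨c, hc, hcost, s, hs, hM, hgain⟩ :=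
      h.exists_coupling_lt_replicaDistortion hm hm0 hD hB.le (hlt hB)
    refine ⟨_, h.isTransport_channelRule hm0 hp hρ hc hσ hcost s, le_trans ?_
      (h.add_le_transportValue_channelRule hm0 hp hc hs (div_pos hD hρ))⟩
    exact add_le_add le_rfl (mul_one_sub_le_mul_sub hρ hρD hs hM.le hgain.le)

lemma isAchievable_zero (h : IsGaussianVector γ φ) (m : T → ℝ) (ρ : ℝ) :
    IsAchievable γ φ m 0 ρ := by
  classical
  have := h.isProbabilityMeasure
  have hlaw (w z : T) :
      selectionLaw γ (fun _ z => if w = z then 1 else 0) z = if w = z then 1 else 0 := by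
    simp [selectionLaw]
  refine fun V' hV' => ⟨fun w _ z => if w = z then 1 else 0, ⟨fun w => ?_, fun z => ?_, ?_⟩, ?_⟩
  · refine ⟨fun z => measurable_const, fun _ => ⟨fun z => ?_, by simp⟩⟩
    dsimp only
    split_ifs <;> simp
  · simp [hlaw]
  · simp [hlaw, sq_nonneg]
  · simp only [transportValue, selectionValue, integral_const_mul, h.integral_coord, mul_zero,
      Finset.sum_const_zero, hV'.le]

lemma isAchievable_step (h : IsGaussianVector γ φ) (hm : m ∈ stdSimplex ℝ T) (hm0 : ∀ v, 0 < m v)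
    {V D σ : ℝ} (hA : IsAchievable γ φ m V ρ) (hρ : 0 < ρ) (hρD : 2 * ρ ≤ D) (hDσ : D ≤ σ) :
    IsAchievable γ φ m
      (V + D * (√(finiteISelf φ m D) - √(finiteISelf φ m σ)) / √2 * (1 - 2 * ρ / D)) (σ + ρ) := by
  intro V' hV'
  have hD : 0 < D := by linarith
  have hfactor : 1 - 2 * ρ / D ≤ 1 := sub_le_self _ (by positivity)
  set G := D * (√(finiteISelf φ m D) - √(finiteISelf φ m σ)) / √2
  set ε := V + G * (1 - 2 * ρ / D) - V' with hε
  have hε0 : 0 < ε := sub_pos.2 hV'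
  obtain ⟨p, hp, hV⟩ := hA (V - ε / 2) (by linarith)
  obtain ⟨p', hp', hV'⟩ := h.exists_isTransport_add_le hm hm0 hp hρ hρD (hD.trans_le hDσ)
    (B := G - ε / 2) fun hB => two_mul_sq_lt_of_lt (finiteISelf_nonneg hm φ D)
      (finiteISelf_nonneg hm φ σ) (antitoneOn_finiteISelf hm φ hD.le (hD.le.trans hDσ) hDσ) hB.le
      (sub_lt_self G (half_pos hε0))
  refine ⟨p', hp', le_trans ?_ hV'⟩
  nlinarith [hε]

/-- `κ D / (1 - r)` is the sum of the displacements `κ D rᵏ` of the steps at the scales `D rᵏ`. -/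
lemma isAchievable_sum_range (h : IsGaussianVector γ φ) (hm : m ∈ stdSimplex ℝ T)
    (hm0 : ∀ v, 0 < m v) {r κ : ℝ} (hr : 0 < r) (hr1 : r < 1) (hκ : 1 ≤ κ)
    (hrκ : 2 * (κ * r / (1 - r)) ≤ 1) (n : ℕ) {D : ℝ} (hD : 0 < D) :
    IsAchievable γ φ m (∑ k ∈ Finset.range n, D * r ^ k *
        (√(finiteISelf φ m (D * r ^ k)) - √(finiteISelf φ m (κ * (D * r ^ k)))) / √2 *
          (1 - 2 * (κ * r / (1 - r)))) (κ * D / (1 - r)) := by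
  have hr1' : 0 < 1 - r := sub_pos.2 hr1
  have hκ0 : 0 < κ := one_pos.trans_le hκ
  induction n generalizing D with
  | zero => simpa using h.isAchievable_zero m (κ * D / (1 - r))
  | succ n ih =>
    have hratio : κ * (D * r) / (1 - r) = κ * r / (1 - r) * D := by ring
    have hstep := h.isAchievable_step hm hm0 (D := D) (σ := κ * D) (ih (mul_pos hD hr))
      (div_pos (mul_pos hκ0 (mul_pos hD hr)) hr1') (by rw [hratio]; nlinarith)
      (le_mul_of_one_le_left hD.le hκ)
    rw [Finset.sum_range_succ']
    convert hstep using 2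
    · simp only [pow_succ', mul_assoc]
    · rw [hratio]
      simp only [pow_zero, mul_one]
      field_simp
    · field_simp
      ring

lemma le_of_isAchievable (h : IsGaussianVector γ φ) (hm : m ∈ stdSimplex ℝ T) {W : ℝ}
    (hW : ∀ p, IsSelectionRule p → (∀ z, selectionLaw γ p z = m z) → selectionValue γ p ≤ W)
    {V : ℝ} (hV : IsAchievable γ φ m V ρ) : V ≤ W := by
  refine le_of_forall_lt_imp_le_of_dense fun V' hV' => ?_
  obtain ⟨p, hp, hVp⟩ := hV V' hV'
  have hvalue := h.add_le_selectionValue_channelRule hp.isSelectionRule hm le_rfl one_pos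
  rw [zero_mul, add_zero] at hvalue
  refine hVp.trans (hvalue.trans (hW _ (isSelectionRule_channelRule hp.isSelectionRule hm φ 0) ?_))
  intro z
  rw [h.selectionLaw_channelRule hp.isSelectionRule hm, hp.sum_selectionLaw]

end IsGaussianVector

end Transport

section Scales

variable {h : ℝ → ℝ} {r R W : ℝ}

lemma integral_scaled_eq (u : ℝ → ℝ) (R r : ℝ) (k : ℕ) :
    ∫ D in (R * r)..R, r ^ k * u (D * r ^ k) = ∫ t in (R * r ^ (k + 1))..(R * r ^ k), u t := by
  rw [intervalIntegral.integral_const_mul, intervalIntegral.mul_integral_comp_mul_right, mul_assoc,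
    ← pow_succ']

lemma intervalIntegrable_of_antitoneOn_Ici (hh : AntitoneOn h (Ici 0)) {a b : ℝ} (ha : 0 ≤ a)
    (hb : 0 ≤ b) : IntervalIntegrable h volume a b :=
  (hh.mono fun _ hx => (le_min ha hb).trans hx.1).intervalIntegrable

lemma sum_integral_scaled_eq {u : ℝ → ℝ}
    (hu : ∀ a b, 0 ≤ a → 0 ≤ b → IntervalIntegrable u volume a b) (hr : 0 ≤ r) (hR : 0 ≤ R)
    (n : ℕ) :
    ∑ k ∈ Finset.range n, ∫ D in (R * r)..R, r ^ k * u (D * r ^ k) =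
      ∫ t in (R * r ^ n)..R, u t := by
  have hadj := intervalIntegral.sum_integral_adjacent_intervals (f := u) (μ := volume)
    (a := fun k : ℕ => R * r ^ k) (n := n)
    fun k _ => hu _ _ (mul_nonneg hR (pow_nonneg hr _)) (mul_nonneg hR (pow_nonneg hr _))
  rw [pow_zero, mul_one] at hadj
  rw [intervalIntegral.integral_symm R, ← hadj, ← Finset.sum_neg_distrib]
  refine Finset.sum_congr rfl fun k _ => ?_
  rw [integral_scaled_eq, intervalIntegral.integral_symm]

/-- Average the sums over the scales `D rᵏ` against `dD / D` on one period `[R r, R]`. -/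
lemma integral_le_mul_log_of_sum_scaled_le {u : ℝ → ℝ}
    (hu : ∀ a b, 0 ≤ a → 0 ≤ b → IntervalIntegrable u volume a b) (hr : 0 < r) (hr1 : r ≤ 1)
    (hR : 0 < R) (n : ℕ)
    (hW : ∀ D, 0 < D → ∑ k ∈ Finset.range n, D * r ^ k * u (D * r ^ k) ≤ W) :
    ∫ t in (R * r ^ n)..R, u t ≤ W * Real.log r⁻¹ := by
  have hRr : 0 < R * r := mul_pos hR hr
  have hRr1 : R * r ≤ R := mul_le_of_le_one_right hR.le hr1
  have hpos : ∀ D ∈ Icc (R * r) R, 0 < D := fun D hD => hRr.trans_le hD.1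
  have hscaled (k : ℕ) :
      IntervalIntegrable (fun D => r ^ k * u (D * r ^ k)) volume (R * r) R := by
    have hk : r ^ k ≠ 0 := (pow_pos hr k).ne'
    have hcomp := (hu (R * r * r ^ k) (R * r ^ k) (by positivity) (by positivity)).comp_mul_right
      (c := r ^ k)
    rw [mul_div_cancel_right₀ _ hk, mul_div_cancel_right₀ _ hk] at hcomp
    exact hcomp.const_mul _
  have hlog : ∫ D in (R * r)..R, W * D⁻¹ = W * Real.log r⁻¹ := by
    rw [intervalIntegral.integral_const_mul, integral_inv_of_pos hRr hR,
      div_mul_cancel_left₀ hR.ne']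
  rw [← sum_integral_scaled_eq hu hr.le hR.le, ← hlog,
    ← intervalIntegral.integral_finsetSum fun k _ => hscaled k]
  refine intervalIntegral.integral_mono_on hRr1 ?_ ?_ fun D hD => ?_
  · simpa only [Finset.sum_fn] using IntervalIntegrable.sum (Finset.range n) fun k _ => hscaled k
  · refine (intervalIntegral.intervalIntegrable_inv (fun x hx => ?_) continuousOn_id).const_mul W
    exact (hpos x (uIcc_of_le hRr1 ▸ hx)).ne'
  · rw [← div_eq_mul_inv, le_div_iff₀ (hpos D hD), Finset.sum_mul]
    refine le_of_eq_of_le (Finset.sum_congr rfl fun k _ => ?_) (hW D (hpos D hD))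
    ring

lemma integral_zero_le_mul_log_of_sum_scaled_le {u : ℝ → ℝ}
    (hu : ∀ a b, 0 ≤ a → 0 ≤ b → IntervalIntegrable u volume a b) (hr : 0 < r) (hr1 : r < 1)
    (hR : 0 < R)
    (hW : ∀ (n : ℕ) (D : ℝ), 0 < D → ∑ k ∈ Finset.range n, D * r ^ k * u (D * r ^ k) ≤ W) :
    ∫ t in (0 : ℝ)..R, u t ≤ W * Real.log r⁻¹ := by
  have hcont : ContinuousOn (fun a => ∫ t in a..R, u t) (uIcc 0 R) :=
    intervalIntegral.continuousOn_primitive_interval_left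
      ((intervalIntegrable_iff' (by finiteness)).1 (hu 0 R le_rfl hR.le))
  have hscale : Filter.Tendsto (fun n : ℕ => R * r ^ n) Filter.atTop
      (nhdsWithin 0 (uIcc 0 R)) := by
    refine tendsto_nhdsWithin_iff.2 ⟨?_, Filter.Eventually.of_forall fun n => ?_⟩
    · simpa using (tendsto_pow_atTop_nhds_zero_of_lt_one hr.le hr1).const_mul R
    · rw [uIcc_of_le hR.le]
      exact ⟨by positivity, mul_le_of_le_one_right hR.le (pow_le_one₀ hr.le hr1.le)⟩
  exact le_of_tendsto ((hcont 0 left_mem_uIcc).tendsto.comp hscale) <|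
    Filter.Eventually.of_forall fun n =>
      integral_le_mul_log_of_sum_scaled_le hu hr hr1.le hR n (hW n)

lemma one_sub_inv_mul_integral_Ioi_le_mul_log {κ : ℝ} (hh : AntitoneOn h (Ici 0)) (hR : 0 < R)
    (hzero : ∀ t, R ≤ t → h t = 0) (hκ : 1 ≤ κ) (hr : 0 < r) (hr1 : r < 1)
    (hW : ∀ (n : ℕ) (D : ℝ), 0 < D →
      ∑ k ∈ Finset.range n, D * r ^ k * (h (D * r ^ k) - h (κ * (D * r ^ k))) ≤ W) :
    (1 - κ⁻¹) * ∫ t in Ioi (0 : ℝ), h t ≤ W * Real.log r⁻¹ := by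
  have hκ0 : 0 < κ := one_pos.trans_le hκ
  have hint {S : ℝ} (hS : R ≤ S) : ∫ t in (0 : ℝ)..S, h t = ∫ t in Ioi (0 : ℝ), h t := by
    rw [intervalIntegral.integral_of_le (hR.le.trans hS)]
    refine (setIntegral_eq_of_subset_of_forall_sdiff_eq_zero measurableSet_Ioi Ioc_subset_Ioi_self
      fun x hx => hzero x (hS.trans ?_)).symm
    exact (lt_of_not_ge fun hxS => hx.2 ⟨hx.1, hxS⟩).le
  have hhκ : AntitoneOn (fun t => h (κ * t)) (Ici 0) := fun x hx y hy hxy =>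
    hh (mul_nonneg hκ0.le hx) (mul_nonneg hκ0.le hy) (mul_le_mul_of_nonneg_left hxy hκ0.le)
  have hii {g : ℝ → ℝ} (hg : AntitoneOn g (Ici 0)) (a b : ℝ) (ha : 0 ≤ a) (hb : 0 ≤ b) :=
    intervalIntegrable_of_antitoneOn_Ici hg ha hb
  have hdiff := integral_zero_le_mul_log_of_sum_scaled_le (u := fun t => h t - h (κ * t))
    (fun a b ha hb => (hii hh a b ha hb).sub (hii hhκ a b ha hb)) hr hr1 hR hW
  rw [intervalIntegral.integral_sub (hii hh 0 R le_rfl hR.le) (hii hhκ 0 R le_rfl hR.le),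
    intervalIntegral.integral_comp_mul_left _ hκ0.ne', mul_zero, hint le_rfl,
    hint (le_mul_of_one_le_left hR.le hκ), smul_eq_mul] at hdiff
  linarith

end Scales

section FiniteIndex

variable {T : Type*} [Fintype T] {E : Type*} [NormedAddCommGroup E] [InnerProductSpace ℝ E]
  {γ : Measure (T → ℝ)} {φ : T → E} {m : T → ℝ} {τ W : ℝ}

lemma log_four_div_pos (hτ : τ ∈ Ioo (0 : ℝ) (4 / 5)) : 0 < Real.log (4 / τ) :=
  Real.log_pos ((one_lt_div hτ.1).2 (by linarith [hτ.2]))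

lemma cRD_nonneg : 0 ≤ cRD := by
  refine Real.sSup_nonneg ?_
  rintro x ⟨τ, hτ, rfl⟩
  have h4 : 0 ≤ 4 - τ := by linarith [hτ.2]
  exact div_nonneg (by linarith [hτ.2]) (mul_nonneg (by positivity) (log_four_div_pos hτ).le)

lemma cRD_mul_le {x : ℝ} (hx : 0 ≤ x) (h : ∀ τ ∈ Ioo (0 : ℝ) (4 / 5),
    (4 - 5 * τ) / (2 * √2 * (4 - τ) * Real.log (4 / τ)) * x ≤ W) : cRD * x ≤ W := by
  have hhalf : (1 / 2 : ℝ) ∈ Ioo (0 : ℝ) (4 / 5) := by norm_num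
  rcases hx.eq_or_lt with rfl | hx
  · simpa using h _ hhalf
  · rw [← le_div_iff₀ hx]
    refine csSup_le ⟨_, 1 / 2, hhalf, rfl⟩ ?_
    rintro _ ⟨τ, hτ, rfl⟩
    exact (le_div_iff₀ hx).2 (h τ hτ)

/-- The ratio `τ / 4` of consecutive scales and the dilation `2` reproduce the expression whose
supremum over `τ` is `cRD`. -/
lemma IsGaussianVector.mul_integral_sqrt_finiteISelf_le (h : IsGaussianVector γ φ)
    (hm : m ∈ stdSimplex ℝ T) (hm0 : ∀ v, 0 < m v)
    (hW : ∀ p, IsSelectionRule p → (∀ z, selectionLaw γ p z = m z) → selectionValue γ p ≤ W)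
    (hτ : τ ∈ Ioo (0 : ℝ) (4 / 5)) :
    (4 - 5 * τ) / (2 * √2 * (4 - τ) * Real.log (4 / τ)) *
      ∫ t in Ioi (0 : ℝ), √(finiteISelf φ m t) ≤ W := by
  obtain ⟨R, hR, hzero⟩ := exists_finiteISelf_eq_zero hm φ
  have h4 : 0 < 4 - τ := by linarith [hτ.2]
  have hloss : 1 - 2 * (2 * (τ / 4) / (1 - τ / 4)) = (4 - 5 * τ) / (4 - τ) := by
    have : 1 - τ / 4 ≠ 0 := by linarith
    field_simp
    ring
  set A := (4 - 5 * τ) / (4 - τ) / √2 with hA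
  have hA0 : 0 ≤ (4 - 5 * τ) / (4 - τ) := div_nonneg (by linarith [hτ.2]) h4.le
  have hr : 0 < τ / 4 := by linarith [hτ.1]
  have hr1 : τ / 4 < 1 := by linarith
  have hscales := one_sub_inv_mul_integral_Ioi_le_mul_log (κ := 2) (r := τ / 4) (W := W)
    (h := fun t => A * √(finiteISelf φ m t)) (fun s hs t ht hst => mul_le_mul_of_nonneg_left
      (Real.sqrt_le_sqrt (antitoneOn_finiteISelf hm φ hs ht hst)) (by positivity)) hR
    (fun t ht => by simp [hzero t ht]) one_le_two hr hr1 fun n D hD => by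
      refine le_of_eq_of_le (Finset.sum_congr rfl fun k _ => ?_) <| h.le_of_isAchievable hm hW
        (h.isAchievable_sum_range hm hm0 hr hr1 one_le_two (by linarith) n hD)
      rw [hloss, hA]
      ring
  rw [integral_const_mul, inv_div] at hscales
  have hsplit : (4 - 5 * τ) / (2 * √2 * (4 - τ) * Real.log (4 / τ)) =
      (1 - 2⁻¹) * A / Real.log (4 / τ) := by
    rw [hA]
    field_simp
    ring
  rw [hsplit, div_mul_eq_mul_div, div_le_iff₀ (log_four_div_pos hτ), mul_assoc]
  exact hscales

lemma IsGaussianVector.cRD_mul_integral_sqrt_finiteISelf_le (h : IsGaussianVector γ φ)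
    (hm : m ∈ stdSimplex ℝ T) (hm0 : ∀ v, 0 < m v)
    (hW : ∀ p, IsSelectionRule p → (∀ z, selectionLaw γ p z = m z) → selectionValue γ p ≤ W) :
    cRD * ∫ t in Ioi (0 : ℝ), √(finiteISelf φ m t) ≤ W :=
  cRD_mul_le (integral_nonneg fun _ => Real.sqrt_nonneg _)
    fun _ => h.mul_integral_sqrt_finiteISelf_le hm hm0 hW

end FiniteIndex

section L2

variable {Ω : Type*} [MeasurableSpace Ω] {P : Measure Ω}

lemma toLp_finsetSum_smul {ι : Type*} (s : Finset ι) {f : ι → Ω → ℝ} (hf : ∀ i, MemLp (f i) 2 P)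
    (c : ι → ℝ) :
    ∑ i ∈ s, c i • (hf i).toLp (f i) =
      (memLp_finsetSum s fun i _ => (hf i).const_mul (c i)).toLp
        (fun ω => ∑ i ∈ s, c i * f i ω) := by
  induction s using Finset.cons_induction with
  | empty => simp; rfl
  | cons i s hi ih =>
    simp only [Finset.sum_cons, ih]
    rfl

lemma norm_toLp_sq {f : Ω → ℝ} (hf : MemLp f 2 P) : ‖hf.toLp f‖ ^ 2 = ∫ ω, f ω ^ 2 ∂P := by
  rw [← real_inner_self_eq_norm_sq, L2.inner_def]
  refine integral_congr_ae ?_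
  filter_upwards [hf.coeFn_toLp] with ω hω
  rw [hω, real_inner_self_eq_norm_sq, Real.norm_eq_abs, sq_abs]

end L2

section GaussianReal

variable {Ω : Type*} [MeasurableSpace Ω] {P : Measure Ω} {Y : Ω → ℝ} {v : NNReal}

lemma integral_sq_of_map_eq_gaussianReal (h : P.map Y = gaussianReal 0 v) :
    ∫ ω, Y ω ^ 2 ∂P = v := by
  have hY : AEMeasurable Y P := .of_map_ne_zero (by rw [h]; exact IsProbabilityMeasure.ne_zero _)
  have hvar := variance_fun_id_gaussianReal (μ := 0) (v := v)
  rw [variance_of_integral_eq_zero (by fun_prop) integral_id_gaussianReal, ← h,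
    integral_map hY (by fun_prop)] at hvar
  exact hvar

end GaussianReal

namespace IsCenteredGaussianProcess

variable {Ω S T : Type*} [MeasurableSpace Ω] {P : Measure Ω} {X : T → Ω → ℝ}

lemma comp (hX : IsCenteredGaussianProcess P X) (j : S → T) :
    IsCenteredGaussianProcess P (fun s => X (j s)) := by
  intro c
  obtain ⟨v, hv⟩ := hX (c.mapDomain j)
  refine ⟨v, hv ▸ ?_⟩
  congr 1
  ext ω
  rw [Finsupp.sum_mapDomain_index (by simp) (by intros; ring)]

lemma exists_map_eq_gaussianReal (hX : IsCenteredGaussianProcess P X) (t : T) :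
    ∃ v : NNReal, P.map (X t) = gaussianReal 0 v := by
  simpa using hX (Finsupp.single t 1)

lemma hasGaussianLaw (hX : IsCenteredGaussianProcess P X) (t : T) : HasGaussianLaw (X t) P where
  isGaussian_map := by
    obtain ⟨v, hv⟩ := hX.exists_map_eq_gaussianReal t
    rw [hv]
    infer_instance

lemma integral_eq_zero (hX : IsCenteredGaussianProcess P X) (t : T) : ∫ ω, X t ω ∂P = 0 := by
  obtain ⟨v, hv⟩ := hX.exists_map_eq_gaussianReal t
  rw [← integral_id_gaussianReal (μ := 0) (v := v), ← hv,
    integral_map (hX.hasGaussianLaw t).aemeasurable (by fun_prop)]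

/-- The process as a family of vectors in `L²(P)`, whose mutual distances are the natural metric. -/
def toL2 (hX : IsCenteredGaussianProcess P X) (t : T) : Lp ℝ 2 P :=
  (hX.hasGaussianLaw t).memLp_two.toLp (X t)

lemma norm_toL2_sub (hX : IsCenteredGaussianProcess P X) (t t' : T) :
    ‖hX.toL2 t - hX.toL2 t'‖ = √(∫ ω, (X t ω - X t' ω) ^ 2 ∂P) := by
  rw [toL2, toL2, ← MemLp.toLp_sub, ← Real.sqrt_sq (norm_nonneg _), norm_toLp_sq]
  rfl

lemma map_sub_eq_gaussianReal (hX : IsCenteredGaussianProcess P X) (t t' : T) :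
    P.map (fun ω => X t ω - X t' ω) = gaussianReal 0 (‖hX.toL2 t - hX.toL2 t'‖₊ ^ 2) := by
  obtain ⟨v, hv⟩ := hX (Finsupp.single t 1 - Finsupp.single t' 1)
  have hsum (ω : Ω) :
      ((Finsupp.single t (1 : ℝ) - Finsupp.single t' 1).sum fun t a => a * X t ω) =
        X t ω - X t' ω := by
    rw [Finsupp.sum_sub_index fun _ _ _ => sub_mul _ _ _]
    simp
  simp only [hsum] at hv
  rw [hv]
  congr 1
  ext
  rw [← integral_sq_of_map_eq_gaussianReal hv, NNReal.coe_pow, coe_nnnorm, norm_toL2_sub,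
    Real.sq_sqrt (integral_nonneg fun _ => sq_nonneg _)]

variable [Fintype T]

theorem isGaussianVector (hX : IsCenteredGaussianProcess P X) :
    IsGaussianVector (P.map fun ω t => X t ω) hX.toL2 := by
  intro c
  obtain ⟨v, hv⟩ := hX (Finsupp.equivFunOnFinite.symm c)
  have hsum (ω : Ω) : ((Finsupp.equivFunOnFinite.symm c).sum fun t a => a * X t ω) =
      ∑ t, c t * X t ω := Finsupp.sum_fintype _ _ fun _ => zero_mul _
  simp only [hsum] at hv
  have hXm : AEMeasurable (fun ω t => X t ω) P :=
    aemeasurable_pi_lambda _ fun t => (hX.hasGaussianLaw t).aemeasurable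
  rw [AEMeasurable.map_map_of_aemeasurable (measurable_dotProduct c).aemeasurable hXm]
  refine hv.trans (congrArg _ ?_)
  ext
  rw [← integral_sq_of_map_eq_gaussianReal hv, NNReal.coe_pow, coe_nnnorm]
  simp only [toL2]
  rw [toLp_finsetSum_smul, norm_toLp_sq]

end IsCenteredGaussianProcess

section Atomless

/-- The distribution function of `ν`, taking its values in the unit interval: the probability
integral transform. -/
def unitCdf (ν : Measure ℝ) (x : ℝ) : unitInterval := ⟨cdf ν x, cdf_nonneg ν x, cdf_le_one ν x⟩

lemma measurable_unitCdf (ν : Measure ℝ) : Measurable (unitCdf ν) :=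
  (monotone_cdf ν).measurable.subtype_mk

variable (ν : Measure ℝ) [IsProbabilityMeasure ν] [NullSingletonClass ν]

lemma continuous_cdf : Continuous (cdf ν) := by
  refine continuous_iff_continuousAt.2 fun a => ?_
  have hatom := StieltjesFunction.measure_singleton (cdf ν) a
  rw [measure_cdf, measure_singleton] at hatom
  rw [(cdf ν).mono.continuousAt_iff_leftLim_eq_rightLim, StieltjesFunction.rightLim_eq]
  linarith [ENNReal.ofReal_eq_zero.1 hatom.symm, (cdf ν).mono.leftLim_le (le_refl a)]

lemma exists_cdf_eq {u : ℝ} (hu0 : 0 < u) (hu1 : u < 1) : ∃ x, cdf ν x = u := by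
  obtain ⟨a, ha⟩ := ((tendsto_cdf_atBot ν).eventually (gt_mem_nhds hu0)).exists
  obtain ⟨b, hb⟩ := ((tendsto_cdf_atTop ν).eventually (lt_mem_nhds hu1)).exists
  exact mem_range_of_exists_le_of_exists_ge (continuous_cdf ν) ⟨a, ha.le⟩ ⟨b, hb.le⟩

lemma measure_cdf_le_le {u : ℝ} (hu0 : 0 ≤ u) : ν {x | cdf ν x ≤ u} ≤ ENNReal.ofReal u := by
  rcases lt_or_ge u 1 with hu1 | hu1
  · refine ENNReal.le_of_forall_pos_le_add fun ε hε _ => ?_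
    obtain ⟨b, hub, hb⟩ := exists_between (lt_min hu1 (lt_add_of_pos_right u hε))
    obtain ⟨x, hx⟩ := exists_cdf_eq ν (hu0.trans_lt hub) (hb.trans_le (min_le_left _ _))
    have hsub : {y | cdf ν y ≤ u} ⊆ Iic x := fun y hy => by
      by_contra hxy
      exact (hub.trans_le (hx ▸ monotone_cdf ν (not_le.1 hxy).le)).not_ge hy
    calc ν {y | cdf ν y ≤ u} ≤ ν (Iic x) := measure_mono hsub
      _ = ENNReal.ofReal b := by rw [← ofReal_cdf, hx]
      _ ≤ ENNReal.ofReal (u + ε) :=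
        ENNReal.ofReal_le_ofReal (hb.le.trans (min_le_right _ _))
      _ = ENNReal.ofReal u + ε := by
        rw [ENNReal.ofReal_add hu0 ε.coe_nonneg, ENNReal.ofReal_coe_nnreal]
  · exact prob_le_one.trans (ENNReal.one_le_ofReal.2 hu1)

lemma le_measure_cdf_le {u : ℝ} (hu1 : u ≤ 1) : ENNReal.ofReal u ≤ ν {x | cdf ν x ≤ u} := by
  rcases le_or_gt u 0 with hu0 | hu0
  · simp [ENNReal.ofReal_of_nonpos hu0]
  rcases hu1.lt_or_eq with hu1 | rfl
  · obtain ⟨x, hx⟩ := exists_cdf_eq ν hu0 hu1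
    rw [← hx, ofReal_cdf]
    exact measure_mono fun y hy => monotone_cdf ν hy
  · simp [cdf_le_one]

lemma map_unitCdf : ν.map (unitCdf ν) = volume := by
  have hm := measurable_unitCdf ν
  have := Measure.isProbabilityMeasure_map (μ := ν) hm.aemeasurable
  refine Measure.ext_of_Iic _ _ fun u => ?_
  rw [Measure.map_apply hm measurableSet_Iic, unitInterval.volume_Iic]
  exact le_antisymm (measure_cdf_le_le ν u.2.1) (le_measure_cdf_le ν u.2.2)

variable {T : Type*} [MeasurableSpace T] [MeasurableSingletonClass T] [Countable T]

lemma exists_measurable_map_eq_of_atomless (κ : Measure T) [IsProbabilityMeasure κ] :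
    ∃ h : ℝ → T, Measurable h ∧ ν.map h = κ := by
  have : Nonempty T := κ.nonempty_of_neZero
  obtain ⟨f, hf, hfκ⟩ := Measure.exists_measurable_map_eq κ
  have hm := measurable_unitCdf ν
  exact ⟨_, hf.comp hm, by rw [← Measure.map_map hf hm, map_unitCdf ν, hfκ]⟩

end Atomless

section DiscreteCoupling

variable {Ω K T : Type*} [MeasurableSpace Ω] {P : Measure Ω} [IsFiniteMeasure P] {g : Ω → ℝ}
  [MeasurableSpace K] [MeasurableSingletonClass K] [Countable K]
  [MeasurableSpace T] [MeasurableSingletonClass T] [Countable T] [Nonempty T]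

lemma exists_map_restrict_comp_eq (hg : Measurable g) (hg0 : ∀ x, P (g ⁻¹' {x}) = 0) {B : Set Ω}
    {lam : Measure T} (hlam : lam univ = P B) :
    ∃ h : ℝ → T, Measurable h ∧ (P.restrict B).map (h ∘ g) = lam := by
  by_cases hB : P B = 0
  · refine ⟨fun _ => Classical.arbitrary T, measurable_const, ?_⟩
    rw [Measure.restrict_eq_zero.2 hB, Measure.map_zero,
      Measure.measure_univ_eq_zero.1 (hlam.trans hB)]
  have hcond : IsProbabilityMeasure P[|B] := cond_isProbabilityMeasure hB
  have hlaw := Measure.isProbabilityMeasure_map (μ := P[|B]) hg.aemeasurable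
  have hatom : NullSingletonClass (P[|B].map g) := ⟨fun x => by
    rw [Measure.map_apply hg (measurableSet_singleton x)]
    exact cond_absolutelyContinuous (hg0 x)⟩
  have hκ : IsProbabilityMeasure ((P B)⁻¹ • lam) :=
    ⟨by simp [hlam, ENNReal.inv_mul_cancel hB (measure_ne_top P B)]⟩
  obtain ⟨h, hh, hmap⟩ := exists_measurable_map_eq_of_atomless (P[|B].map g) ((P B)⁻¹ • lam)
  refine ⟨h, hh, ?_⟩
  rw [Measure.map_map hh hg, ProbabilityTheory.cond, Measure.map_smul] at hmap
  have hscale := congrArg (P B • ·) hmap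
  simpa [smul_smul, ENNReal.mul_inv_cancel hB (measure_ne_top P B)] using hscale

/-- An atomless random variable `g` is a sufficient source of randomness to extend a discrete
random variable `k` to a pair with a prescribed law. -/
lemma exists_map_prodMk_eq (hg : Measurable g) (hg0 : ∀ x, P (g ⁻¹' {x}) = 0) {k : Ω → K}
    (hk : Measurable k) {J : Measure (K × T)} (hJ : J.fst = P.map k) :
    ∃ Z : Ω → T, Measurable Z ∧ P.map (fun ω => (k ω, Z ω)) = J := by
  have hfiber (a : K) : ∃ h : ℝ → T, Measurable h ∧
      (P.restrict (k ⁻¹' {a})).map (h ∘ g) = (J.restrict (Prod.fst ⁻¹' {a})).snd := by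
    refine exists_map_restrict_comp_eq hg hg0 ?_
    rw [Measure.snd_univ, Measure.restrict_apply_univ, ← Measure.fst_apply (.singleton a), hJ,
      Measure.map_apply hk (.singleton a)]
  choose h hh hmap using hfiber
  have hZ : Measurable fun ω => h (k ω) (g ω) :=
    (measurable_from_prod_countable_right (f := fun y : K × ℝ => h y.1 y.2) hh).comp
      (hk.prodMk hg)
  refine ⟨_, hZ, Measure.ext_of_singleton fun ⟨a, t⟩ => ?_⟩
  have hsingle := congrArg (· {t}) (hmap a)
  simp only [Measure.map_apply ((hh a).comp hg) (.singleton t), Measure.snd_apply (.singleton t),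
    Measure.restrict_apply (measurable_snd (.singleton t)),
    Measure.restrict_apply (((hh a).comp hg) (.singleton t))] at hsingle
  rw [Measure.map_apply (hk.prodMk hZ) (.singleton _)]
  convert hsingle using 2 <;> ext <;> simp <;> grind

lemma exists_map_eq_snd_and_integral_eq (hg : Measurable g) (hg0 : ∀ x, P (g ⁻¹' {x}) = 0)
    {k : Ω → K} (hk : Measurable k) {J : Measure (Ω × T)} (hJ : J.fst = P) :
    ∃ Z : Ω → T, Measurable Z ∧ P.map Z = J.snd ∧
      ∀ F : K × T → ℝ, ∫ ω, F (k ω, Z ω) ∂P = ∫ x, F (k x.1, x.2) ∂J := by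
  have hkJ : Measurable fun x : Ω × T => (k x.1, x.2) := by fun_prop
  have hfst : (J.map fun x => (k x.1, x.2)).fst = P.map k := by
    rw [Measure.fst_map_prodMk measurable_snd, ← hJ, Measure.fst, Measure.map_map hk measurable_fst]
    rfl
  obtain ⟨Z, hZ, hZJ⟩ := exists_map_prodMk_eq hg hg0 hk hfst
  refine ⟨Z, hZ, ?_, fun F => ?_⟩
  · rw [← Measure.snd_map_prodMk (Y := Z) hk, hZJ,
      Measure.snd_map_prodMk (X := fun x : Ω × T => k x.1) (hk.comp measurable_fst)]
    rfl
  · have hF : Measurable F := .of_discrete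
    rw [← integral_map (hk.prodMk hZ).aemeasurable hF.aestronglyMeasurable, hZJ,
      integral_map hkJ.aemeasurable hF.aestronglyMeasurable]

end DiscreteCoupling

section Derandomization

variable {Ω S T : Type*} [MeasurableSpace Ω] {P : Measure Ω} [Finite S] {X : S → Ω → ℝ}
  [MeasurableSpace T] [MeasurableSingletonClass T] [Countable T] {J : Measure (Ω × T)}

lemma integrable_eval_of_fst_eq (hJ : J.fst = P) (hXm : ∀ s, Measurable (X s))
    (hX : ∀ s, Integrable (X s) P) (f : T → S) : Integrable (fun x => X (f x.2) x.1) J := by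
  have := Fintype.ofFinite S
  have hdom : Integrable (fun x : Ω × T => ∑ s, |X s x.1|) J := by
    have hsum : Integrable (fun ω => ∑ s, |X s ω|) P := integrable_finsetSum _ fun s _ => (hX s).abs
    rw [← hJ] at hsum
    exact hsum.comp_measurable measurable_fst
  have hm : Measurable fun x : Ω × T => X (f x.2) x.1 :=
    measurable_from_prod_countable_left fun t => hXm (f t)
  refine hdom.mono' hm.aestronglyMeasurable (.of_forall fun x => ?_)
  exact Finset.single_le_sum (f := fun s => |X s x.1|) (fun _ _ => abs_nonneg _)
    (Finset.mem_univ (f x.2))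

lemma integral_eval_le_of_fst_eq (hJ : J.fst = P) [IsProbabilityMeasure J] {Y : S → Ω → ℝ}
    (hXm : ∀ s, Measurable (X s)) (hX : ∀ s, Integrable (X s) P)
    (hYm : ∀ s, Measurable (Y s)) (hY : ∀ s, Integrable (Y s) P) {δ : ℝ}
    (hXY : ∀ s ω, X s ω ≤ Y s ω + δ) (f : T → S) :
    ∫ x, X (f x.2) x.1 ∂J ≤ ∫ x, Y (f x.2) x.1 ∂J + δ := by
  have hYi := integrable_eval_of_fst_eq hJ hYm hY f
  calc ∫ x, X (f x.2) x.1 ∂J ≤ ∫ x, (Y (f x.2) x.1 + δ) ∂J :=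
        integral_mono (integrable_eval_of_fst_eq hJ hXm hX f) (hYi.add (integrable_const δ))
          fun x => hXY _ _
    _ = _ := by simp [integral_add hYi (integrable_const δ)]

lemma integral_eval_comp_le [IsProbabilityMeasure P] {Z : Ω → T} (hZ : Measurable Z)
    {Y : S → Ω → ℝ} (hXm : ∀ s, Measurable (X s)) (hX : ∀ s, Integrable (X s) P)
    (hYm : ∀ s, Measurable (Y s)) (hY : ∀ s, Integrable (Y s) P) {δ : ℝ}
    (hXY : ∀ s ω, X s ω ≤ Y s ω + δ) (f : T → S) :
    ∫ ω, X (f (Z ω)) ω ∂P ≤ ∫ ω, Y (f (Z ω)) ω ∂P + δ := by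
  have hZm : Measurable fun ω => (ω, Z ω) := measurable_id.prodMk hZ
  have hfst : (P.map fun ω => (ω, Z ω)).fst = P := by
    rw [Measure.fst_map_prodMk hZ, Measure.map_id']
  have := Measure.isProbabilityMeasure_map (μ := P) hZm.aemeasurable
  have hgraph := integral_eval_le_of_fst_eq hfst hXm hX hYm hY hXY f
  rwa [integral_map hZm.aemeasurable (integrable_eval_of_fst_eq hfst hXm hX f).aestronglyMeasurable,
    integral_map hZm.aemeasurable
      (integrable_eval_of_fst_eq hfst hYm hY f).aestronglyMeasurable] at hgraph

lemma integrable_mul_floor_div [IsFiniteMeasure P] {Y : Ω → ℝ} (hYm : Measurable Y)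
    (hY : Integrable Y P) {δ : ℝ} (hδ : 0 < δ) : Integrable (fun ω => δ * (⌊Y ω / δ⌋ : ℝ)) P := by
  have hm : Measurable fun ω => δ * (⌊Y ω / δ⌋ : ℝ) :=
    ((measurable_from_top (f := fun n : ℤ => (n : ℝ))).comp
      (Int.measurable_floor.comp (hYm.div_const δ))).const_mul δ
  refine (hY.abs.add (integrable_const δ)).mono' hm.aestronglyMeasurable (.of_forall fun ω => ?_)
  have hle := mul_le_mul_of_nonneg_left (Int.floor_le (Y ω / δ)) hδ.le
  have hlt := mul_le_mul_of_nonneg_left (Int.sub_one_lt_floor (Y ω / δ)).le hδ.le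
  rw [mul_sub, mul_one] at hlt
  rw [mul_div_cancel₀ _ hδ.ne'] at hle hlt
  rw [Real.norm_eq_abs, Pi.add_apply, abs_le]
  constructor <;> linarith [le_abs_self (Y ω), neg_abs_le (Y ω)]

/-- Couplings of `P` with a law on `T` are realized, up to `δ` in the value, by functions on `Ω`:
quantize the process so that the coupling only has to be matched on countably many events. -/
theorem exists_map_eq_snd_and_integral_le [IsProbabilityMeasure P] [Nonempty T] {g : Ω → ℝ}
    (hg : Measurable g) (hg0 : ∀ x, P (g ⁻¹' {x}) = 0) (hJ : J.fst = P)
    (hXm : ∀ s, Measurable (X s)) (hX : ∀ s, Integrable (X s) P) (f : T → S) {δ : ℝ}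
    (hδ : 0 < δ) :
    ∃ Z : Ω → T, Measurable Z ∧ P.map Z = J.snd ∧
      ∫ x, X (f x.2) x.1 ∂J ≤ ∫ ω, X (f (Z ω)) ω ∂P + δ := by
  let k (ω : Ω) (s : S) : ℤ := ⌊X s ω / δ⌋
  have hk : Measurable k :=
    measurable_pi_lambda _ fun s => Int.measurable_floor.comp ((hXm s).div_const δ)
  obtain ⟨Z, hZ, hZJ, hint⟩ := exists_map_eq_snd_and_integral_eq hg hg0 hk hJ
  refine ⟨Z, hZ, hZJ, ?_⟩
  have hqi (s : S) : Integrable (fun ω => δ * (k ω s : ℝ)) P :=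
    integrable_mul_floor_div (hXm s) (hX s) hδ
  have hqm (s : S) : Measurable fun ω => δ * (k ω s : ℝ) := by
    have : Measurable fun a : S → ℤ => δ * (a s : ℝ) := .of_discrete
    exact this.comp hk
  have hk_le (s : S) (ω : Ω) : δ * (k ω s : ℝ) ≤ X s ω + 0 := by
    simpa [mul_div_cancel₀ _ hδ.ne'] using
      mul_le_mul_of_nonneg_left (Int.floor_le (X s ω / δ)) hδ.le
  have hle_k (s : S) (ω : Ω) : X s ω ≤ δ * (k ω s : ℝ) + δ := by
    have := mul_le_mul_of_nonneg_left (Int.lt_floor_add_one (X s ω / δ)).le hδ.le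
    rwa [mul_div_cancel₀ _ hδ.ne', mul_add, mul_one] at this
  have hJprob : IsProbabilityMeasure J := ⟨by rw [← Measure.fst_univ, hJ, measure_univ]⟩
  have hgraph := integral_eval_comp_le hZ hqm hqi hXm hX hk_le f
  calc ∫ x, X (f x.2) x.1 ∂J ≤ ∫ x, δ * (k x.1 (f x.2) : ℝ) ∂J + δ :=
        integral_eval_le_of_fst_eq hJ hXm hX hqm hqi hle_k f
    _ = ∫ ω, δ * (k ω (f (Z ω)) : ℝ) ∂P + δ := by
        rw [hint fun y : (S → ℤ) × T => δ * (y.1 (f y.2) : ℝ)]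
    _ ≤ ∫ ω, X (f (Z ω)) ω ∂P + δ := by linarith

end Derandomization

section SelectionJoint

variable {Ω S T : Type*} [MeasurableSpace Ω] {P : Measure Ω} {q : Ω → S → ℝ}
  [MeasurableSpace T] {μ : Measure T} [IsFiniteMeasure μ] {f : T → S}

/-- The joint law of `(ω, t)` when `ω` has law `P`, a value `z` is selected with probability `q ω z`
and `t` is drawn from `μ` conditioned on `f t = z`. -/
def selectionJoint (P : Measure Ω) (q : Ω → S → ℝ) (μ : Measure T) (f : T → S) :
    Measure (Ω × T) :=
  .sum fun z => (P.withDensity fun ω => ENNReal.ofReal (q ω z)).prod μ[|f ⁻¹' {z}]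

lemma snd_selectionJoint [Finite S] [MeasurableSingletonClass T] [Countable T]
    (hq0 : ∀ ω z, 0 ≤ q ω z) (hqi : ∀ z, Integrable (fun ω => q ω z) P)
    (hqμ : ∀ z, ∫ ω, q ω z ∂P = μ.real (f ⁻¹' {z})) : (selectionJoint P q μ f).snd = μ := by
  have hmass (z : S) : P.withDensity (fun ω => ENNReal.ofReal (q ω z)) univ = μ (f ⁻¹' {z}) := by
    rw [withDensity_apply _ .univ, Measure.restrict_univ,
      ← ofReal_integral_eq_lintegral_ofReal (hqi z) (.of_forall fun ω => hq0 ω z), hqμ,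
      ofReal_measureReal]
  have := Fintype.ofFinite S
  let _ : MeasurableSpace S := ⊤
  conv_rhs => rw [← sum_meas_smul_cond_fiber (X := f) .of_discrete μ, ← Measure.sum_fintype]
  rw [selectionJoint, Measure.snd_sum]
  simp only [Measure.snd, Measure.map_snd_prod, hmass]

variable [Fintype S]

lemma fst_selectionJoint (hqm : ∀ z, Measurable fun ω => q ω z) (hq : ∀ ω, q ω ∈ stdSimplex ℝ S)
    (hf : ∀ z, μ (f ⁻¹' {z}) ≠ 0) : (selectionJoint P q μ f).fst = P := by
  have (z : S) : IsProbabilityMeasure μ[|f ⁻¹' {z}] := cond_isProbabilityMeasure (hf z)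
  have hsum : ∑' z, (fun ω => ENNReal.ofReal (q ω z)) = 1 := by
    ext ω
    rw [tsum_fintype, Finset.sum_apply, ← ENNReal.ofReal_sum_of_nonneg fun z _ => (hq ω).1 z,
      (hq ω).2, ENNReal.ofReal_one, Pi.one_apply]
  simp only [selectionJoint, Measure.fst_sum, Measure.fst_prod]
  rw [← withDensity_tsum fun z => (hqm z).ennreal_ofReal, hsum, withDensity_one]

lemma integral_selectionJoint [SFinite P] [MeasurableSingletonClass T] [Countable T]
    (hqm : ∀ z, Measurable fun ω => q ω z)
    (hq : ∀ ω, q ω ∈ stdSimplex ℝ S) (hf : ∀ z, μ (f ⁻¹' {z}) ≠ 0) {X : S → Ω → ℝ}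
    (hXm : ∀ z, Measurable (X z)) (hX : ∀ z, Integrable (X z) P) :
    ∫ x, X (f x.2) x.1 ∂(selectionJoint P q μ f) = ∑ z, ∫ ω, q ω z * X z ω ∂P := by
  have (z : S) : IsProbabilityMeasure μ[|f ⁻¹' {z}] := cond_isProbabilityMeasure (hf z)
  have hint := integrable_eval_of_fst_eq (fst_selectionJoint hqm hq hf) hXm hX f
  rw [selectionJoint] at hint ⊢
  rw [integral_sum_measure hint, tsum_fintype]
  refine Finset.sum_congr rfl fun z _ => ?_
  have hfiber (ω : Ω) : ∫ t, X (f t) ω ∂μ[|f ⁻¹' {z}] = X z ω := by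
    have hz : (fun t => X (f t) ω) =ᵐ[μ[|f ⁻¹' {z}]] fun _ => X z ω := by
      have hmem := ae_cond_mem (μ := μ) (s := f ⁻¹' {z}) (to_countable _).measurableSet
      filter_upwards [hmem] with t ht
      rw [show f t = z from ht]
    simp [integral_congr_ae hz]
  rw [integral_prod _ (hint.mono_measure (Measure.le_sum _ z))]
  simp only [hfiber]
  rw [integral_withDensity_eq_integral_toReal_smul (hqm z).ennreal_ofReal (by simp)]
  simp only [ENNReal.toReal_ofReal ((hq _).1 z), smul_eq_mul]

end SelectionJoint

theorem IsSelectionRule.exists_map_eq_and_selectionValue_le {Ω S T : Type*} [MeasurableSpace Ω]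
    [Fintype S] [MeasurableSpace T] [MeasurableSingletonClass T] [Countable T] {P : Measure Ω}
    [IsProbabilityMeasure P] {g : Ω → ℝ} (hg : Measurable g) (hg0 : ∀ x, P (g ⁻¹' {x}) = 0)
    {X : S → Ω → ℝ} (hXm : ∀ z, Measurable (X z)) (hX : ∀ z, Integrable (X z) P)
    {μ : Measure T} [IsProbabilityMeasure μ] {f : T → S} (hf : ∀ z, μ (f ⁻¹' {z}) ≠ 0)
    {p : (S → ℝ) → S → ℝ} (hp : IsSelectionRule p)
    (hpμ : ∀ z, selectionLaw (P.map fun ω s => X s ω) p z = μ.real (f ⁻¹' {z})) {δ : ℝ}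
    (hδ : 0 < δ) :
    ∃ Z : Ω → T, Measurable Z ∧ P.map Z = μ ∧
      selectionValue (P.map fun ω s => X s ω) p ≤ ∫ ω, X (f (Z ω)) ω ∂P + δ := by
  have : Nonempty T := μ.nonempty_of_neZero
  have hXv : Measurable fun ω s => X s ω := by fun_prop
  let q (ω : Ω) : S → ℝ := p fun s => X s ω
  have hq (ω : Ω) : q ω ∈ stdSimplex ℝ S := hp.mem_stdSimplex _
  have hqm (z : S) : Measurable fun ω => q ω z := (hp.measurable z).comp hXv
  have hqi (z : S) : Integrable (fun ω => q ω z) P :=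
    .of_bound (hqm z).aestronglyMeasurable 1 (.of_forall fun ω => by
      rw [Real.norm_of_nonneg ((hq ω).1 z)]
      exact (mem_Icc_of_mem_stdSimplex (hq ω) z).2)
  have hqμ (z : S) : ∫ ω, q ω z ∂P = μ.real (f ⁻¹' {z}) := by
    rw [← hpμ z, selectionLaw,
      integral_map hXv.aemeasurable (hp.measurable z).aestronglyMeasurable]
  have hvalue : selectionValue (P.map fun ω s => X s ω) p =
      ∫ x, X (f x.2) x.1 ∂(selectionJoint P q μ f) := by
    rw [integral_selectionJoint hqm hq hf hXm hX, selectionValue]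
    refine Finset.sum_congr rfl fun z _ => integral_map hXv.aemeasurable ?_
    exact ((hp.measurable z).mul (measurable_pi_apply z)).aestronglyMeasurable
  obtain ⟨Z, hZ, hZμ, hle⟩ :=
    exists_map_eq_snd_and_integral_le hg hg0 (fst_selectionJoint hqm hq hf) hXm hX f hδ
  rw [snd_selectionJoint (fun ω => (hq ω).1) hqi hqμ] at hZμ
  exact ⟨Z, hZ, hZμ, hvalue.trans_le hle⟩

section MutualInformation

variable {α β : Type*} [MeasurableSpace α] [MeasurableSpace β]

lemma rnDeriv_mul_measure_singleton [MeasurableSingletonClass α] {ν κ : Measure α} [SigmaFinite ν]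
    [SigmaFinite κ] (h : ν ≪ κ) (x : α) : ν.rnDeriv κ x * κ {x} = ν {x} := by
  conv_rhs => rw [← Measure.withDensity_rnDeriv_eq ν κ h]
  rw [withDensity_apply _ (.singleton x), lintegral_singleton]

lemma mutInfoR_prod (μ : Measure α) (ν : Measure β) [IsProbabilityMeasure μ]
    [IsProbabilityMeasure ν] : mutInfoR (μ.prod ν) = 0 := by
  rw [mutInfoR, klDivR, Measure.fst_prod, Measure.snd_prod]
  refine integral_eq_zero_of_ae ?_
  filter_upwards [Measure.rnDeriv_self (μ.prod ν)] with x hx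
  simp [hx]

lemma fst_map_diag (μ : Measure α) : (μ.map fun t => (t, t)).fst = μ :=
  (Measure.fst_map_prodMk measurable_id).trans Measure.map_id

lemma snd_map_diag (μ : Measure α) : (μ.map fun t => (t, t)).snd = μ :=
  (Measure.snd_map_prodMk measurable_id).trans Measure.map_id

variable [MeasurableSingletonClass α] [MeasurableSingletonClass β] [Countable α] [Countable β]

lemma absolutelyContinuous_fst_prod_snd (ρ : Measure (α × β)) [IsFiniteMeasure ρ] :
    ρ ≪ ρ.fst.prod ρ.snd := by
  refine fun A hA => (measure_null_iff_singleton (to_countable A)).2 fun ⟨x, y⟩ hxy => ?_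
  have hprod := measure_mono_null (singleton_subset_iff.2 hxy) hA
  rw [← singleton_prod_singleton, Measure.prod_prod, mul_eq_zero,
    Measure.fst_apply (.singleton x), Measure.snd_apply (.singleton y)] at hprod
  rcases hprod with hx | hy
  · exact measure_mono_null (by simp) hx
  · exact measure_mono_null (by simp) hy

lemma mutInfoR_nonneg (ρ : Measure (α × β)) [IsProbabilityMeasure ρ] : 0 ≤ mutInfoR ρ := by
  have hkl := InformationTheory.toReal_klDiv_of_measure_eq (absolutelyContinuous_fst_prod_snd ρ)
    (by simp)
  exact ENNReal.toReal_nonneg.trans_eq hkl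

lemma mutInfoR_map_diag (μ : Measure α) [IsProbabilityMeasure μ] :
    mutInfoR (μ.map fun t => (t, t)) = ∫ t, -Real.log (μ.real {t}) ∂μ := by
  set ρ := μ.map fun t => (t, t) with hρ
  have hdiag : Measurable fun t : α => (t, t) := by fun_prop
  have : IsProbabilityMeasure ρ := Measure.isProbabilityMeasure_map hdiag.aemeasurable
  have hac := absolutelyContinuous_fst_prod_snd ρ
  rw [mutInfoR, klDivR]
  rw [fst_map_diag, snd_map_diag] at hac ⊢
  rw [hρ, integral_map hdiag.aemeasurable Measurable.of_discrete.aestronglyMeasurable, ← hρ]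
  refine integral_congr_ae (ae_iff_of_countable.2 fun t ht => ?_)
  have hsingle := rnDeriv_mul_measure_singleton hac (t, t)
  rw [← singleton_prod_singleton, Measure.prod_prod, hρ, Measure.map_apply hdiag
    ((MeasurableSet.singleton t).prod (.singleton t)), mk_preimage_prod, preimage_id', inter_self,
    ← hρ, ← mul_assoc] at hsingle
  have hinv : ρ.rnDeriv (μ.prod μ) (t, t) = (μ {t})⁻¹ :=
    ENNReal.eq_inv_of_mul_eq_one_left <|
      (ENNReal.mul_eq_right ht (measure_ne_top μ _)).1 hsingle
  beta_reduce
  rw [hinv, ENNReal.toReal_inv, Real.log_inv, measureReal_def]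

end MutualInformation

section SelfInformation

lemma integrableOn_Ioi_of_antitoneOn {h : ℝ → ℝ} {R : ℝ} (hh : AntitoneOn h (Ici 0))
    (hR : ∀ t, R ≤ t → h t = 0) : IntegrableOn h (Ioi 0) := by
  have hcompact : IntegrableOn h (Icc 0 R) :=
    (hh.mono fun _ hx => hx.1).integrableOn_isCompact isCompact_Icc
  refine hcompact.of_forall_sdiff_eq_zero measurableSet_Ioi fun t ht => hR t ?_
  exact le_of_not_gt fun hlt => ht.2 ⟨le_of_lt ht.1, hlt.le⟩

variable {T : Type*} [MeasurableSpace T] [MeasurableSingletonClass T] [Countable T]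
  {d : T → T → ℝ} {μ : Measure T}

lemma iSelf_le_mutInfoR {ρ : Measure (T × T)} [IsProbabilityMeasure ρ] (hfst : ρ.fst = μ)
    (hsnd : ρ.snd = μ) {σ : ℝ} (hcost : ∫ p, d p.1 p.2 ^ 2 ∂ρ ≤ σ ^ 2) :
    iSelf d μ σ ≤ mutInfoR ρ := by
  refine csInf_le ⟨0, ?_⟩ ⟨ρ, ‹_›, hfst, hsnd, hcost, rfl⟩
  rintro _ ⟨ρ', _, -, -, -, rfl⟩
  exact mutInfoR_nonneg ρ'

lemma iSelf_nonneg (d : T → T → ℝ) (μ : Measure T) (σ : ℝ) : 0 ≤ iSelf d μ σ := by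
  refine Real.sInf_nonneg ?_
  rintro _ ⟨ρ, _, -, -, -, rfl⟩
  exact mutInfoR_nonneg ρ

variable [IsProbabilityMeasure μ]

lemma exists_selfCoupling (hd : ∀ t, d t t = 0) (μ : Measure T) [IsProbabilityMeasure μ] (σ : ℝ) :
    ∃ ρ : Measure (T × T), IsProbabilityMeasure ρ ∧ ρ.fst = μ ∧ ρ.snd = μ ∧
      ∫ p, d p.1 p.2 ^ 2 ∂ρ ≤ σ ^ 2 ∧ ∫ t, -Real.log (μ.real {t}) ∂μ = mutInfoR ρ := by
  have hdiag : AEMeasurable (fun t : T => (t, t)) μ := by fun_prop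
  refine ⟨μ.map fun t => (t, t), Measure.isProbabilityMeasure_map hdiag, fst_map_diag μ,
    snd_map_diag μ, ?_, (mutInfoR_map_diag μ).symm⟩
  rw [integral_map hdiag Measurable.of_discrete.aestronglyMeasurable]
  simpa [hd] using sq_nonneg σ

lemma iSelf_le_integral_neg_log (hd : ∀ t, d t t = 0) (σ : ℝ) :
    iSelf d μ σ ≤ ∫ t, -Real.log (μ.real {t}) ∂μ := by
  obtain ⟨ρ, _, hfst, hsnd, hcost, hinfo⟩ := exists_selfCoupling hd μ σ
  exact hinfo ▸ iSelf_le_mutInfoR hfst hsnd hcost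

lemma antitoneOn_iSelf (hd : ∀ t, d t t = 0) : AntitoneOn (iSelf d μ) (Ici 0) := by
  intro σ hσ σ' _ hle
  refine le_csInf ⟨_, exists_selfCoupling hd μ σ⟩ ?_
  rintro _ ⟨ρ, _, hfst, hsnd, hcost, rfl⟩
  exact iSelf_le_mutInfoR hfst hsnd (hcost.trans (pow_le_pow_left₀ hσ hle 2))

lemma iSelf_eq_zero {σ : ℝ} (hσ : ∫ p, d p.1 p.2 ^ 2 ∂(μ.prod μ) ≤ σ ^ 2) : iSelf d μ σ = 0 :=
  le_antisymm ((iSelf_le_mutInfoR Measure.fst_prod Measure.snd_prod hσ).trans_eq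
    (mutInfoR_prod μ μ)) (iSelf_nonneg d μ σ)

lemma rateDistortion_le_iSelf (hd : ∀ t, d t t = 0) (σ : ℝ) :
    rateDistortion d μ (σ ^ 2) ≤ iSelf d μ σ := by
  refine csInf_le_csInf ⟨0, ?_⟩ ⟨_, exists_selfCoupling hd μ σ⟩ ?_
  · rintro _ ⟨ρ, _, -, -, rfl⟩
    exact mutInfoR_nonneg ρ
  · rintro _ ⟨ρ, hρ, -, hsnd, hcost, rfl⟩
    exact ⟨ρ, hρ, hsnd, hcost, rfl⟩

lemma integrableOn_sqrt_iSelf (hd : ∀ t, d t t = 0) :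
    IntegrableOn (fun σ => √(iSelf d μ σ)) (Ioi 0) := by
  refine integrableOn_Ioi_of_antitoneOn (R := √(∫ p, d p.1 p.2 ^ 2 ∂(μ.prod μ)))
    (fun σ hσ σ' hσ' hle => Real.sqrt_le_sqrt (antitoneOn_iSelf hd hσ hσ' hle)) fun σ hσ => ?_
  rw [iSelf_eq_zero (Real.sqrt_le_iff.1 hσ).2, Real.sqrt_zero]

lemma integral_sqrt_rateDistortion_le (hd : ∀ t, d t t = 0) (σ₀ : ℝ) :
    ∫ σ in Ioc 0 σ₀, √(rateDistortion d μ (σ ^ 2)) ≤ ∫ σ in Ioi (0 : ℝ), √(iSelf d μ σ) := by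
  have hint := integrableOn_sqrt_iSelf (μ := μ) hd
  calc ∫ σ in Ioc 0 σ₀, √(rateDistortion d μ (σ ^ 2)) ≤ ∫ σ in Ioc 0 σ₀, √(iSelf d μ σ) :=
        integral_mono_of_nonneg (.of_forall fun _ => Real.sqrt_nonneg _)
          (hint.mono_set Ioc_subset_Ioi_self)
          (.of_forall fun σ => Real.sqrt_le_sqrt (rateDistortion_le_iSelf hd σ))
    _ ≤ ∫ σ in Ioi (0 : ℝ), √(iSelf d μ σ) :=
        setIntegral_mono_set hint (.of_forall fun _ => Real.sqrt_nonneg _)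
          (.of_forall Ioc_subset_Ioi_self)

end SelfInformation

section GaussianTail

lemma integrable_exp_abs_gaussianReal (v : NNReal) :
    Integrable (fun x => Real.exp |x|) (gaussianReal 0 v) := by
  simpa using integrable_exp_mul_abs (X := id) (integrable_exp_mul_gaussianReal (μ := 0) (v := v) 1)
    (integrable_exp_mul_gaussianReal (-1))

lemma integral_exp_abs_gaussianReal_le (v : NNReal) :
    ∫ x, Real.exp |x| ∂(gaussianReal 0 v) ≤ 2 * Real.exp (v / 2) := by
  have hint (c : ℝ) := integrable_exp_mul_gaussianReal (μ := 0) (v := v) c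
  have hmgf (c : ℝ) : ∫ x, Real.exp (c * x) ∂(gaussianReal 0 v) = Real.exp (v * c ^ 2 / 2) := by
    simpa [mgf] using congrFun (mgf_id_gaussianReal (μ := 0) (v := v)) c
  calc ∫ x, Real.exp |x| ∂(gaussianReal 0 v)
      ≤ ∫ x, (Real.exp (1 * x) + Real.exp (-1 * x)) ∂(gaussianReal 0 v) := by
        refine integral_mono (integrable_exp_abs_gaussianReal v) ((hint 1).add (hint (-1)))
          fun x => ?_
        simpa using Real.exp_abs_le x
    _ = 2 * Real.exp (v / 2) := by
        rw [integral_add (hint 1) (hint (-1)), hmgf, hmgf]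
        ring_nf

variable {Ω : Type*} [MeasurableSpace Ω] {P : Measure Ω} [IsFiniteMeasure P] {Y : Ω → ℝ}
  {v : NNReal}

lemma setIntegral_abs_le_of_map_eq_gaussianReal (h : P.map Y = gaussianReal 0 v) (A : Set Ω) :
    ∫ ω in A, |Y ω| ∂P ≤ P.real A * (v / 2 - Real.log (P.real A) + 2) := by
  rcases (measureReal_nonneg (μ := P) (s := A)).eq_or_lt' with h0 | hpos
  · rw [Measure.restrict_eq_zero.2 ((measureReal_eq_zero_iff).1 h0), h0]
    simp
  set a := P.real A
  have hY : AEMeasurable Y P := aemeasurable_of_map_neZero (by rw [h]; infer_instance)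
  have hexp : Integrable (fun ω => Real.exp |Y ω|) P :=
    (h ▸ integrable_exp_abs_gaussianReal v).comp_aemeasurable hY
  have hexp_le : ∫ ω, Real.exp |Y ω| ∂P ≤ 2 * Real.exp (v / 2) := by
    have hm : Measurable fun x : ℝ => Real.exp |x| := by fun_prop
    rw [← integral_map hY hm.aestronglyMeasurable, h]
    exact integral_exp_abs_gaussianReal_le v
  have hpt (u : ℝ) : u ≤ v / 2 - Real.log a + a * Real.exp (-(v / 2)) * Real.exp u := by
    have := Real.add_one_le_exp (Real.log a + -(v / 2) + u)
    rw [Real.exp_add, Real.exp_add, Real.exp_log hpos] at this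
    linarith
  calc ∫ ω in A, |Y ω| ∂P
      ≤ ∫ ω in A, (v / 2 - Real.log a + a * Real.exp (-(v / 2)) * Real.exp |Y ω|) ∂P :=
        integral_mono_of_nonneg (.of_forall fun _ => abs_nonneg _)
          ((integrable_const _).add (hexp.restrict.const_mul _)) (.of_forall fun _ => hpt _)
    _ = a * (v / 2 - Real.log a) + a * Real.exp (-(v / 2)) * ∫ ω in A, Real.exp |Y ω| ∂P := by
        rw [integral_add (integrable_const _) (hexp.restrict.const_mul _), setIntegral_const,
          integral_const_mul, smul_eq_mul]
    _ ≤ a * (v / 2 - Real.log a) + a * Real.exp (-(v / 2)) * (2 * Real.exp (v / 2)) := by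
        gcongr
        exact (setIntegral_le_integral hexp (.of_forall fun _ => (Real.exp_pos _).le)).trans hexp_le
    _ = a * (v / 2 - Real.log a + 2) := by
        rw [Real.exp_neg]
        field_simp

end GaussianTail

section Fibers

lemma iUnion_preimage_singleton_eq_univ {Ω T : Type*} (Z : Ω → T) : ⋃ t, Z ⁻¹' {t} = univ := by
  rw [← preimage_iUnion, iUnion_of_singleton, preimage_univ]

variable {Ω T : Type*} [MeasurableSpace Ω] {P : Measure Ω} [Countable T] {Z : Ω → T} {g : Ω → ℝ}

lemma integrable_of_summable_setIntegral_fiber (hg : ∀ t, IntegrableOn g (Z ⁻¹' {t}) P)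
    (hs : Summable fun t => ∫ ω in Z ⁻¹' {t}, |g ω| ∂P) : Integrable g P := by
  rw [← integrableOn_univ, ← iUnion_preimage_singleton_eq_univ Z]
  exact integrableOn_iUnion_of_summable_integral_norm hg hs

variable [MeasurableSpace T] [MeasurableSingletonClass T]

lemma hasSum_setIntegral_fiber (hZ : Measurable Z) (hg : Integrable g P) :
    HasSum (fun t => ∫ ω in Z ⁻¹' {t}, g ω ∂P) (∫ ω, g ω ∂P) := by
  have := hasSum_integral_iUnion (μ := P) (f := g) (fun t => hZ (.singleton t))
    (pairwise_disjoint_fiber Z) hg.integrableOn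
  rwa [iUnion_preimage_singleton_eq_univ, setIntegral_univ] at this

lemma summable_measureReal_singleton_mul {μ : Measure T} {g : T → ℝ} (hg : Integrable g μ) :
    Summable fun t => μ.real {t} * g t := by
  simpa [measureReal_def] using (hasSum_setIntegral_fiber measurable_id hg).summable

end Fibers

section TailWeight

variable {T E : Type*} [MeasurableSpace T] [NormedAddCommGroup E] {φ : T → E} {μ : Measure T}

/-- A bound, uniform in `Z` of law `μ`, for the contribution of the event `Z = t` to
`E |X_Z - X_t₀|`, where `φ` embeds the index set isometrically for the natural metric. -/
def tailWeight (φ : T → E) (μ : Measure T) (t₀ t : T) : ℝ :=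
  μ.real {t} * (‖φ t - φ t₀‖ ^ 2 / 2 - Real.log (μ.real {t}) + 2)

lemma summable_tailWeight [IsFiniteMeasure μ] [MeasurableSingletonClass T] [Countable T] {t₀ : T}
    (hφ : Integrable (fun t => ‖φ t - φ t₀‖ ^ 2) μ)
    (hlog : Integrable (fun t => Real.log (μ.real {t})) μ) : Summable (tailWeight φ μ t₀) :=
  summable_measureReal_singleton_mul (((hφ.div_const 2).sub hlog).add (integrable_const 2))

variable [IsProbabilityMeasure μ]

lemma log_measureReal_nonpos (s : Set T) : Real.log (μ.real s) ≤ 0 :=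
  Real.log_nonpos measureReal_nonneg measureReal_le_one

lemma tailWeight_nonneg (t₀ t : T) : 0 ≤ tailWeight φ μ t₀ t := by
  have := log_measureReal_nonpos (μ := μ) {t}
  exact mul_nonneg measureReal_nonneg (by linarith [sq_nonneg ‖φ t - φ t₀‖])

lemma measureReal_mul_norm_sub_sq_le_tailWeight (t₀ t : T) :
    μ.real {t} * ‖φ t - φ t₀‖ ^ 2 ≤ 2 * tailWeight φ μ t₀ t := by
  have := log_measureReal_nonpos (μ := μ) {t}
  rw [tailWeight, mul_left_comm]
  exact mul_le_mul_of_nonneg_left (by linarith) measureReal_nonneg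

lemma tailWeight_ne_zero_iff {t₀ t : T} : tailWeight φ μ t₀ t ≠ 0 ↔ μ {t} ≠ 0 := by
  have := log_measureReal_nonpos (μ := μ) {t}
  have hpos : 0 < ‖φ t - φ t₀‖ ^ 2 / 2 - Real.log (μ.real {t}) + 2 := by
    linarith [sq_nonneg ‖φ t - φ t₀‖]
  rw [tailWeight, mul_ne_zero_iff, and_iff_left hpos.ne', measureReal_ne_zero_iff]

end TailWeight

namespace IsCenteredGaussianProcess

variable {Ω T : Type*} [MeasurableSpace Ω] {P : Measure Ω} [IsFiniteMeasure P] {X : T → Ω → ℝ}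
  [MeasurableSpace T] [MeasurableSingletonClass T] {μ : Measure T} {t₀ : T} {Z : Ω → T}

lemma setIntegral_abs_sub_le_tailWeight (hX : IsCenteredGaussianProcess P X) (hZ : Measurable Z)
    (hZμ : P.map Z = μ) (t₀ t : T) :
    ∫ ω in Z ⁻¹' {t}, |X t ω - X t₀ ω| ∂P ≤ tailWeight hX.toL2 μ t₀ t := by
  have := setIntegral_abs_le_of_map_eq_gaussianReal (hX.map_sub_eq_gaussianReal t t₀) (Z ⁻¹' {t})
  rwa [← map_measureReal_apply hZ (.singleton t), hZμ] at this

variable [Countable T]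

lemma integrable_and_abs_integral_eval_sub_le (hX : IsCenteredGaussianProcess P X)
    (hw : Summable (tailWeight hX.toL2 μ t₀)) {s : Set T} {f : T → T} (hf : ∀ t ∈ s, f t = t)
    (hf' : ∀ t ∉ s, f t = t₀) (hZ : Measurable Z) (hZμ : P.map Z = μ) :
    Integrable (fun ω => X (Z ω) ω - X (f (Z ω)) ω) P ∧
      |∫ ω, (X (Z ω) ω - X (f (Z ω)) ω) ∂P| ≤ ∑' t, sᶜ.indicator (tailWeight hX.toL2 μ t₀) t := by
  have hsub (t t' : T) : Integrable (fun ω => X t ω - X t' ω) P :=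
    (hX.hasGaussianLaw t).integrable.sub (hX.hasGaussianLaw t').integrable
  have hfiber {g : T → Ω → ℝ} (t : T) : EqOn (fun ω => g (Z ω) ω) (g t) (Z ⁻¹' {t}) :=
    fun ω hω => congrArg (fun t' => g t' ω) hω
  have hle (t : T) : ∫ ω in Z ⁻¹' {t}, |X (Z ω) ω - X (f (Z ω)) ω| ∂P ≤
      sᶜ.indicator (tailWeight hX.toL2 μ t₀) t := by
    rw [setIntegral_congr_fun (hZ (.singleton t))
      (hfiber (g := fun t ω => |X t ω - X (f t) ω|) t)]
    by_cases ht : t ∈ s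
    · simp [hf t ht, ht]
    · rw [hf' t ht, indicator_of_mem (mem_compl ht)]
      exact hX.setIntegral_abs_sub_le_tailWeight hZ hZμ t₀ t
  have hsum : Summable fun t => ∫ ω in Z ⁻¹' {t}, |X (Z ω) ω - X (f (Z ω)) ω| ∂P :=
    .of_nonneg_of_le (fun t => integral_nonneg fun _ => abs_nonneg _) hle (hw.indicator _)
  have hint : Integrable (fun ω => X (Z ω) ω - X (f (Z ω)) ω) P :=
    integrable_of_summable_setIntegral_fiber (fun t => (hsub t (f t)).integrableOn.congr_fun
      (hfiber (g := fun t ω => X t ω - X (f t) ω) t).symm (hZ (.singleton t))) hsum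
  refine ⟨hint, abs_integral_le_integral_abs.trans ?_⟩
  rw [← (hasSum_setIntegral_fiber hZ hint.abs).tsum_eq]
  exact hsum.tsum_le_tsum hle (hw.indicator _)

lemma integrable_eval (hX : IsCenteredGaussianProcess P X)
    (hw : Summable (tailWeight hX.toL2 μ t₀)) (hZ : Measurable Z) (hZμ : P.map Z = μ) :
    Integrable (fun ω => X (Z ω) ω) P := by
  have h := (hX.integrable_and_abs_integral_eval_sub_le hw (s := ∅) (f := fun _ => t₀)
    (fun _ h => h.elim) (fun _ _ => rfl) hZ hZμ).1
  exact (h.add (hX.hasGaussianLaw t₀).integrable).congr (.of_forall fun ω => by simp)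

lemma integral_eval_le_complexity (hX : IsCenteredGaussianProcess P X)
    (hw : Summable (tailWeight hX.toL2 μ t₀)) (hZ : Measurable Z) (hZμ : P.map Z = μ) :
    ∫ ω, X (Z ω) ω ∂P ≤ complexity P X μ := by
  refine le_csSup ⟨∑' t, tailWeight hX.toL2 μ t₀ t, ?_⟩ ⟨Z, hZ, hZμ, rfl⟩
  rintro _ ⟨Z', hZ', hZμ', rfl⟩
  have hle := (hX.integrable_and_abs_integral_eval_sub_le hw (s := ∅) (f := fun _ => t₀)
    (fun _ h => h.elim) (fun _ _ => rfl) hZ' hZμ').2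
  rw [integral_sub (hX.integrable_eval hw hZ' hZμ') (hX.hasGaussianLaw t₀).integrable,
    hX.integral_eq_zero, sub_zero, compl_empty, indicator_univ] at hle
  exact (le_abs_self _).trans hle

lemma integral_eval_comp_le_complexity_add (hX : IsCenteredGaussianProcess P X)
    (hw : Summable (tailWeight hX.toL2 μ t₀)) {s : Set T} {f : T → T} (hf : ∀ t ∈ s, f t = t)
    (hf' : ∀ t ∉ s, f t = t₀) (hZ : Measurable Z) (hZμ : P.map Z = μ) :
    ∫ ω, X (f (Z ω)) ω ∂P ≤
      complexity P X μ + ∑' t, sᶜ.indicator (tailWeight hX.toL2 μ t₀) t := by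
  obtain ⟨hint, hle⟩ := hX.integrable_and_abs_integral_eval_sub_le hw hf hf' hZ hZμ
  have hval := hX.integral_eval_le_complexity hw hZ hZμ
  have hdiff := integral_sub (hX.integrable_eval hw hZ hZμ) hint
  simp only [sub_sub_cancel] at hdiff
  linarith [neg_abs_le (∫ ω, (X (Z ω) ω - X (f (Z ω)) ω) ∂P)]

end IsCenteredGaussianProcess

section FiberMass

variable {T S : Type*} [MeasurableSpace T]

/-- The mass function of the law of `f` under `μ`, for `f` with values in a discrete space. -/
def fiberMass (μ : Measure T) (f : T → S) (z : S) : ℝ := μ.real (f ⁻¹' {z})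

lemma fiberMass_pos {μ : Measure T} [IsFiniteMeasure μ] {f : T → S} {z : S}
    (hf : μ (f ⁻¹' {z}) ≠ 0) : 0 < fiberMass μ f z :=
  ENNReal.toReal_pos hf (measure_ne_top _ _)

lemma fiberMass_prodMap (μ : Measure T) [SFinite μ] (f : T → S) (v w : S) :
    fiberMass (μ.prod μ) (Prod.map f f) (v, w) = fiberMass μ f v * fiberMass μ f w := by
  rw [fiberMass, ← singleton_prod_singleton, preimage_prod_map_prod, measureReal_prod_prod]
  rfl

variable [MeasurableSingletonClass T] [Countable T] (μ : Measure T) [IsFiniteMeasure μ]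

lemma integrable_comp_of_finite [Finite S] (f : T → S) (G : S → ℝ) :
    Integrable (fun t => G (f t)) μ := by
  obtain ⟨C, hC⟩ := (finite_range fun z => ‖G z‖).bddAbove
  exact .of_bound Measurable.of_discrete.aestronglyMeasurable C
    (.of_forall fun t => hC ⟨f t, rfl⟩)

lemma integral_comp_eq_sum_fiberMass [Fintype S] (f : T → S) (G : S → ℝ) :
    ∫ t, G (f t) ∂μ = ∑ z, fiberMass μ f z * G z := by
  let _ : MeasurableSpace S := ⊤
  have hf : Measurable f := .of_discrete
  have hG : Integrable G (μ.map f) := .of_finite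
  rw [← integral_map hf.aemeasurable hG.aestronglyMeasurable, integral_fintype hG]
  simp only [map_measureReal_apply hf (.singleton _), smul_eq_mul, fiberMass]

lemma fiberMass_mem_stdSimplex [Fintype S] {μ : Measure T} [IsProbabilityMeasure μ] (f : T → S) :
    fiberMass μ f ∈ stdSimplex ℝ S := by
  refine ⟨fun _ => measureReal_nonneg, ?_⟩
  simpa using (integral_comp_eq_sum_fiberMass μ f fun _ => 1).symm

end FiberMass

section LiftCoupling

variable {T S : Type*} [MeasurableSpace T] [Fintype S] {μ : Measure T} {f : T → S} {c : S → S → ℝ}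

/-- The self-coupling of `μ` obtained from a self-coupling `c` of the law of `f`: draw a pair of
fibers of `f` from `c`, then two independent points from `μ` conditioned on these fibers. -/
def liftCoupling (μ : Measure T) (f : T → S) (c : S → S → ℝ) : Measure (T × T) :=
  (μ.prod μ).withDensity fun q => ENNReal.ofReal
    (c (f q.1) (f q.2) / (fiberMass μ f (f q.1) * fiberMass μ f (f q.2)))

lemma IsSelfCoupling.div_nonneg (hc : IsSelfCoupling (fiberMass μ f) c) (v w : S) :
    0 ≤ c v w / (fiberMass μ f v * fiberMass μ f w) :=
  _root_.div_nonneg (hc.nonneg v w) (mul_nonneg measureReal_nonneg measureReal_nonneg)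

variable [MeasurableSingletonClass T] [Countable T] [IsProbabilityMeasure μ]

lemma lintegral_ofReal_comp (f : T → S) {G : S → ℝ} (hG : ∀ z, 0 ≤ G z) :
    ∫⁻ t, ENNReal.ofReal (G (f t)) ∂μ = ENNReal.ofReal (∑ z, fiberMass μ f z * G z) := by
  rw [← integral_comp_eq_sum_fiberMass, ofReal_integral_eq_lintegral_ofReal
    (integrable_comp_of_finite μ f G) (.of_forall fun t => hG (f t))]

lemma fst_liftCoupling (hf : ∀ z, μ (f ⁻¹' {z}) ≠ 0) (hc : IsSelfCoupling (fiberMass μ f) c) :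
    (liftCoupling μ f c).fst = μ := by
  refine Measure.ext_of_singleton fun x => ?_
  have hsum : ∑ w, fiberMass μ f w * (c (f x) w / (fiberMass μ f (f x) * fiberMass μ f w)) = 1 := by
    have hcancel (w : S) : fiberMass μ f w * (c (f x) w / (fiberMass μ f (f x) * fiberMass μ f w)) =
        c (f x) w / fiberMass μ f (f x) := by
      have := (fiberMass_pos (hf w)).ne'
      field_simp
    rw [Finset.sum_congr rfl fun w _ => hcancel w, ← Finset.sum_div, hc.sum_right,
      div_self (fiberMass_pos (hf _)).ne']
  rw [Measure.fst_apply (.singleton x), liftCoupling,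
    withDensity_apply _ (measurable_fst (.singleton x)), ← prod_univ, ← Measure.prod_restrict,
    lintegral_prod _ Measurable.of_discrete.aemeasurable, lintegral_singleton,
    Measure.restrict_univ, lintegral_ofReal_comp f (hc.div_nonneg (f x)), hsum, ENNReal.ofReal_one,
    one_mul]

lemma snd_liftCoupling (hf : ∀ z, μ (f ⁻¹' {z}) ≠ 0) (hc : IsSelfCoupling (fiberMass μ f) c) :
    (liftCoupling μ f c).snd = μ := by
  refine Measure.ext_of_singleton fun y => ?_
  have hsum : ∑ v, fiberMass μ f v * (c v (f y) / (fiberMass μ f v * fiberMass μ f (f y))) = 1 := by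
    have hcancel (v : S) : fiberMass μ f v * (c v (f y) / (fiberMass μ f v * fiberMass μ f (f y))) =
        c v (f y) / fiberMass μ f (f y) := by
      have := (fiberMass_pos (hf v)).ne'
      field_simp
    rw [Finset.sum_congr rfl fun v _ => hcancel v, ← Finset.sum_div, hc.sum_left,
      div_self (fiberMass_pos (hf _)).ne']
  rw [Measure.snd_apply (.singleton y), liftCoupling,
    withDensity_apply _ (measurable_snd (.singleton y)), ← univ_prod, ← Measure.prod_restrict,
    lintegral_prod_symm _ Measurable.of_discrete.aemeasurable, lintegral_singleton,
    Measure.restrict_univ, lintegral_ofReal_comp f fun v => hc.div_nonneg v (f y), hsum,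
    ENNReal.ofReal_one, one_mul]

lemma isProbabilityMeasure_liftCoupling (hf : ∀ z, μ (f ⁻¹' {z}) ≠ 0)
    (hc : IsSelfCoupling (fiberMass μ f) c) : IsProbabilityMeasure (liftCoupling μ f c) :=
  ⟨by rw [← Measure.fst_univ, fst_liftCoupling hf hc, measure_univ]⟩

lemma integral_liftCoupling (hf : ∀ z, μ (f ⁻¹' {z}) ≠ 0) (hc : IsSelfCoupling (fiberMass μ f) c)
    (G : S → S → ℝ) :
    ∫ q, G (f q.1) (f q.2) ∂(liftCoupling μ f c) = ∑ v, ∑ w, c v w * G v w := by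
  rw [liftCoupling, integral_withDensity_eq_integral_toReal_smul .of_discrete
    (.of_forall fun _ => ENNReal.ofReal_lt_top)]
  simp only [ENNReal.toReal_ofReal (hc.div_nonneg _ _), smul_eq_mul]
  refine (integral_comp_eq_sum_fiberMass (μ.prod μ) (Prod.map f f) fun p : S × S =>
    c p.1 p.2 / (fiberMass μ f p.1 * fiberMass μ f p.2) * G p.1 p.2).trans ?_
  simp only [Fintype.sum_prod_type, fiberMass_prodMap]
  refine Finset.sum_congr rfl fun v _ => Finset.sum_congr rfl fun w _ => ?_
  rw [← mul_assoc, mul_div_cancel₀ _ (mul_pos (fiberMass_pos (hf v)) (fiberMass_pos (hf w))).ne']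

lemma mutInfoR_liftCoupling (hf : ∀ z, μ (f ⁻¹' {z}) ≠ 0)
    (hc : IsSelfCoupling (fiberMass μ f) c) :
    mutInfoR (liftCoupling μ f c) = couplingInfo (fiberMass μ f) c := by
  rw [mutInfoR, klDivR, fst_liftCoupling hf hc, snd_liftCoupling hf hc, couplingInfo,
    ← integral_liftCoupling hf hc fun v w =>
      Real.log (c v w / (fiberMass μ f v * fiberMass μ f w))]
  have hac : liftCoupling μ f c ≪ μ.prod μ := withDensity_absolutelyContinuous _ _
  refine integral_congr_ae ?_
  filter_upwards [hac.ae_le (Measure.rnDeriv_withDensity (μ.prod μ) .of_discrete)] with q hq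
  rw [liftCoupling, hq, ENNReal.toReal_ofReal (hc.div_nonneg _ _)]

end LiftCoupling

section FiniteQuotient

lemma add_add_sq_le_mul_add_div {ε σ : ℝ} (hε : 0 < ε) (hσ : 0 < σ) (a b c : ℝ) :
    (a + b + c) ^ 2 ≤ (σ + 2 * ε) * (a ^ 2 / ε + b ^ 2 / σ + c ^ 2 / ε) := by
  have hsedrakyan := Finset.sq_sum_div_le_sum_sq_div Finset.univ ![a, b, c] (g := ![ε, σ, ε])
    (by simp [Fin.forall_fin_succ, hε, hσ])
  simp only [Fin.sum_univ_three, Matrix.cons_val] at hsedrakyan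
  rw [div_le_iff₀ (by positivity)] at hsedrakyan
  linarith

lemma integral_sq_le_of_le_add_add {Ω : Type*} [MeasurableSpace Ω] {ρ : Measure Ω}
    {u a b c : Ω → ℝ} (hu : ∀ x, 0 ≤ u x) (hle : ∀ x, u x ≤ a x + b x + c x)
    (ha : Integrable (fun x => a x ^ 2) ρ) (hb : Integrable (fun x => b x ^ 2) ρ)
    (hc : Integrable (fun x => c x ^ 2) ρ) {ε σ : ℝ} (hε : 0 < ε) (hσ : 0 < σ)
    (haε : ∫ x, a x ^ 2 ∂ρ ≤ ε ^ 2) (hbσ : ∫ x, b x ^ 2 ∂ρ ≤ σ ^ 2)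
    (hcε : ∫ x, c x ^ 2 ∂ρ ≤ ε ^ 2) : ∫ x, u x ^ 2 ∂ρ ≤ (σ + 2 * ε) ^ 2 := by
  have hab : Integrable (fun x => a x ^ 2 / ε + b x ^ 2 / σ) ρ :=
    (ha.div_const _).add (hb.div_const _)
  calc ∫ x, u x ^ 2 ∂ρ
      ≤ ∫ x, (σ + 2 * ε) * (a x ^ 2 / ε + b x ^ 2 / σ + c x ^ 2 / ε) ∂ρ :=
        integral_mono_of_nonneg (.of_forall fun _ => sq_nonneg _)
          ((hab.add (hc.div_const _)).const_mul _) (.of_forall fun x =>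
            (pow_le_pow_left₀ (hu x) (hle x) 2).trans (add_add_sq_le_mul_add_div hε hσ _ _ _))
    _ = (σ + 2 * ε) *
          ((∫ x, a x ^ 2 ∂ρ) / ε + (∫ x, b x ^ 2 ∂ρ) / σ + (∫ x, c x ^ 2 ∂ρ) / ε) := by
        rw [integral_const_mul, integral_add hab (hc.div_const _),
          integral_add (ha.div_const _) (hb.div_const _), integral_div, integral_div, integral_div]
    _ ≤ (σ + 2 * ε) * (ε ^ 2 / ε + σ ^ 2 / σ + ε ^ 2 / ε) := by gcongr
    _ = (σ + 2 * ε) ^ 2 := by field_simp; ring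

lemma integral_norm_sub_sq_le_of_approx {T S E : Type*} [MeasurableSpace T]
    [MeasurableSingletonClass T] [Countable T] [Finite S] [SeminormedAddCommGroup E] {φ : T → E}
    {μ : Measure T} {ρ : Measure (T × T)} [IsFiniteMeasure ρ] (hfst : ρ.fst = μ)
    (hsnd : ρ.snd = μ) (f : T → S) (j : S → T)
    (hint : Integrable (fun t => ‖φ t - φ (j (f t))‖ ^ 2) μ) {ε σ : ℝ} (hε : 0 < ε) (hσ : 0 < σ)
    (hdist : ∫ t, ‖φ t - φ (j (f t))‖ ^ 2 ∂μ ≤ ε ^ 2)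
    (hcost : ∫ q, ‖φ (j (f q.1)) - φ (j (f q.2))‖ ^ 2 ∂ρ ≤ σ ^ 2) :
    ∫ q, ‖φ q.1 - φ q.2‖ ^ 2 ∂ρ ≤ (σ + 2 * ε) ^ 2 := by
  have hmeas {ν : Measure T} : AEStronglyMeasurable (fun t => ‖φ t - φ (j (f t))‖ ^ 2) ν :=
    Measurable.of_discrete.aestronglyMeasurable
  have hdist₁ : ∫ q, ‖φ q.1 - φ (j (f q.1))‖ ^ 2 ∂ρ ≤ ε ^ 2 := by
    rwa [← hfst, Measure.fst, integral_map measurable_fst.aemeasurable hmeas] at hdist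
  have hdist₂ : ∫ q, ‖φ q.2 - φ (j (f q.2))‖ ^ 2 ∂ρ ≤ ε ^ 2 := by
    rwa [← hsnd, Measure.snd, integral_map measurable_snd.aemeasurable hmeas] at hdist
  refine integral_sq_le_of_le_add_add (fun _ => norm_nonneg _) (fun q => ?_)
    ((hfst ▸ hint).comp_measurable measurable_fst)
    (integrable_comp_of_finite ρ (Prod.map f f) fun p => ‖φ (j p.1) - φ (j p.2)‖ ^ 2)
    ((hsnd ▸ hint).comp_measurable measurable_snd) hε hσ hdist₁ hcost hdist₂
  rw [norm_sub_rev (φ q.2)]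
  exact (norm_sub_le_norm_sub_add_norm_sub _ (φ (j (f q.2))) _).trans
    (add_le_add_left (norm_sub_le_norm_sub_add_norm_sub _ _ _) _)

variable {T S E : Type*} [MeasurableSpace T] [MeasurableSingletonClass T] [Countable T]
  [Fintype S] [NormedAddCommGroup E] {φ : T → E} {μ : Measure T}
  [IsProbabilityMeasure μ] {f : T → S} {j : S → T} {ε : ℝ}

lemma iSelf_add_le_finiteISelf (hf : ∀ z, μ (f ⁻¹' {z}) ≠ 0)
    (hint : Integrable (fun t => ‖φ t - φ (j (f t))‖ ^ 2) μ) (hε : 0 < ε)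
    (hdist : ∫ t, ‖φ t - φ (j (f t))‖ ^ 2 ∂μ ≤ ε ^ 2) {σ : ℝ} (hσ : 0 < σ) :
    iSelf (fun t t' => ‖φ t - φ t'‖) μ (σ + 2 * ε) ≤ finiteISelf (φ ∘ j) (fiberMass μ f) σ := by
  refine le_finiteISelf (fiberMass_mem_stdSimplex f) fun c hc hcost => ?_
  have := isProbabilityMeasure_liftCoupling hf hc
  have hfst := fst_liftCoupling hf hc
  have hsnd := snd_liftCoupling hf hc
  rw [← mutInfoR_liftCoupling hf hc]
  refine iSelf_le_mutInfoR hfst hsnd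
    (integral_norm_sub_sq_le_of_approx hfst hsnd f j hint hε hσ hdist ?_)
  exact (integral_liftCoupling hf hc fun v w => ‖φ (j v) - φ (j w)‖ ^ 2).trans_le hcost

lemma integrableOn_sqrt_finiteISelf {m : S → ℝ} (hm : m ∈ stdSimplex ℝ S) (ψ : S → E) :
    IntegrableOn (fun σ => √(finiteISelf ψ m σ)) (Ioi 0) := by
  obtain ⟨R, -, hR⟩ := exists_finiteISelf_eq_zero hm ψ
  exact integrableOn_Ioi_of_antitoneOn
    (fun σ hσ σ' hσ' hle => Real.sqrt_le_sqrt (antitoneOn_finiteISelf hm ψ hσ hσ' hle))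
    fun σ hσ => by rw [hR σ hσ, Real.sqrt_zero]

lemma setIntegral_Ioi_add_le {h k : ℝ → ℝ} {δ : ℝ} (hh : ∀ σ, 0 ≤ h σ)
    (hk : IntegrableOn k (Ioi 0)) (hle : ∀ σ, 0 < σ → h (σ + δ) ≤ k σ) :
    ∫ σ in Ioi δ, h σ ≤ ∫ σ in Ioi 0, k σ := by
  have hshift := (measurePreserving_add_right volume δ).setIntegral_preimage_emb
    (measurableEmbedding_addRight δ) h (Ioi δ)
  rw [preimage_add_const_Ioi, sub_self] at hshift
  rw [← hshift]
  refine integral_mono_of_nonneg (.of_forall fun σ => hh _) hk ?_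
  filter_upwards [ae_restrict_mem measurableSet_Ioi] with σ hσ using hle σ hσ

lemma integral_sqrt_iSelf_le (hf : ∀ z, μ (f ⁻¹' {z}) ≠ 0)
    (hint : Integrable (fun t => ‖φ t - φ (j (f t))‖ ^ 2) μ) (hε : 0 < ε)
    (hdist : ∫ t, ‖φ t - φ (j (f t))‖ ^ 2 ∂μ ≤ ε ^ 2) :
    ∫ σ in Ioi 0, √(iSelf (fun t t' => ‖φ t - φ t'‖) μ σ) ≤
      2 * ε * √(∫ t, -Real.log (μ.real {t}) ∂μ) +
        ∫ σ in Ioi 0, √(finiteISelf (φ ∘ j) (fiberMass μ f) σ) := by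
  have hd (t : T) : ‖φ t - φ t‖ = 0 := by rw [sub_self, norm_zero]
  have hi := integrableOn_sqrt_iSelf (d := fun t t' => ‖φ t - φ t'‖) (μ := μ) hd
  have hε' : 0 ≤ 2 * ε := by positivity
  have hnear := hi.mono_set (Ioc_subset_Ioi_self : Ioc 0 (2 * ε) ⊆ _)
  have hsplit := setIntegral_union (Ioc_disjoint_Ioi le_rfl) measurableSet_Ioi hnear
    (hi.mono_set (Ioi_subset_Ioi hε'))
  rw [Ioc_union_Ioi_eq_Ioi hε'] at hsplit
  rw [hsplit]
  refine add_le_add ?_ ?_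
  · refine (integral_mono hnear (integrable_const _) fun σ =>
      Real.sqrt_le_sqrt (iSelf_le_integral_neg_log hd σ)).trans_eq ?_
    rw [setIntegral_const, Real.volume_real_Ioc_of_le hε', sub_zero, smul_eq_mul]
  · exact setIntegral_Ioi_add_le (fun _ => Real.sqrt_nonneg _)
      (integrableOn_sqrt_finiteISelf (fiberMass_mem_stdSimplex f) _)
      fun σ hσ => Real.sqrt_le_sqrt (iSelf_add_le_finiteISelf hf hint hε hdist hσ)

end FiniteQuotient

section FinsetRetract

lemma exists_finset_tsum_indicator_compl_le {T : Type*} {b : T → ℝ} (hb : Summable b) {t₀ : T}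
    (hb0 : ∀ t, 0 ≤ b t) (ht₀ : b t₀ ≠ 0) {δ : ℝ} (hδ : 0 < δ) :
    ∃ s : Finset T, t₀ ∈ s ∧ (∀ t ∈ s, b t ≠ 0) ∧ ∑' t, (s : Set T)ᶜ.indicator b t ≤ δ := by
  classical
  obtain ⟨s, hs⟩ := ((tendsto_tsum_compl_atTop_zero b).eventually_lt_const hδ).exists
  refine ⟨(insert t₀ s).filter (b · ≠ 0), by simp [ht₀], by simp, le_trans ?_ hs.le⟩
  refine (Summable.tsum_le_tsum (fun t => ?_) (hb.indicator _) (hb.indicator _)).trans_eq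
    (tsum_subtype (s : Set T)ᶜ b).symm
  rw [indicator_apply, indicator_apply]
  split_ifs with hins hs
  · exact le_rfl
  · refine le_of_eq (not_not.1 fun hbt => hins ?_)
    exact Finset.mem_coe.2 (by simp_all)
  · exact hb0 t
  · exact le_rfl

variable {T : Type*} {s : Finset T}

open scoped Classical in
/-- The retraction of `T` onto its finite subset `s` that sends the complement to the point `t₀`
of `s`. -/
def finsetRetract (s : Finset T) (t₀ : s) (t : T) : s := if h : t ∈ s then ⟨t, h⟩ else t₀

lemma finsetRetract_of_mem (t₀ : s) {t : T} (ht : t ∈ s) : (finsetRetract s t₀ t : T) = t := by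
  rw [finsetRetract, dif_pos ht]

lemma finsetRetract_of_notMem (t₀ : s) {t : T} (ht : t ∉ s) : finsetRetract s t₀ t = t₀ :=
  dif_neg ht

variable {E : Type*} [NormedAddCommGroup E] {φ : T → E}

lemma norm_sub_finsetRetract_sq (t₀ : s) (φ : T → E) (t : T) :
    ‖φ t - φ (finsetRetract s t₀ t)‖ ^ 2 =
      (s : Set T)ᶜ.indicator (fun t => ‖φ t - φ t₀‖ ^ 2) t := by
  by_cases ht : t ∈ s
  · simp [finsetRetract_of_mem t₀ ht, ht]
  · simp [finsetRetract_of_notMem t₀ ht, ht]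

variable [MeasurableSpace T] {μ : Measure T}

lemma measure_finsetRetract_preimage_ne_zero (t₀ : s) (hs : ∀ t ∈ s, μ {t} ≠ 0) (z : s) :
    μ (finsetRetract s t₀ ⁻¹' {z}) ≠ 0 := fun h =>
  hs z z.2 (measure_mono_null (singleton_subset_iff.2
    (Subtype.ext (finsetRetract_of_mem t₀ z.2))) h)

variable [MeasurableSingletonClass T]

lemma integrable_norm_sub_finsetRetract_sq {t₀ : s}
    (hφ : Integrable (fun t => ‖φ t - φ t₀‖ ^ 2) μ) :
    Integrable (fun t => ‖φ t - φ (finsetRetract s t₀ t)‖ ^ 2) μ := by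
  simp only [norm_sub_finsetRetract_sq]
  exact hφ.indicator s.measurableSet.compl

lemma integral_norm_sub_finsetRetract_sq_le [Countable T] [IsProbabilityMeasure μ] {t₀ : s}
    (hφ : Integrable (fun t => ‖φ t - φ t₀‖ ^ 2) μ) (hw : Summable (tailWeight φ μ t₀)) :
    ∫ t, ‖φ t - φ (finsetRetract s t₀ t)‖ ^ 2 ∂μ ≤
      2 * ∑' t, (s : Set T)ᶜ.indicator (tailWeight φ μ t₀) t := by
  have hint := integrable_norm_sub_finsetRetract_sq hφ
  rw [integral_countable hint, ← tsum_mul_left]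
  refine (summable_measureReal_singleton_mul hint).tsum_le_tsum (fun t => ?_)
    ((hw.indicator _).mul_left 2)
  rw [norm_sub_finsetRetract_sq]
  by_cases ht : t ∈ (s : Set T)ᶜ
  · simp only [indicator_of_mem ht]
    exact measureReal_mul_norm_sub_sq_le_tailWeight (t₀ : T) t
  · simp [indicator_of_notMem ht]

end FinsetRetract

lemma IsGaussianVector.map_neg {T E : Type*} [Fintype T] [NormedAddCommGroup E]
    [InnerProductSpace ℝ E] {γ : Measure (T → ℝ)} {φ : T → E} (h : IsGaussianVector γ φ) :
    γ.map (fun x => -x) = γ := by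
  have := h.isProbabilityMeasure
  have hrot := h.map_prod_smul_add_smul (a := 1) (b := 0) (c := -1) (by norm_num)
  simp only [one_smul, zero_smul, add_zero, neg_smul] at hrot
  exact hrot.symm.trans Measure.fst_prod

namespace IsCenteredGaussianProcess

variable {Ω T : Type*} [MeasurableSpace Ω] {P : Measure Ω} {X : T → Ω → ℝ}

lemma ae_eq_zero_or_exists_measure_preimage_singleton_eq_zero (hX : IsCenteredGaussianProcess P X) :
    (∀ t, X t =ᵐ[P] 0) ∨ ∃ t, ∀ x, P (X t ⁻¹' {x}) = 0 := by
  refine or_iff_not_imp_right.2 fun hatom t => ?_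
  have hm := (hX.hasGaussianLaw t).aemeasurable
  obtain ⟨v, hv⟩ := hX.exists_map_eq_gaussianReal t
  obtain rfl : v = 0 := by
    by_contra hv0
    have := nullSingletonClass_gaussianReal (μ := 0) hv0
    refine hatom ⟨t, fun x => ?_⟩
    rw [← Measure.map_apply_of_aemeasurable hm (.singleton x), hv, measure_singleton]
  refine ae_of_ae_map (p := (· = 0)) hm ?_
  rw [hv, gaussianReal_zero_var]
  simp

lemma norm_toL2_sub_eq_zero (hX : IsCenteredGaussianProcess P X) {t t' : T}
    (h : X t =ᵐ[P] X t') : ‖hX.toL2 t - hX.toL2 t'‖ = 0 := by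
  rw [hX.norm_toL2_sub, integral_eq_zero_of_ae, Real.sqrt_zero]
  filter_upwards [h] with ω hω
  simp [hω]

lemma setIntegral_abs_preimage_eq_zero (hX : IsCenteredGaussianProcess P X)
    (hm : ∀ t, Measurable (X t)) (t t' : T) {A : Set ℝ} (hA : MeasurableSet A) :
    ∫ ω in (fun ω => |X t' ω|) ⁻¹' A, X t ω ∂P = 0 := by
  let j (b : Bool) : T := if b then t else t'
  have hXv : Measurable fun ω b => X (j b) ω := measurable_pi_lambda _ fun b => hm (j b)
  have hneg := (hX.comp j).isGaussianVector.map_neg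
  set γ := P.map fun ω b => X (j b) ω
  have hB : MeasurableSet ((fun x : Bool → ℝ => |x false|) ⁻¹' A) :=
    (by fun_prop : Measurable fun x : Bool → ℝ => |x false|) hA
  have hodd : ∫ x in (fun x => |x false|) ⁻¹' A, x true ∂γ =
      -∫ x in (fun x => |x false|) ⁻¹' A, x true ∂γ := by
    conv_lhs => rw [← hneg]
    rw [setIntegral_map hB (measurable_pi_apply true).aestronglyMeasurable (by fun_prop),
      ← integral_neg]
    simp only [preimage_preimage, Pi.neg_apply, abs_neg]
  have heq : ∫ x in (fun x => |x false|) ⁻¹' A, x true ∂γ =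
      ∫ ω in (fun ω => |X t' ω|) ⁻¹' A, X t ω ∂P :=
    setIntegral_map hB (measurable_pi_apply true).aestronglyMeasurable hXv.aemeasurable
  linarith

variable [MeasurableSpace T] [MeasurableSingletonClass T] [Countable T] [IsProbabilityMeasure P]

lemma exists_map_eq_and_integral_eval_eq_zero (hX : IsCenteredGaussianProcess P X)
    (hm : ∀ t, Measurable (X t)) {t' : T} (hatom : ∀ x, P (X t' ⁻¹' {x}) = 0)
    (μ : Measure T) [IsProbabilityMeasure μ] :
    ∃ Z : Ω → T, Measurable Z ∧ P.map Z = μ ∧ ∫ ω, X (Z ω) ω ∂P = 0 := by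
  have habs : Measurable fun ω => |X t' ω| := (hm t').abs
  have := Measure.isProbabilityMeasure_map (μ := P) habs.aemeasurable
  have : NullSingletonClass (P.map fun ω => |X t' ω|) := ⟨fun x => by
    rw [Measure.map_apply habs (.singleton x)]
    refine measure_mono_null (fun ω hω => ?_) (measure_union_null (hatom x) (hatom (-x)))
    exact eq_or_eq_neg_of_abs_eq hω⟩
  obtain ⟨h, hh, hhμ⟩ := exists_measurable_map_eq_of_atomless (P.map fun ω => |X t' ω|) μ
  have hZ : Measurable fun ω => h |X t' ω| := hh.comp habs
  refine ⟨_, hZ, by rw [← hhμ, Measure.map_map hh habs]; rfl, ?_⟩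
  by_cases hint : Integrable (fun ω => X (h |X t' ω|) ω) P
  · have hfiber (t : T) : ∫ ω in (fun ω => h |X t' ω|) ⁻¹' {t}, X (h |X t' ω|) ω ∂P = 0 := by
      refine (setIntegral_congr_fun (hZ (.singleton t)) fun ω hω => ?_).trans
        (hX.setIntegral_abs_preimage_eq_zero hm t t' (hh (.singleton t)))
      exact congrArg (X · ω) hω
    exact (hasSum_setIntegral_fiber hZ hint).unique (by simpa only [hfiber] using hasSum_zero)
  · exact integral_undef hint

lemma complexity_nonneg (hX : IsCenteredGaussianProcess P X) (hm : ∀ t, Measurable (X t))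
    (μ : Measure T) [IsProbabilityMeasure μ] : 0 ≤ complexity P X μ := by
  rcases hX.ae_eq_zero_or_exists_measure_preimage_singleton_eq_zero with hzero | ⟨t', hatom⟩
  · refine Real.sSup_nonneg ?_
    rintro _ ⟨Z, -, -, rfl⟩
    refine integral_nonneg_of_ae ?_
    filter_upwards [ae_all_iff.2 hzero] with ω hω using (hω (Z ω)).ge
  · obtain ⟨Z, hZ, hZμ, hZ0⟩ := hX.exists_map_eq_and_integral_eval_eq_zero hm hatom μ
    exact Real.sSup_nonneg' ⟨0, ⟨Z, hZ, hZμ, hZ0.symm⟩, le_rfl⟩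

variable {μ : Measure T} [IsProbabilityMeasure μ]

lemma cRD_mul_integral_sqrt_iSelf_le_add (hX : IsCenteredGaussianProcess P X)
    (hm : ∀ t, Measurable (X t)) {t' : T} (hatom : ∀ x, P (X t' ⁻¹' {x}) = 0) {t₀ : T}
    (ht₀ : μ {t₀} ≠ 0) (hφ : Integrable (fun t => ‖hX.toL2 t - hX.toL2 t₀‖ ^ 2) μ)
    (hlog : Integrable (fun t => Real.log (μ.real {t})) μ) {ε : ℝ} (hε : 0 < ε) :
    cRD * ∫ σ in Ioi 0, √(iSelf (fun t t' => ‖hX.toL2 t - hX.toL2 t'‖) μ σ) ≤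
      complexity P X μ + (2 * cRD * √(∫ t, -Real.log (μ.real {t}) ∂μ) + 2) * ε := by
  have hw := summable_tailWeight hφ hlog
  obtain ⟨s, ht₀s, hs, htail⟩ := exists_finset_tsum_indicator_compl_le hw
    (tailWeight_nonneg t₀) (tailWeight_ne_zero_iff.2 ht₀) (lt_min hε (half_pos (pow_pos hε 2)))
  obtain ⟨htail₁, htail₂⟩ := le_min_iff.1 htail
  let f := finsetRetract s ⟨t₀, ht₀s⟩
  have hf : ∀ z, μ (f ⁻¹' {z}) ≠ 0 :=
    measure_finsetRetract_preimage_ne_zero _ fun t ht => tailWeight_ne_zero_iff.1 (hs t ht)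
  have hdist : ∫ t, ‖hX.toL2 t - hX.toL2 (f t)‖ ^ 2 ∂μ ≤ ε ^ 2 :=
    (integral_norm_sub_finsetRetract_sq_le (t₀ := ⟨t₀, ht₀s⟩) hφ hw).trans (by linarith)
  have hquot := integral_sqrt_iSelf_le (j := Subtype.val) hf
    (integrable_norm_sub_finsetRetract_sq (t₀ := ⟨t₀, ht₀s⟩) hφ) hε hdist
  have hXs := hX.comp (Subtype.val : s → T)
  have hfinite : cRD * ∫ σ in Ioi 0, √(finiteISelf hXs.toL2 (fiberMass μ f) σ) ≤
      complexity P X μ + ε + ε := by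
    refine hXs.isGaussianVector.cRD_mul_integral_sqrt_finiteISelf_le (fiberMass_mem_stdSimplex f)
      (fun z => fiberMass_pos (hf z)) fun p hp hpμ => ?_
    obtain ⟨Z, hZ, hZμ, hle⟩ := hp.exists_map_eq_and_selectionValue_le (X := fun z : s => X z)
      (hm t') hatom (fun z => hm z) (fun z => (hXs.hasGaussianLaw z).integrable) hf hpμ hε
    have hcomp := hX.integral_eval_comp_le_complexity_add hw (s := s) (f := fun t => f t)
      (fun t ht => finsetRetract_of_mem _ ht)
      (fun t ht => congrArg Subtype.val (finsetRetract_of_notMem _ ht)) hZ hZμ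
    linarith
  have hmul := mul_le_mul_of_nonneg_left hquot cRD_nonneg
  rw [mul_add] at hmul
  change _ ≤ _ + cRD * ∫ σ in Ioi 0, √(finiteISelf hXs.toL2 (fiberMass μ f) σ) at hmul
  linarith

lemma cRD_mul_integral_sqrt_iSelf_le_complexity (hX : IsCenteredGaussianProcess P X)
    (hm : ∀ t, Measurable (X t)) {t' : T} (hatom : ∀ x, P (X t' ⁻¹' {x}) = 0)
    (hd : Integrable (fun q : T × T => ‖hX.toL2 q.1 - hX.toL2 q.2‖ ^ 2) (μ.prod μ))
    (hlog : Integrable (fun t => Real.log (μ.real {t})) μ) :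
    cRD * ∫ σ in Ioi 0, √(iSelf (fun t t' => ‖hX.toL2 t - hX.toL2 t'‖) μ σ) ≤
      complexity P X μ := by
  have hpos : ∀ᵐ t ∂μ, μ {t} ≠ 0 := ae_iff_of_countable.2 fun _ h => h
  obtain ⟨t₀, hφ, ht₀⟩ := (hd.prod_left_ae.and hpos).exists
  set K := 2 * cRD * √(∫ t, -Real.log (μ.real {t}) ∂μ) + 2
  have hK : 0 < K := by have := cRD_nonneg; positivity
  refine le_of_forall_pos_le_add fun ε hε => ?_
  have hle := hX.cRD_mul_integral_sqrt_iSelf_le_add hm hatom ht₀ hφ hlog (div_pos hε hK)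
  rwa [mul_div_cancel₀ _ hK.ne'] at hle

lemma cRD_mul_integral_sqrt_iSelf_le_of_eq_zero (hX : IsCenteredGaussianProcess P X)
    (hm : ∀ t, Measurable (X t)) {d : T → T → ℝ} (h : ∀ σ, iSelf d μ σ = 0) :
    cRD * ∫ σ in Ioi 0, √(iSelf d μ σ) ≤ complexity P X μ := by
  simpa [h] using hX.complexity_nonneg hm μ

end IsCenteredGaussianProcess

/-- sharpness of the rate-distortion integral for Gaussian processes:
`w(μ) ≥ c ∫₀^∞ √(i(σ)) dσ ≥ c ∫₀^{σ_m(μ)} √(R_μ(σ²)) dσ`. -/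
theorem statement2 {Ω T : Type*} [MeasurableSpace Ω] [MeasurableSpace T]
    [MeasurableSingletonClass T] [Countable T] [Nonempty T]
    (P : Measure Ω) [IsProbabilityMeasure P]
    (X : T → Ω → ℝ) (hmeas : ∀ t, Measurable (X t))
    (hgauss : IsCenteredGaussianProcess P X)
    (d : T → T → ℝ)
    (hd : ∀ t t', d t t' = Real.sqrt (∫ ω, (X t ω - X t' ω) ^ 2 ∂P))
    (μ : Measure T) [IsProbabilityMeasure μ] :
    cRD * ∫ σ in Ioi (0 : ℝ), Real.sqrt (iSelf d μ σ) ≤ complexity P X μ ∧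
    cRD * ∫ σ in Ioc 0 (sigmaM d μ), Real.sqrt (rateDistortion d μ (σ ^ 2)) ≤
      cRD * ∫ σ in Ioi (0 : ℝ), Real.sqrt (iSelf d μ σ) := by
  obtain rfl : d = fun t t' => ‖hgauss.toL2 t - hgauss.toL2 t'‖ := by
    funext t t'
    rw [hd, hgauss.norm_toL2_sub]
  have hself (t : T) : ‖hgauss.toL2 t - hgauss.toL2 t‖ = 0 := by rw [sub_self, norm_zero]
  refine ⟨?_, mul_le_mul_of_nonneg_left (integral_sqrt_rateDistortion_le hself _) cRD_nonneg⟩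
  by_cases hlog : Integrable (fun t => Real.log (μ.real {t})) μ
  swap
  -- If `μ` has infinite entropy, the diagonal coupling has real-valued mutual information `0`.
  · refine hgauss.cRD_mul_integral_sqrt_iSelf_le_of_eq_zero hmeas fun σ =>
      le_antisymm ((iSelf_le_integral_neg_log hself σ).trans_eq ?_) (iSelf_nonneg _ μ σ)
    rw [integral_neg, integral_undef hlog, neg_zero]
  by_cases hint : Integrable (fun q : T × T => ‖hgauss.toL2 q.1 - hgauss.toL2 q.2‖ ^ 2) (μ.prod μ)
  swap
  -- If the mean square is infinite, its Bochner integral is `0` and independence is admissible.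
  · exact hgauss.cRD_mul_integral_sqrt_iSelf_le_of_eq_zero hmeas fun σ =>
      iSelf_eq_zero ((integral_undef hint).trans_le (sq_nonneg σ))
  rcases hgauss.ae_eq_zero_or_exists_measure_preimage_singleton_eq_zero with hzero | ⟨t', hatom⟩
  · have hd0 (t t' : T) : ‖hgauss.toL2 t - hgauss.toL2 t'‖ = 0 :=
      hgauss.norm_toL2_sub_eq_zero ((hzero t).trans (hzero t').symm)
    exact hgauss.cRD_mul_integral_sqrt_iSelf_le_of_eq_zero hmeas fun σ =>
      iSelf_eq_zero (by simpa [hd0] using sq_nonneg σ)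
  · exact hgauss.cRD_mul_integral_sqrt_iSelf_le_complexity hmeas hatom hint hlog

end
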